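/- Let S₁ = (n₁,…,n_k) and S₂ = (m₁,…,m_l) be tuples of integers at least 2 with (n_i, n_j) = 1 and (m_i, m_j) = 1 for i ≠ j. Then Γ(S₁) and Γ(S₂) are quasi-isometric if and only if k = l and there is a permutation σ of {1,…,k} such that for each i, n_i is a rational power of m_{σ(i)}, i.e. there exist positive integers s and t with n_i^s = m_{σ(i)}^t. -/

import Mathlib

/-- `f : X → Y` is a `(K,C)`-quasi-isometry with respect to the distance
functions `dX`, `dY`. -/
def IsQI {X Y : Type*} (K C : ℝ) (dX : X → X → ℝ) (dY : Y → Y → ℝ)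
    (f : X → Y) : Prop :=
  (∀ x₁ x₂ : X, dX x₁ x₂ / K - C ≤ dY (f x₁) (f x₂)) ∧
  (∀ x₁ x₂ : X, dY (f x₁) (f x₂) ≤ K * dX x₁ x₂ + C) ∧
  (∀ y : Y, ∃ x : X, dY (f x) y ≤ C)

/-- The word metric on a group `G` associated to a generating set `S`:
the distance from `g` to `h` is the length of a shortest word in the
elements of `S` and their inverses representing `g⁻¹ * h`. -/
noncomputable def wordDist {G : Type*} [Group G] (S : Set G) (g h : G) : ℝ :=
  sInf {r : ℝ | ∃ L : List G, (∀ x ∈ L, x ∈ S ∨ x⁻¹ ∈ S) ∧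
      L.prod = g⁻¹ * h ∧ r = L.length}

/-- Two groups are quasi-isometric if, when equipped with word metrics coming
from finite generating sets, there is a quasi-isometry between them. -/
def QuasiIsometricGroups (G H : Type*) [Group G] [Group H] : Prop :=
  ∃ (S : Finset G) (T : Finset H),
    Subgroup.closure (S : Set G) = ⊤ ∧ Subgroup.closure (T : Set H) = ⊤ ∧
    ∃ (K C : ℝ) (f : G → H), 1 ≤ K ∧ 0 ≤ C ∧
      IsQI K C (wordDist (S : Set G)) (wordDist (T : Set H)) f

/-- Two groups are (abstractly) commensurable if they contain isomorphic
subgroups of finite index. -/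
def CommensurableGroups (G H : Type*) [Group G] [Group H] : Prop :=
  ∃ (G₁ : Subgroup G) (H₁ : Subgroup H),
    G₁.FiniteIndex ∧ H₁.FiniteIndex ∧ Nonempty (G₁ ≃* H₁)

/-- The relators for the group
`Γ(n₁,…,n_k) = ⟨a₁,…,a_k, b ∣ aᵢ⁻¹ b aᵢ = b^{nᵢ}, aᵢaⱼ = aⱼaᵢ (i ≠ j)⟩`.
The generator `aᵢ` is `Sum.inl i` and `b` is `Sum.inr ()`. -/
def gammaRels {k : ℕ} (n : Fin k → ℕ) : Set (FreeGroup (Fin k ⊕ Unit)) :=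
  {r | (∃ i : Fin k,
        r = (FreeGroup.of (Sum.inl i))⁻¹ * FreeGroup.of (Sum.inr ()) *
            FreeGroup.of (Sum.inl i) * (FreeGroup.of (Sum.inr ()) ^ (n i))⁻¹) ∨
      (∃ i j : Fin k, i ≠ j ∧
        r = FreeGroup.of (Sum.inl i) * FreeGroup.of (Sum.inl j) *
            (FreeGroup.of (Sum.inl i))⁻¹ * (FreeGroup.of (Sum.inl j))⁻¹)}

/-- The group `Γ(n₁,…,n_k)` given by the presentation
`⟨a₁,…,a_k, b ∣ aᵢ⁻¹ b aᵢ = b^{nᵢ}, aᵢaⱼ = aⱼaᵢ (i ≠ j)⟩`. -/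
def GammaGroup {k : ℕ} (n : Fin k → ℕ) : Type := PresentedGroup (gammaRels n)

instance {k : ℕ} (n : Fin k → ℕ) : Group (GammaGroup n) := by
  unfold GammaGroup; infer_instance

/-- The generator `aᵢ` of `Γ(n₁,…,n_k)`. -/
def gammaA {k : ℕ} (n : Fin k → ℕ) (i : Fin k) : GammaGroup n :=
  PresentedGroup.of (rels := gammaRels n) (Sum.inl i)

/-- The generator `b` of `Γ(n₁,…,n_k)`. -/
def gammaB {k : ℕ} (n : Fin k → ℕ) : GammaGroup n :=
  PresentedGroup.of (rels := gammaRels n) (Sum.inr ())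

/-- The solvable Baumslag–Solitar group `BS(1,n) = ⟨a, b ∣ a b a⁻¹ = bⁿ⟩`.
The generator `a` is `true` and `b` is `false`. -/
def BS (n : ℕ) : Type :=
  PresentedGroup {FreeGroup.of true * FreeGroup.of false * (FreeGroup.of true)⁻¹ *
    (FreeGroup.of false ^ n)⁻¹}

instance (n : ℕ) : Group (BS n) := by unfold BS; infer_instance

set_option linter.unusedSectionVars false

namespace GQ
open scoped Pointwise

/-! ### Coarse equivalences of groups -/

/-- Bornologous maps between groups. -/
def Born {G H : Type*} [Group G] [Group H] (F : G → H) : Prop :=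
  ∀ E : Set G, E.Finite → ∃ E' : Set H, E'.Finite ∧ ∀ x y, x⁻¹ * y ∈ E → (F x)⁻¹ * F y ∈ E'

/-- Close maps into a group. -/
def Close {X H : Type*} [Group H] (F F' : X → H) : Prop :=
  ∃ E : Set H, E.Finite ∧ ∀ x, (F x)⁻¹ * F' x ∈ E

/-- Coarse equivalence data. -/
structure CEd {G H : Type*} [Group G] [Group H] (F : G → H) (F' : H → G) : Prop where
  bF : Born F
  bF' : Born F'
  l : Close id (F' ∘ F)
  r : Close id (F ∘ F')

/-- Coarse equivalence. -/
def CE (G H : Type*) [Group G] [Group H] : Prop := ∃ (F : G → H) (F' : H → G), CEd F F'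

section
variable {G H K : Type*} [Group G] [Group H] [Group K]

lemma CEd.symm {F : G → H} {F' : H → G} (h : CEd F F') : CEd F' F := ⟨h.bF', h.bF, h.r, h.l⟩

lemma CE.symm (h : CE G H) : CE H G := by
  obtain ⟨F, F', h⟩ := h; exact ⟨F', F, h.symm⟩

lemma Born.comp {F : G → H} {F' : H → K} (h : Born F) (h' : Born F') : Born (F' ∘ F) := by
  intro E hE
  obtain ⟨E1, hE1, h1⟩ := h E hE
  obtain ⟨E2, hE2, h2⟩ := h' E1 hE1
  exact ⟨E2, hE2, fun x y hxy => h2 _ _ (h1 _ _ hxy)⟩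

lemma Close.symm {X : Type*} {F F' : X → H} (h : Close F F') : Close F' F := by
  obtain ⟨E, hE, h⟩ := h
  refine ⟨E⁻¹, hE.inv, fun x => ?_⟩
  rw [Set.mem_inv]; simpa using h x

lemma Close.trans {X : Type*} {F F' F'' : X → H} (h : Close F F') (h' : Close F' F'') :
    Close F F'' := by
  obtain ⟨E, hE, h⟩ := h
  obtain ⟨E', hE', h'⟩ := h'
  refine ⟨E * E', hE.mul hE', fun x => ?_⟩
  have := Set.mul_mem_mul (h x) (h' x)
  simpa [mul_assoc] using this

lemma Close.post {X : Type*} {F F' : X → H} (h : Close F F') {f : H → K} (hf : Born f) :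
    Close (f ∘ F) (f ∘ F') := by
  obtain ⟨E, hE, h⟩ := h
  obtain ⟨E', hE', h'⟩ := hf E hE
  exact ⟨E', hE', fun x => h' _ _ (h x)⟩

lemma Close.pre {X Y : Type*} {F F' : X → H} (h : Close F F') (f : Y → X) :
    Close (F ∘ f) (F' ∘ f) := by
  obtain ⟨E, hE, h⟩ := h
  exact ⟨E, hE, fun x => h _⟩

lemma CE.trans (h : CE G H) (h' : CE H K) : CE G K := by
  obtain ⟨F, F', h⟩ := h
  obtain ⟨f, f', h'⟩ := h'
  refine ⟨f ∘ F, F' ∘ f', h.bF.comp h'.bF, h'.bF'.comp h.bF', ?_, ?_⟩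
  · have := (h'.l.pre F).post h.bF'
    exact h.l.trans this
  · have := (h.r.pre f').post h'.bF
    exact h'.r.trans this

/-- coarse equivalences are proper -/
lemma CEd.proper {F : G → H} {F' : H → G} (h : CEd F F') (E : Set H) (hE : E.Finite) :
    ∃ E' : Set G, E'.Finite ∧ ∀ x y, (F x)⁻¹ * F y ∈ E → x⁻¹ * y ∈ E' := by
  obtain ⟨E1, hE1, h1⟩ := h.bF' E hE
  obtain ⟨E2, hE2, h2⟩ := h.l
  refine ⟨E2 * E1 * E2⁻¹, (hE2.mul hE1).mul hE2.inv, fun x y hxy => ?_⟩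
  have a := h2 x
  have b := h2 y
  have c := h1 _ _ hxy
  have := Set.mul_mem_mul (Set.mul_mem_mul a c) (Set.inv_mem_inv.2 b)
  simpa [mul_assoc] using this

/-! ### Word length -/

lemma wd_eq (S : Set G) (g h : G) : wordDist S g h = wordDist S 1 (g⁻¹ * h) := by
  simp [wordDist]

lemma wl_le (S : Set G) (L : List G) (hL : ∀ x ∈ L, x ∈ S ∨ x⁻¹ ∈ S) :
    wordDist S 1 L.prod ≤ L.length := by
  apply csInf_le
  · refine ⟨0, ?_⟩
    rintro r ⟨L, _, _, rfl⟩; positivity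
  · exact ⟨L, hL, by simp, rfl⟩

lemma wl_exists {S : Set G} (hS : Subgroup.closure S = ⊤) (g : G) :
    ∃ L : List G, (∀ x ∈ L, x ∈ S ∨ x⁻¹ ∈ S) ∧ L.prod = g ∧ wordDist S 1 g = L.length := by
  classical
  have hg : g ∈ Subgroup.closure S := by rw [hS]; trivial
  rw [← Subgroup.mem_toSubmonoid, Subgroup.closure_toSubmonoid] at hg
  obtain ⟨L0, h1, h2⟩ := Submonoid.exists_list_of_mem_closure hg
  have hex : ∃ m : ℕ, ∃ L : List G, (∀ x ∈ L, x ∈ S ∨ x⁻¹ ∈ S) ∧ L.prod = g ∧ L.length = m :=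
    ⟨_, L0, h1, h2, rfl⟩
  obtain ⟨L, a, b, c⟩ := Nat.find_spec hex
  refine ⟨L, a, b, le_antisymm (b ▸ wl_le S L a) ?_⟩
  apply le_csInf
  · exact ⟨_, L, a, by simpa using b, rfl⟩
  · rintro r ⟨L', a', b', rfl⟩
    rw [c]
    exact_mod_cast Nat.find_min' hex ⟨L', a', by simpa using b', rfl⟩

lemma wl_nonneg {S : Set G} (hS : Subgroup.closure S = ⊤) (g : G) : 0 ≤ wordDist S 1 g := by
  obtain ⟨L, _, _, h⟩ := wl_exists hS g
  rw [h]; positivity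

lemma wl_mul {S : Set G} (hS : Subgroup.closure S = ⊤) (g h : G) :
    wordDist S 1 (g * h) ≤ wordDist S 1 g + wordDist S 1 h := by
  obtain ⟨L, a, rfl, c⟩ := wl_exists hS g
  obtain ⟨L', a', rfl, c'⟩ := wl_exists hS h
  rw [c, c']
  have := wl_le S (L ++ L') (by
    intro x hx
    rcases List.mem_append.1 hx with hx | hx
    exacts [a x hx, a' x hx])
  simpa using this

lemma ball_finite {S : Set G} (hSf : S.Finite) (hS : Subgroup.closure S = ⊤) (R : ℝ) :
    {g : G | wordDist S 1 g ≤ R}.Finite := by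
  have hT : (S ∪ S⁻¹).Finite := hSf.union hSf.inv
  have := hT.to_subtype
  have hf := (List.finite_length_le (S ∪ S⁻¹ : Set G) ⌊R⌋₊).image
    (fun l => (l.map Subtype.val).prod)
  refine hf.subset ?_
  intro g hg
  obtain ⟨L, a, rfl, c⟩ := wl_exists hS g
  have hg : wordDist S 1 L.prod ≤ R := hg
  rw [c] at hg
  refine ⟨L.attach.map (fun x => ⟨x.1, by
    rcases a x.1 x.2 with h | h
    · exact Or.inl h
    · exact Or.inr h⟩), ?_, ?_⟩
  · simp only [Set.mem_ofPred_eq, List.length_map, List.length_attach]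
    exact Nat.le_floor hg
  · simp [List.map_map, Function.comp_def]

lemma wl_bdd (S : Set G) {E : Set G} (hE : E.Finite) :
    ∃ M : ℝ, 0 ≤ M ∧ ∀ g ∈ E, wordDist S 1 g ≤ M := by
  obtain ⟨M, hM⟩ := (hE.image (wordDist S 1)).bddAbove
  refine ⟨max M 0, le_max_right _ _, fun g hg => le_max_of_le_left ?_⟩
  exact hM ⟨g, hg, rfl⟩

lemma ce_of_qi (h : QuasiIsometricGroups G H) : CE G H := by
  obtain ⟨S, T, hS, hT, K, C, f, hK, hC, h1, h2, h3⟩ := h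
  choose f' hf' using h3
  have hfin : ∀ R, {g : H | wordDist (T : Set H) 1 g ≤ R}.Finite :=
    ball_finite T.finite_toSet hT
  have hfinG : ∀ R, {g : G | wordDist (S : Set G) 1 g ≤ R}.Finite :=
    ball_finite S.finite_toSet hS
  have hK0 : 0 < K := by linarith
  -- converse estimate
  have low : ∀ x y R, wordDist (T : Set H) (f x) (f y) ≤ R →
      wordDist (S : Set G) x y ≤ K * (R + C) := by
    intro x y R hR
    have := h1 x y
    have h4 : wordDist (S : Set G) x y / K ≤ R + C := by linarith
    rw [div_le_iff₀ hK0] at h4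
    linarith
  obtain ⟨Mr, hMr0, hMr⟩ : ∃ M : ℝ, 0 ≤ M ∧ ∀ y, wordDist (T : Set H) 1 (y⁻¹ * f (f' y)) ≤ M := by
    obtain ⟨M, h0, hM⟩ := wl_bdd (T : Set H) (hfin C).inv
    refine ⟨M, h0, fun y => hM _ ?_⟩
    rw [Set.mem_inv]
    have := hf' y
    rw [wd_eq] at this
    simpa using this
  refine ⟨f, f', ?_, ?_, ?_, ?_⟩
  · intro E hE
    obtain ⟨M, h0, hM⟩ := wl_bdd (S : Set G) hE
    refine ⟨_, hfin (K * M + C), fun x y hxy => ?_⟩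
    have := hM _ hxy
    have h5 := h2 x y
    rw [wd_eq, wd_eq (S : Set G)] at h5
    simp only [Set.mem_ofPred_eq]
    nlinarith
  · intro E hE
    obtain ⟨M, h0, hM⟩ := wl_bdd (T : Set H) hE
    refine ⟨_, hfinG (K * ((C + M + Mr) + C)), fun x y hxy => ?_⟩
    simp only [Set.mem_ofPred_eq]
    rw [← wd_eq]
    apply low
    have e1 := hf' x
    rw [wd_eq] at e1 ⊢
    have e2 := hM _ hxy
    have e3 := hMr y
    have : (f (f' x))⁻¹ * f (f' y) = ((f (f' x))⁻¹ * x) * (x⁻¹ * y) * (y⁻¹ * f (f' y)) := by group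
    rw [this]
    have e4 := wl_mul hT (((f (f' x))⁻¹ * x) * (x⁻¹ * y)) (y⁻¹ * f (f' y))
    have e5 := wl_mul hT ((f (f' x))⁻¹ * x) (x⁻¹ * y)
    linarith
  · have : Close (f' ∘ f) id := by
      refine ⟨_, hfinG (K * (C + C)), fun x => ?_⟩
      simp only [Set.mem_ofPred_eq]
      rw [← wd_eq]
      apply low
      exact hf' (f x)
    exact this.symm
  · exact ⟨_, hfin Mr, fun y => hMr y⟩

lemma born_lip {F : G → H} (hF : Born F) {S : Set G} (hSf : S.Finite)
    (hS : Subgroup.closure S = ⊤) {T : Set H} (hT : Subgroup.closure T = ⊤) :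
    ∃ M : ℝ, 0 ≤ M ∧ ∀ x y, wordDist T (F x) (F y) ≤ M * wordDist S x y := by
  obtain ⟨E', hE', h⟩ := hF (S ∪ S⁻¹) (hSf.union hSf.inv)
  obtain ⟨M, h0, hM⟩ := wl_bdd T hE'
  have key : ∀ L : List G, (∀ x ∈ L, x ∈ S ∨ x⁻¹ ∈ S) → ∀ x,
      wordDist T 1 ((F x)⁻¹ * F (x * L.prod)) ≤ M * L.length := by
    intro L
    induction L with
    | nil =>
      intro _ x
      simpa using wl_le T [] (by simp)
    | cons a L ih =>
      intro hL x
      have h1 := ih (fun z hz => hL z (List.mem_cons_of_mem _ hz)) (x * a)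
      have h2 := hM _ (h x (x * a) (by simpa using hL a (by simp)))
      have h3 := wl_mul hT ((F x)⁻¹ * F (x * a)) ((F (x * a))⁻¹ * F (x * a * L.prod))
      have e : (F x)⁻¹ * F (x * (a :: L).prod)
        = ((F x)⁻¹ * F (x * a)) * ((F (x * a))⁻¹ * F (x * a * L.prod)) := by
        simp [mul_assoc]
      rw [e]
      push_cast [List.length_cons]
      linarith
  refine ⟨M, h0, fun x y => ?_⟩
  rw [wd_eq, wd_eq S]
  obtain ⟨L, a, b, c⟩ := wl_exists hS (x⁻¹ * y)
  have := key L a x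
  rw [c]
  rw [b] at this
  simpa using this

lemma qi_of_ce (h : CE G H) (S : Finset G) (T : Finset H)
    (hS : Subgroup.closure (S : Set G) = ⊤) (hT : Subgroup.closure (T : Set H) = ⊤) :
    QuasiIsometricGroups G H := by
  obtain ⟨F, F', h⟩ := h
  obtain ⟨M, h0, hM⟩ := born_lip h.bF S.finite_toSet hS hT
  obtain ⟨M', h0', hM'⟩ := born_lip h.bF' T.finite_toSet hT hS
  obtain ⟨E, hE, hl⟩ := h.l
  obtain ⟨E', hE', hr⟩ := h.r
  obtain ⟨D, hD0, hD⟩ := wl_bdd (S : Set G) (hE.union hE.inv)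
  obtain ⟨D', hD0', hD'⟩ := wl_bdd (T : Set H) (hE'.inv)
  have low : ∀ x y, wordDist (S : Set G) x y ≤ M' * wordDist (T : Set H) (F x) (F y) + 2 * D := by
    intro x y
    have e1 := hD _ (Or.inl (hl x))
    have e2 := hD ((F' (F y))⁻¹ * y) (Or.inr (by simpa using hl y))
    have e3 := hM' (F x) (F y)
    rw [wd_eq (S : Set G)] at e3 ⊢
    have : x⁻¹ * y = (x⁻¹ * F' (F x)) * ((F' (F x))⁻¹ * F' (F y)) * ((F' (F y))⁻¹ * y) := by group
    rw [this]
    have e4 := wl_mul hS ((x⁻¹ * F' (F x)) * ((F' (F x))⁻¹ * F' (F y))) ((F' (F y))⁻¹ * y)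
    have e5 := wl_mul hS (x⁻¹ * F' (F x)) ((F' (F x))⁻¹ * F' (F y))
    simp only [id, Function.comp] at e1
    linarith
  have nn : ∀ x y, 0 ≤ wordDist (T : Set H) x y := fun x y => by
    rw [wd_eq]; exact wl_nonneg hT _
  have nnS : ∀ x y, 0 ≤ wordDist (S : Set G) x y := fun x y => by
    rw [wd_eq]; exact wl_nonneg hS _
  refine ⟨S, T, hS, hT, 1 + M + M', 2 * D + D', F, by linarith, by linarith, ?_, ?_, ?_⟩
  · intro x y
    have := low x y
    have hp : 0 < 1 + M + M' := by linarith
    rw [sub_le_iff_le_add, div_le_iff₀ hp]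
    have := nn (F x) (F y)
    nlinarith [mul_nonneg h0 this, mul_nonneg h0 hD0, mul_nonneg h0' hD0, mul_nonneg h0 hD0',
      mul_nonneg h0' hD0']
  · intro x y
    have := hM x y
    have := nnS x y
    nlinarith [mul_nonneg h0' this]
  · intro y
    refine ⟨F' y, ?_⟩
    rw [wd_eq]
    have := hD' ((F (F' y))⁻¹ * y) (by simpa using hr y)
    linarith
end
end GQ

namespace GQ
open scoped Pointwise

/-! ### Structure of the groups -/

/-- Admissible tuples. -/
class Adm {k : ℕ} (n : Fin k → ℕ) : Prop where
  two : ∀ i, 2 ≤ n i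
  cop : ∀ i j, i ≠ j → Nat.Coprime (n i) (n j)

section
variable {k : ℕ} {n : Fin k → ℕ}

local notation "Γ" => GammaGroup n
local notation "a" => gammaA n
local notation "b" => gammaB n

lemma rel1 (i : Fin k) : (a i)⁻¹ * b * a i = b ^ (n i) := by
  have h : (FreeGroup.of (Sum.inl i))⁻¹ * FreeGroup.of (Sum.inr ()) *
            FreeGroup.of (Sum.inl i) * (FreeGroup.of (Sum.inr ()) ^ (n i))⁻¹ ∈ gammaRels n :=
    Or.inl ⟨i, rfl⟩
  have := PresentedGroup.mk_eq_one_iff.2 (Subgroup.subset_normalClosure h)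
  simp only [map_mul, map_inv, map_pow] at this
  exact mul_inv_eq_one.1 this

lemma rel2 (i j : Fin k) : a i * a j = a j * a i := by
  by_cases hij : i = j
  · subst hij; rfl
  have h : FreeGroup.of (Sum.inl i) * FreeGroup.of (Sum.inl j) *
            (FreeGroup.of (Sum.inl i))⁻¹ * (FreeGroup.of (Sum.inl j))⁻¹ ∈ gammaRels n :=
    Or.inr ⟨i, j, hij, rfl⟩
  have := PresentedGroup.mk_eq_one_iff.2 (Subgroup.subset_normalClosure h)
  simp only [map_mul, map_inv] at this
  have h2 : a i * a j * (a i)⁻¹ * (a j)⁻¹ = 1 := this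
  rw [mul_inv_eq_one, mul_inv_eq_iff_eq_mul] at h2
  exact h2

/-- Homs out of the group. -/
lemma lift_exists (n : Fin k → ℕ) {H : Type*} [Group H] (A : Fin k → H) (B : H)
    (h1 : ∀ i, (A i)⁻¹ * B * A i = B ^ n i) (h2 : ∀ i j, A i * A j = A j * A i) :
    ∃ f : GammaGroup n →* H, (∀ i, f (gammaA n i) = A i) ∧ f (gammaB n) = B := by
  have h : ∀ r ∈ gammaRels n, FreeGroup.lift (Sum.elim A (fun _ => B)) r = 1 := by
    rintro r (⟨i, rfl⟩ | ⟨i, j, _, rfl⟩)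
    · simp [h1]
    · simp [h2 i j]
  refine ⟨PresentedGroup.toGroup h, fun i => ?_, ?_⟩
  · exact PresentedGroup.toGroup.of h
  · exact PresentedGroup.toGroup.of h

lemma gen_top : Subgroup.closure (Set.range a ∪ {b}) = ⊤ := by
  have := PresentedGroup.closure_range_of (gammaRels n)
  have e : Set.range (PresentedGroup.of (rels := gammaRels n)) = Set.range a ∪ {b} := by
    ext x; constructor
    · rintro ⟨i | u, rfl⟩
      · exact Or.inl ⟨i, rfl⟩
      · exact Or.inr rfl
    · rintro (⟨i, rfl⟩ | rfl)
      · exact ⟨Sum.inl i, rfl⟩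
      · exact ⟨Sum.inr (), rfl⟩
  rw [← e]; exact this

lemma gind {P : Γ → Prop} (h1 : P 1) (ha : ∀ i g, P g → P (a i * g))
    (ha' : ∀ i g, P g → P ((a i)⁻¹ * g)) (hb : ∀ g, P g → P (b * g))
    (hb' : ∀ g, P g → P (b⁻¹ * g)) (g : Γ) : P g := by
  have hg : g ∈ Subgroup.closure (Set.range a ∪ {b}) := by rw [gen_top]; trivial
  induction hg using Subgroup.closure_induction_left with
  | one => exact h1
  | mul_left x hx y hy ih =>
    rcases hx with ⟨i, rfl⟩ | rfl
    · exact ha i y ih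
    · exact hb y ih
  | inv_mul_cancel x hx y hy ih =>
    rcases hx with ⟨i, rfl⟩ | rfl
    · exact ha' i y ih
    · exact hb' y ih

lemma t_exists (n : Fin k → ℕ) : ∃ f : GammaGroup n →* Multiplicative (Fin k → ℤ),
    (∀ i, f (gammaA n i) = Multiplicative.ofAdd (Pi.single i 1)) ∧ f (gammaB n) = 1 := by
  apply lift_exists
  · intro i; simp
  · intro i j; exact mul_comm _ _

/-- exponent hom -/
noncomputable def tm (g : Γ) : Fin k → ℤ := Multiplicative.toAdd ((t_exists n).choose g)

lemma t_a (i : Fin k) : tm (a i) = Pi.single i 1 := by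
  simp [tm, (t_exists n).choose_spec.1 i]
lemma t_b : tm (b) = 0 := by
  simp [tm, (t_exists n).choose_spec.2]
lemma t_mul (g h : Γ) : tm (g * h) = tm g + tm h := by simp [tm]
lemma t_one : tm (1 : Γ) = 0 := by simp [tm]
lemma t_inv (g : Γ) : tm g⁻¹ = - tm g := by simp [tm]
lemma t_pow (g : Γ) (j : ℕ) : tm (g ^ j) = j • tm g := by simp [tm]
lemma t_zpow (g : Γ) (j : ℤ) : tm (g ^ j) = j • tm g := by simp [tm]

/-- modular character -/
noncomputable def chi (g : Γ) : ℚ := ∏ i, (n i : ℚ) ^ (tm g i)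

variable [Adm n]

lemma n_ne (i : Fin k) : (n i : ℚ) ≠ 0 := by
  have := Adm.two (n := n) i
  positivity

lemma n_pos (i : Fin k) : 0 < n i := by
  have := Adm.two (n := n) i
  positivity

lemma chi_pos (g : Γ) : 0 < chi g := by
  apply Finset.prod_pos
  intro i _
  have := n_pos (n := n) i
  positivity

lemma chi_mul (g h : Γ) : chi (g * h) = chi g * chi h := by
  simp only [chi, t_mul, Pi.add_apply]
  rw [← Finset.prod_mul_distrib]
  exact Finset.prod_congr rfl fun i _ => zpow_add₀ (n_ne i) _ _

lemma chi_one : chi (1 : Γ) = 1 := by simp [chi, t_one]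

lemma chi_inv (g : Γ) : chi g⁻¹ = (chi g)⁻¹ := by
  have := chi_mul g⁻¹ g
  rw [inv_mul_cancel, chi_one] at this
  exact eq_inv_of_mul_eq_one_left this.symm

lemma chi_a (i : Fin k) : chi (a i) = n i := by
  simp only [chi, t_a]
  rw [Finset.prod_eq_single i]
  · simp
  · intro j _ hj; simp [hj]
  · simp

lemma chi_b : chi b = 1 := by simp [chi, t_b]

lemma psi_exists (n : Fin k → ℕ) [Adm n] : ∃ f : GammaGroup n →* Equiv.Perm ℚ,
    (∀ i, ∀ q, f (gammaA n i) q = q / n i) ∧ ∀ q, f (gammaB n) q = q + 1 := by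
  obtain ⟨f, h1, h2⟩ := lift_exists n (H := Equiv.Perm ℚ)
    (fun i => Equiv.mulRight₀ ((n i : ℚ)⁻¹) (inv_ne_zero (n_ne i))) (Equiv.addRight 1) (by
      intro i
      ext q
      have hp : ∀ (j : ℕ) (q : ℚ), ((Equiv.addRight (1:ℚ)) ^ j) q = q + j := by
        intro j; induction j with
        | zero => simp
        | succ j ih => intro q; rw [pow_succ, Equiv.Perm.mul_apply, ih]; simp; ring
      have hi : (Equiv.mulRight₀ ((n i : ℚ)⁻¹) (inv_ne_zero (n_ne i)))⁻¹ =
        Equiv.mulRight₀ (n i : ℚ) (n_ne i) := by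
        rw [inv_eq_iff_mul_eq_one]
        ext q; simp [n_ne i]
      rw [hp, hi]
      have := n_ne (n := n) i
      simp
      field_simp) (by
      intro i j
      ext q
      simp; ring)
  refine ⟨f, fun i q => ?_, fun q => ?_⟩
  · rw [h1]; simp [div_eq_mul_inv]
  · rw [h2]; simp

/-- translation coordinate -/
noncomputable def xc (g : Γ) : ℚ := (psi_exists n).choose g 0

lemma psi_eq (g : Γ) : ∀ q, (psi_exists n).choose g q = xc g + (chi g)⁻¹ * q := by
  have key : ∃ c, ∀ q, (psi_exists n).choose g q = c + (chi g)⁻¹ * q := by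
    induction g using gind with
    | h1 => exact ⟨0, by simp [chi_one]⟩
    | ha i g ih =>
      obtain ⟨c, hc⟩ := ih
      refine ⟨c / n i, fun q => ?_⟩
      rw [map_mul, Equiv.Perm.mul_apply, hc, (psi_exists n).choose_spec.1, chi_mul, chi_a]
      have := n_ne (n := n) i
      field_simp
    | ha' i g ih =>
      obtain ⟨c, hc⟩ := ih
      refine ⟨c * n i, fun q => ?_⟩
      have := n_ne (n := n) i
      rw [map_mul, Equiv.Perm.mul_apply, hc, map_inv, Equiv.Perm.inv_eq_iff_eq,
        (psi_exists n).choose_spec.1, chi_mul, chi_inv, chi_a]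
      field_simp
    | hb g ih =>
      obtain ⟨c, hc⟩ := ih
      refine ⟨c + 1, fun q => ?_⟩
      rw [map_mul, Equiv.Perm.mul_apply, hc, (psi_exists n).choose_spec.2, chi_mul, chi_b]
      ring
    | hb' g ih =>
      obtain ⟨c, hc⟩ := ih
      refine ⟨c - 1, fun q => ?_⟩
      rw [map_mul, Equiv.Perm.mul_apply, hc, map_inv, Equiv.Perm.inv_eq_iff_eq,
        (psi_exists n).choose_spec.2, chi_mul, chi_inv, chi_b]
      ring
  obtain ⟨c, hc⟩ := key
  have : xc g = c := by rw [xc, hc]; simp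
  rw [this]; exact hc

lemma x_mul (g h : Γ) : xc (g * h) = xc g + (chi g)⁻¹ * xc h := by
  rw [← psi_eq]; simp [xc]
lemma x_one : xc (1 : Γ) = 0 := by simp [xc]
lemma x_a (i : Fin k) : xc (a i) = 0 := by simp [xc, (psi_exists n).choose_spec.1 i]
lemma x_b : xc b = 1 := by simp [xc, (psi_exists n).choose_spec.2]
lemma x_inv (g : Γ) : xc g⁻¹ = - chi g * xc g := by
  have := x_mul g⁻¹ g
  rw [inv_mul_cancel, x_one, chi_inv, inv_inv] at this
  linarith
lemma x_inv_mul (g h : Γ) : xc (g⁻¹ * h) = chi g * (xc h - xc g) := by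
  rw [x_mul, x_inv, chi_inv, inv_inv]; ring
lemma t_inv_mul (g h : Γ) : tm (g⁻¹ * h) = tm h - tm g := by
  rw [t_mul, t_inv]; abel
lemma x_a_zpow (i : Fin k) (j : ℤ) : xc (a i ^ j) = 0 := by
  induction j using Int.induction_on with
  | zero => simp [x_one]
  | succ j ih => rw [zpow_add_one, x_mul, ih, x_a]; simp
  | pred j ih => rw [zpow_sub_one, x_mul, ih, x_inv, x_a]; simp
lemma chi_b_zpow (j : ℤ) : chi (b ^ j) = 1 := by simp [chi, t_zpow, t_b]
lemma t_b_zpow (j : ℤ) : tm (b ^ j) = 0 := by simp [t_zpow, t_b]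
lemma x_b_zpow (j : ℤ) : xc (b ^ j) = j := by
  induction j using Int.induction_on with
  | zero => simp [x_one]
  | succ j ih => rw [zpow_add_one, x_mul, ih, x_b, chi_b_zpow]; push_cast; ring
  | pred j ih => rw [zpow_sub_one, x_mul, ih, x_inv, x_b, chi_b_zpow, chi_b]; push_cast; ring

end

section
variable {k : ℕ} (n : Fin k → ℕ)

/-- the abelian part -/
noncomputable def apow : Multiplicative (Fin k → ℤ) →* GammaGroup n :=
  (MonoidHom.noncommPiCoprod (fun i => zpowersHom (GammaGroup n) (gammaA n i)) (by
    intro i j _ x y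
    simp only [zpowersHom_apply]
    exact Commute.zpow_zpow (rel2 i j) _ _)).comp
    { toFun := fun v i => Multiplicative.ofAdd (Multiplicative.toAdd v i)
      map_one' := rfl
      map_mul' := fun _ _ => rfl }
end

section
variable {k : ℕ} {n : Fin k → ℕ}
local notation "Γ" => GammaGroup n
local notation "a" => gammaA n
local notation "b" => gammaB n

/-- abelian part, additive argument -/
noncomputable def ap (v : Fin k → ℤ) : Γ := apow n (Multiplicative.ofAdd v)

lemma ap_add (v w : Fin k → ℤ) : (ap (v + w) : Γ) = ap v * ap w := by
  simp [ap]
lemma ap_zero : (ap 0 : Γ) = 1 := by simp [ap]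
lemma ap_neg (v : Fin k → ℤ) : (ap (-v) : Γ) = (ap v)⁻¹ := by simp [ap]
lemma ap_nsmul (j : ℕ) (v : Fin k → ℤ) : (ap (j • v) : Γ) = (ap v) ^ j := by
  rw [ap, ofAdd_nsmul, map_pow]; rfl
lemma ap_comm (v w : Fin k → ℤ) : (ap v * ap w : Γ) = ap w * ap v := by
  rw [← ap_add, add_comm, ap_add]

lemma ap_single (i : Fin k) (j : ℤ) : (ap (Pi.single i j) : Γ) = a i ^ j := by
  have : (fun i' => Multiplicative.ofAdd ((Pi.single i j : Fin k → ℤ) i')) =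
    Pi.mulSingle i (Multiplicative.ofAdd j) := by
    ext i'
    by_cases h : i' = i
    · subst h; simp
    · simp [h]
  simp only [ap, apow, MonoidHom.comp_apply, MonoidHom.coe_mk, OneHom.coe_mk, toAdd_ofAdd]
  rw [this]
  refine (MonoidHom.noncommPiCoprod_mulSingle _ _ _).trans ?_
  simp

/-- hom uniqueness for functions on `Fin k → ℤ` -/
lemma pi_ind {P : (Fin k → ℤ) → Prop} (h0 : P 0) (hadd : ∀ v w, P v → P w → P (v + w))
    (hs : ∀ i j, P (Pi.single i j)) (v : Fin k → ℤ) : P v := by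
  rw [← Finset.univ_sum_single v]
  exact Finset.sum_induction _ P hadd h0 (fun i _ => hs i _)

lemma t_ap (v : Fin k → ℤ) : tm (ap v : Γ) = v := by
  induction v using pi_ind with
  | h0 => rw [ap_zero, t_one]
  | hadd v w hv hw => rw [ap_add, t_mul, hv, hw]
  | hs i j =>
    rw [ap_single, t_zpow, t_a]
    ext i'
    by_cases h : i' = i
    · subst h; simp
    · simp [h]

lemma x_ap [Adm n] (v : Fin k → ℤ) : xc (ap v : Γ) = 0 := by
  induction v using pi_ind with
  | h0 => rw [ap_zero, x_one]
  | hadd v w hv hw => rw [ap_add, x_mul, hv, hw]; simp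
  | hs i j => rw [ap_single, x_a_zpow]

lemma b_a (i : Fin k) : b * a i = a i * b ^ n i := by
  rw [← rel1]; group

lemma ainv_b (i : Fin k) (j : ℤ) : (a i)⁻¹ * b ^ j = b ^ (j * n i) * (a i)⁻¹ := by
  have : (a i)⁻¹ * b ^ j * a i = b ^ (j * n i) := by
    have h : ((a i)⁻¹ * b * ((a i)⁻¹)⁻¹) ^ j = (a i)⁻¹ * b ^ j * ((a i)⁻¹)⁻¹ := conj_zpow
    rw [inv_inv, rel1] at h
    rw [← h, mul_comm, zpow_mul]; simp
  rw [← this]; group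

/-- elements which conjugate `b` to a positive power -/
def Pmon (g : Γ) : Prop := ∃ m : ℕ, b * g = g * b ^ m

lemma Pmon.mul {g h : Γ} (hg : Pmon g) (hh : Pmon h) : Pmon (g * h) := by
  obtain ⟨m, hm⟩ := hg
  obtain ⟨l, hl⟩ := hh
  refine ⟨l * m, ?_⟩
  have h2 : b ^ m * h = h * (b ^ l) ^ m := by
    have : SemiconjBy h (b ^ l) b := hl.symm
    exact (this.pow_right m).symm
  rw [← mul_assoc, hm, mul_assoc, h2, ← pow_mul, mul_assoc]

lemma Pmon.one : Pmon (1 : Γ) := ⟨1, by simp⟩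

lemma Pmon.pow {g : Γ} (hg : Pmon g) (j : ℕ) : Pmon (g ^ j) := by
  induction j with
  | zero => simpa using Pmon.one
  | succ j ih => rw [pow_succ]; exact ih.mul hg

lemma Pmon.zpow {g : Γ} (hg : Pmon g) (j : ℤ) : ∃ j' : ℤ, b ^ j * g = g * b ^ j' := by
  obtain ⟨m, hm⟩ := hg
  refine ⟨m * j, ?_⟩
  have : SemiconjBy g (b ^ m) b := hm.symm
  rw [← (this.zpow_right j).eq, zpow_mul]; simp

lemma normal_form (g : Γ) : ∃ (r : Fin k → ℤ) (j : ℤ) (s : Fin k → ℤ),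
    Pmon (ap r : Γ) ∧ g = ap r * b ^ j * ap s := by
  induction g using gind with
  | h1 => exact ⟨0, 0, 0, by rw [ap_zero]; exact Pmon.one, by simp [ap_zero]⟩
  | ha i g ih =>
    obtain ⟨r, j, s, hr, rfl⟩ := ih
    have e : (ap (Pi.single i 1 + r) : Γ) = a i * ap r := by rw [ap_add, ap_single, zpow_one]
    refine ⟨Pi.single i 1 + r, j, s, ?_, ?_⟩
    · rw [e]; exact Pmon.mul ⟨_, b_a i⟩ hr
    · rw [e]; group
  | ha' i g ih =>
    obtain ⟨r, j, s, hr, rfl⟩ := ih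
    have e : (ap (Pi.single i (-1) + s) : Γ) = (a i)⁻¹ * ap s := by
      rw [ap_add, ap_single, zpow_neg_one]
    refine ⟨r, j * n i, Pi.single i (-1) + s, hr, ?_⟩
    rw [e]
    have := ap_comm (n := n) (Pi.single i (-1)) r
    rw [ap_single, zpow_neg_one] at this
    rw [← mul_assoc, ← mul_assoc, this, mul_assoc (ap r), ainv_b]
    group
  | hb g ih =>
    obtain ⟨r, j, s, hr, rfl⟩ := ih
    obtain ⟨j', h⟩ := hr.zpow 1
    rw [zpow_one] at h
    refine ⟨r, j' + j, s, hr, ?_⟩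
    rw [← mul_assoc, ← mul_assoc, h, zpow_add]; group
  | hb' g ih =>
    obtain ⟨r, j, s, hr, rfl⟩ := ih
    obtain ⟨j', h⟩ := hr.zpow (-1)
    rw [zpow_neg_one] at h
    refine ⟨r, j' + j, s, hr, ?_⟩
    rw [← mul_assoc, ← mul_assoc, h, zpow_add]; group

variable [Adm n]

lemma eq_one_of {g : Γ} (hx : xc g = 0) (ht : tm g = 0) : g = 1 := by
  obtain ⟨r, j, s, hr, rfl⟩ := normal_form g
  rw [x_mul, x_ap, x_mul, x_ap, x_b_zpow] at hx
  have hc := chi_pos (ap r : Γ)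
  have hj : j = 0 := by
    have : (chi (ap r : Γ))⁻¹ * (j : ℚ) = 0 := by simpa using hx
    rcases mul_eq_zero.1 this with h | h
    · exact absurd h (by positivity)
    · exact_mod_cast h
  subst hj
  rw [t_mul, t_mul, t_ap, t_ap, t_b_zpow] at ht
  have : r + s = 0 := by simpa using ht
  rw [zpow_zero, mul_one, ← ap_add, this, ap_zero]

lemma g_ext {g h : Γ} (hx : xc g = xc h) (ht : tm g = tm h) : g = h := by
  have : g⁻¹ * h = 1 := eq_one_of (by rw [x_inv_mul, hx]; simp) (by rw [t_inv_mul, ht]; simp)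
  exact (inv_mul_eq_one.1 this)

lemma b_zpow_inj {i j : ℤ} (h : (b ^ i : Γ) = b ^ j) : i = j := by
  have := congrArg xc h
  rw [x_b_zpow, x_b_zpow] at this
  exact_mod_cast this

/-- product of all the parameters -/
def NN (n : Fin k → ℕ) : ℕ := ∏ i, n i

lemma x_denom (g : Γ) : ∃ (R : ℕ) (z : ℤ), xc g * (NN n : ℚ) ^ R = z := by
  induction g using gind with
  | h1 => exact ⟨0, 0, by simp [x_one]⟩
  | ha i g ih =>
    obtain ⟨R, z, h⟩ := ih
    obtain ⟨c, hc⟩ : n i ∣ NN n := Finset.dvd_prod_of_mem _ (Finset.mem_univ i)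
    refine ⟨R + 1, z * c, ?_⟩
    push_cast
    rw [← h, x_mul, x_a, chi_a, pow_succ]
    have e : (NN n : ℚ) = n i * c := by rw [hc]; push_cast; rfl
    have := n_ne (n := n) i
    rw [e]; field_simp; ring
  | ha' i g ih =>
    obtain ⟨R, z, h⟩ := ih
    refine ⟨R, z * n i, ?_⟩
    push_cast
    rw [← h, x_mul, x_inv, x_a, chi_inv, chi_a]
    simp; ring
  | hb g ih =>
    obtain ⟨R, z, h⟩ := ih
    refine ⟨R, z + (NN n) ^ R, ?_⟩
    push_cast
    rw [← h, x_mul, x_b, chi_b]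
    simp; ring
  | hb' g ih =>
    obtain ⟨R, z, h⟩ := ih
    refine ⟨R, z - (NN n) ^ R, ?_⟩
    push_cast
    rw [← h, x_mul, x_inv, x_b, chi_inv, chi_b]
    simp; ring

lemma NN_pos : 0 < NN n := Finset.prod_pos fun i _ => n_pos i

/-- The finite sets used in the column lemma. -/
lemma box_finite (r : ℕ) : {g : Γ | (∀ i, |tm g i| ≤ r) ∧ 0 ≤ xc g ∧ xc g < 1 ∧
    ∃ z : ℤ, xc g * (NN n : ℚ) ^ r = z}.Finite := by
  have hN : (0 : ℚ) < (NN n : ℚ) ^ r := by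
    have := NN_pos (n := n); positivity
  have hfin : ((Set.Icc (0 : ℤ) ((NN n : ℤ) ^ r)) ×ˢ
      (Set.pi Set.univ fun _ : Fin k => Set.Icc (-(r : ℤ)) r)).Finite :=
    (Set.finite_Icc _ _).prod (Set.Finite.pi' fun _ => Set.finite_Icc _ _ |>.subset (fun _ h => h)
      |> fun h => h) |>.subset (by
        rintro ⟨x, v⟩ ⟨h1, h2⟩
        exact ⟨h1, fun i => h2 i trivial⟩)
  refine Set.Finite.of_finite_image (f := fun g => (⌊xc g * (NN n : ℚ) ^ r⌋, tm g))
    (hfin.subset ?_) ?_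
  · rintro _ ⟨g, ⟨h1, h2, h3, z, h4⟩, rfl⟩
    refine ⟨?_, fun i _ => abs_le.1 (h1 i)⟩
    simp only [h4, Int.floor_intCast]
    constructor
    · have : (0 : ℚ) ≤ z := by rw [← h4]; positivity
      exact_mod_cast this
    · have : (z : ℚ) ≤ (NN n : ℚ) ^ r := by rw [← h4]; nlinarith
      exact_mod_cast this
  · rintro g ⟨h1, h2, h3, z, h4⟩ g' ⟨h1', h2', h3', z', h4'⟩ he
    simp only [h4, h4', Int.floor_intCast, Prod.mk.injEq] at he
    refine g_ext ?_ he.2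
    have : xc g * (NN n : ℚ) ^ r = xc g' * (NN n : ℚ) ^ r := by rw [h4, h4', he.1]
    exact mul_right_cancel₀ hN.ne' this

end

/-! ### The easy direction -/

lemma ce_of_inj {G H : Type*} [Group G] [Group H] (φ : G →* H) (hφ : Function.Injective φ)
    (E : Set H) (hE : E.Finite) (h : ∀ y, ∃ x, ∃ e ∈ E, y = φ x * e) : CE G H := by
  choose f' e he hy using h
  have hy' : ∀ y, φ (f' y) = y * (e y)⁻¹ := fun y => by
    exact eq_mul_inv_of_mul_eq (hy y).symm
  refine ⟨φ, f', ?_, ?_, ?_, ?_⟩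
  · intro D hD
    refine ⟨φ '' D, hD.image _, fun x y hxy => ⟨_, hxy, by simp⟩⟩
  · intro D hD
    refine ⟨φ ⁻¹' (E * D * E⁻¹), ((hE.mul hD).mul hE.inv).preimage hφ.injOn, fun x y hxy => ?_⟩
    rw [Set.mem_preimage, map_mul, map_inv, hy', hy']
    have := Set.mul_mem_mul (Set.mul_mem_mul (he x) hxy) (Set.inv_mem_inv.2 (he y))
    simpa [mul_assoc] using this
  · refine ⟨φ ⁻¹' E⁻¹, hE.inv.preimage hφ.injOn, fun x => ?_⟩
    rw [Set.mem_preimage]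
    simp only [id, Function.comp, map_mul, map_inv, hy']
    simpa using he (φ x)
  · refine ⟨E⁻¹, hE.inv, fun y => ?_⟩
    simp only [id, Function.comp, hy']
    simpa using he y

lemma conj_pow_b {k : ℕ} (n : Fin k → ℕ) (i : Fin k) (s : ℕ) :
    (gammaA n i ^ s)⁻¹ * gammaB n * gammaA n i ^ s = gammaB n ^ (n i ^ s) := by
  induction s with
  | zero => simp
  | succ s ih =>
    have h := conj_pow (a := (gammaA n i)⁻¹) (b := gammaB n) (i := n i ^ s)
    rw [inv_inv, rel1] at h
    have : (gammaA n i ^ (s+1))⁻¹ * gammaB n * gammaA n i ^ (s+1) =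
      (gammaA n i)⁻¹ * ((gammaA n i ^ s)⁻¹ * gammaB n * gammaA n i ^ s) * gammaA n i := by
      rw [pow_succ]; group
    rw [this, ih, ← h, pow_succ, mul_comm, pow_mul]

lemma ce_pow {k l : ℕ} (p : Fin k → ℕ) (m : Fin l → ℕ) [Adm p] [Adm m] (σ : Fin k ≃ Fin l)
    (s : Fin k → ℕ) (hs : ∀ i, 0 < s i) (hp : ∀ i, p i = m (σ i) ^ s i) :
    CE (GammaGroup p) (GammaGroup m) := by
  obtain ⟨φ, hφa, hφb⟩ := lift_exists p (fun i => gammaA m (σ i) ^ s i) (gammaB m)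
    (fun i => by rw [hp]; exact conj_pow_b m (σ i) (s i))
    (fun i j => Commute.pow_pow (rel2 (σ i) (σ j)) _ _)
  have ht : ∀ g i, tm (φ g) (σ i) = s i * tm g i := by
    intro g
    have h1 : ∀ j i, tm (φ (gammaA p j)) (σ i) = s i * tm (gammaA p j) i := by
      intro j i
      rw [hφa, t_pow, t_a, t_a]
      by_cases h : i = j
      · subst h; simp
      · simp [h, σ.injective.ne h]
    have h2 : ∀ i, tm (φ (gammaB p)) (σ i) = s i * tm (gammaB p) i := by
      intro i; rw [hφb, t_b, t_b]; simp
    induction g using gind with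
    | h1 => simp [t_one]
    | ha j g ih => intro i; rw [map_mul, t_mul, t_mul, Pi.add_apply, ih, h1, Pi.add_apply]; ring
    | ha' j g ih =>
      intro i
      rw [map_mul, map_inv, t_inv_mul, t_inv_mul, Pi.sub_apply, ih, h1, Pi.sub_apply]; ring
    | hb g ih => intro i; rw [map_mul, t_mul, t_mul, Pi.add_apply, ih, h2, Pi.add_apply]; ring
    | hb' g ih =>
      intro i
      rw [map_mul, map_inv, t_inv_mul, t_inv_mul, Pi.sub_apply, ih, h2, Pi.sub_apply]; ring
  have hchi : ∀ g, chi (φ g) = chi g := by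
    intro g
    rw [chi, chi, ← Equiv.prod_comp σ]
    refine Finset.prod_congr rfl fun i _ => ?_
    rw [ht, hp, zpow_mul]; simp
  have hx : ∀ g, xc (φ g) = xc g := by
    intro g
    have h1 : ∀ j, xc (φ (gammaA p j)) = xc (gammaA p j) := by
      intro j
      have := x_a_zpow (n := m) (σ j) (s j)
      rw [zpow_natCast] at this
      rw [hφa, this, x_a]
    induction g using gind with
    | h1 => simp [x_one]
    | ha j g ih => rw [map_mul, x_mul, x_mul, hchi, h1, ih]
    | ha' j g ih => rw [map_mul, map_inv, x_inv_mul, x_inv_mul, hchi, h1, ih]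
    | hb g ih => rw [map_mul, x_mul, x_mul, hchi, hφb, ih, x_b, x_b, chi_b]
    | hb' g ih => rw [map_mul, map_inv, x_inv_mul, x_inv_mul, hchi, hφb, ih, x_b, x_b]
  have hinj : Function.Injective φ := by
    rw [injective_iff_map_eq_one]
    intro g hg
    apply eq_one_of
    · rw [← hx, hg, x_one]
    · ext i
      have := ht g i
      rw [hg, t_one] at this
      have h0 : (s i : ℤ) ≠ 0 := by have := hs i; positivity
      have := (mul_eq_zero.1 this.symm).resolve_left h0
      simpa using this
  have him : ∀ v : Fin k → ℤ, (ap (fun j => s (σ.symm j) * v (σ.symm j)) : GammaGroup m)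
      = φ (ap v) := by
    intro v
    induction v using pi_ind with
    | h0 => rw [ap_zero, map_one, ← ap_zero]; congr 1
    | hadd v w hv hw => rw [ap_add, map_mul, ← hv, ← hw, ← ap_add]; congr 1; ext j; exact mul_add _ _ _
    | hs i j =>
      rw [ap_single, map_zpow, hφa, ← zpow_natCast, ← zpow_mul, ← ap_single]
      congr 1; ext j'
      by_cases h : j' = σ i
      · subst h; simp
      · have : σ.symm j' ≠ i := fun h' => h (by rw [← h']; simp)
        simp [h, this]
  let S := ∏ i, s i
  have hSd : ∀ i, s i ∣ S := fun i => Finset.dvd_prod_of_mem _ (Finset.mem_univ i)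
  have hS0 : 0 < S := Finset.prod_pos fun i _ => hs i
  have hSr : ∀ r : Fin l → ℤ, ∃ g, φ g = ap (S • r) := by
    intro r
    choose c hc using hSd
    refine ⟨ap (fun i => c i * r (σ i)), ?_⟩
    rw [← him]
    congr 1; ext j
    have e : (S : ℤ) = s (σ.symm j) * c (σ.symm j) := by exact_mod_cast hc (σ.symm j)
    simp only [Pi.smul_apply, nsmul_eq_mul, Equiv.apply_symm_apply]
    rw [e]; ring
  refine ce_of_inj φ hinj ((fun v => (ap v : GammaGroup m)) ''
    (Set.pi Set.univ fun j => Set.Ico (0 : ℤ) S)) ?_ ?_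
  · exact (Set.Finite.pi fun j => Set.finite_Ico _ _).image _
  · intro y
    obtain ⟨r, j, u, hr, rfl⟩ := normal_form y
    have hr' : Pmon (ap ((S - 1) • r) : GammaGroup m) := by rw [ap_nsmul]; exact hr.pow _
    obtain ⟨j', hj'⟩ := hr'.zpow j
    obtain ⟨g1, hg1⟩ := hSr r
    let w := u - (S - 1) • r
    obtain ⟨g2, hg2⟩ := hSr (fun i => w i / S)
    refine ⟨g1 * gammaB p ^ j' * g2, ap (fun i => w i % S), ⟨_, ?_, rfl⟩, ?_⟩
    · intro i _
      have : (0 : ℤ) < S := by exact_mod_cast hS0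
      exact ⟨Int.emod_nonneg _ this.ne', Int.emod_lt_of_pos _ this⟩
    · rw [map_mul, map_mul, map_zpow, hg1, hg2, hφb, mul_assoc _ (ap _) (ap _), ← ap_add]
      have e1 : (S • (fun i => w i / (S : ℤ)) + fun i => w i % S) = w := by
        ext i; simp only [Pi.add_apply, nsmul_eq_mul]
        exact Int.mul_ediv_add_emod _ _
      have e2 : (ap (S • r) : GammaGroup m) = ap r * ap ((S - 1) • r) := by
        rw [← ap_add]; congr 1
        conv_lhs => rw [show S = (S - 1) + 1 by omega, add_smul, one_smul, add_comm]
      have e3 : u = (S - 1) • r + w := by simp only [w]; abel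
      rw [e1, e2]
      conv_lhs => rw [e3, ap_add]
      rw [mul_assoc (ap r) (ap _) (gammaB m ^ j'), ← hj']
      simp only [mul_assoc]

lemma easy {k l : ℕ} (n : Fin k → ℕ) (m : Fin l → ℕ) [Adm n] [Adm m]
    (h : ∃ σ : Fin k ≃ Fin l, ∀ i, ∃ s t : ℕ, 0 < s ∧ 0 < t ∧ (n i) ^ s = (m (σ i)) ^ t) :
    QuasiIsometricGroups (GammaGroup n) (GammaGroup m) := by
  classical
  obtain ⟨σ, h⟩ := h
  choose s t hs ht hst using h
  have : Adm (fun i => n i ^ s i) := by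
    constructor
    · intro i
      calc 2 ≤ n i := Adm.two i
        _ ≤ n i ^ s i := Nat.le_self_pow (hs i).ne' _
    · intro i j hij
      exact (Adm.cop i j hij).pow _ _
  have c1 := ce_pow (fun i => n i ^ s i) n (Equiv.refl _) s hs (fun i => rfl)
  have c2 := ce_pow (fun i => n i ^ s i) m σ t ht (fun i => hst i)
  have fin : ∀ {k : ℕ} (n : Fin k → ℕ), ∃ S : Finset (GammaGroup n),
      Subgroup.closure (S : Set (GammaGroup n)) = ⊤ := by
    intro k n
    refine ⟨((Set.finite_range (gammaA n)).union (Set.finite_singleton (gammaB n))).toFinset, ?_⟩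
    rw [Set.Finite.coe_toFinset]
    exact gen_top
  obtain ⟨S, hS⟩ := fin n
  obtain ⟨T, hT⟩ := fin m
  exact qi_of_ce (c1.symm.trans c2) S T hS hT

end GQ

namespace GQ
open scoped Pointwise

/-! ### Koszul type resolutions -/

/-- the left ideals -/
def JJ {A : Type} [Ring A] {k : ℕ} (β : A) (α : Fin k → A) (L : List (Fin k)) : Submodule A A :=
  Submodule.span A ({β} ∪ {x | ∃ i ∈ L, x = α i - 1})

/-- homogeneous chains -/
def Hom {A : Type} [Ring A] {Cell : Type} (deg : Cell → ℕ) (q : ℕ) (c : Cell → A) : Prop :=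
  ∀ σ, deg σ ≠ q → c σ = 0

/-- the relators -/
def Rel {A : Type} [Ring A] {k : ℕ} (β : A) (ν : Fin k → A) (L : List (Fin k)) : Set A :=
  {β} ∪ {x | ∃ i ∈ L, x = 1 - ν i}

/-- Koszul complexes -/
structure Reso {A : Type} [Ring A] {k : ℕ} (β : A) (α ν : Fin k → A) (L : List (Fin k)) where
  Cell : Type
  ft : Fintype Cell
  de : DecidableEq Cell
  deg : Cell → ℕ
  d : (Cell → A) →ₗ[A] (Cell → A)
  Φ : Fin k → (Cell → A) →ₗ[A] (Cell → A)
  top : Cell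
  bot : Cell
  dd : ∀ c, d (d c) = 0
  dΦ : ∀ i c, d (Φ i c) = Φ i (d c)
  ΦΦ : ∀ i j c, Φ i (Φ j c) = Φ j (Φ i c)
  d_hom : ∀ q c, Hom deg (q + 1) c → Hom deg q (d c)
  d_zero : ∀ c, Hom deg 0 c → d c = 0
  Φ_hom : ∀ i q c, Hom deg q c → Hom deg q (Φ i c)
  deg_bot : ∀ σ, deg σ = 0 ↔ σ = bot
  deg_le : ∀ σ, deg σ ≤ L.length + 1
  deg_top : ∀ σ, deg σ = L.length + 1 ↔ σ = top
  Φ_bot : ∀ i x, Φ i (Pi.single bot x) = Pi.single bot (x * α i)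
  Φ_top : ∀ i, Φ i (Pi.single top 1) = Pi.single top (ν i)
  rel1 : ∀ σ, d (Pi.single top 1) σ = 0 ∨ ∃ r ∈ Rel β ν L, d (Pi.single top 1) σ = r ∨
    d (Pi.single top 1) σ = - r
  rel2 : ∀ r ∈ Rel β ν L, ∃ σ, d (Pi.single top 1) σ = r ∨ d (Pi.single top 1) σ = - r
  E1 : ∀ q c, Hom deg (q + 1) c → d c = 0 → ∃ e, Hom deg (q + 2) e ∧ d e = c
  E0 : ∀ x ∈ JJ β α L, ∃ e, Hom deg 1 e ∧ d e = Pi.single bot x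
  S1 : ∀ e, Hom deg 1 e → d e bot ∈ JJ β α L

section
variable {A : Type} [Ring A] {Cell : Type} {deg : Cell → ℕ}
lemma Hom.add {q} {c e : Cell → A} (hc : Hom deg q c) (he : Hom deg q e) : Hom deg q (c + e) :=
  fun σ h => by simp [hc σ h, he σ h]
lemma Hom.sub {q} {c e : Cell → A} (hc : Hom deg q c) (he : Hom deg q e) : Hom deg q (c - e) :=
  fun σ h => by simp [hc σ h, he σ h]
lemma Hom.neg {q} {c : Cell → A} (hc : Hom deg q c) : Hom deg q (-c) :=
  fun σ h => by simp [hc σ h]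
lemma Hom.zero {q} : Hom deg q (0 : Cell → A) := fun σ h => by simp
lemma Hom.smul {q} {c : Cell → A} (x : A) (hc : Hom deg q c) : Hom deg q (x • c) :=
  fun σ h => by simp [hc σ h]
lemma Hom.single [DecidableEq Cell] (σ : Cell) (x : A) : Hom deg (deg σ) (Pi.single σ x) := by
  intro τ h
  have : τ ≠ σ := by rintro rfl; exact h rfl
  simp [this]
lemma Hom.eq_single [DecidableEq Cell] {q} {c : Cell → A} {σ₀ : Cell} (hc : Hom deg q c)
    (h : ∀ σ, deg σ = q ↔ σ = σ₀) : c = Pi.single σ₀ (c σ₀) := by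
  ext σ
  by_cases hσ : σ = σ₀
  · subst hσ; simp
  · rw [hc σ (fun h' => hσ ((h σ).1 h'))]; simp [hσ]
end

section
variable {A : Type} [Ring A] {k : ℕ} {β : A} {α ν : Fin k → A}

lemma sum_elim_zero {X Y Z : Type*} [Zero Z] (f : X → Z) (g : Y → Z) (hf : f = 0) (hg : g = 0) :
    Sum.elim f g = 0 := by
  ext (x | x) <;> simp [hf, hg]

/-- the base complex -/
def resoNil (H1 : ∀ y, y * β = 0 → y = 0) (H2 : ∀ i, β * α i = ν i * β)
    (H3 : ∀ i j, α i * α j = α j * α i) : Reso β α ν [] where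
  Cell := Bool
  ft := inferInstance
  de := inferInstance
  deg := fun s => cond s 1 0
  d := { toFun := fun c s => cond s 0 (c true * β)
         map_add' := by intro x y; ext (_ | _) <;> simp [add_mul]
         map_smul' := by intro x y; ext (_ | _) <;> simp [mul_assoc] }
  Φ := fun i => { toFun := fun c s => cond s (c true * ν i) (c false * α i)
                  map_add' := by intro x y; ext (_ | _) <;> simp [add_mul]
                  map_smul' := by intro x y; ext (_ | _) <;> simp [mul_assoc] }
  top := true
  bot := false
  dd := by intro c; ext (_ | _) <;> simp
  dΦ := by intro i c; ext (_ | _) <;> simp [mul_assoc, H2]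
  ΦΦ := by
    intro i j c
    have h : ν i * ν j = ν j * ν i := by
      have e : ∀ i j, ν i * ν j * β = β * (α i * α j) := by
        intro i j
        rw [mul_assoc, ← H2, ← mul_assoc, ← H2, mul_assoc]
      have : (ν i * ν j - ν j * ν i) * β = 0 := by
        rw [sub_mul, e, e, H3 i j, sub_self]
      exact sub_eq_zero.1 (H1 _ this)
    ext (_ | _) <;> simp [mul_assoc, H3 i j, h]
  d_hom := by
    intro q c hc s hs
    rcases s with _ | _
    · have := hc true (by simpa using Ne.symm hs)
      simp [this]
    · simp
  d_zero := by
    intro c hc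
    have := hc true (by simp)
    ext (_ | _) <;> simp [this]
  Φ_hom := by
    intro i q c hc s hs
    have := hc s hs
    rcases s with _ | _ <;> simp [this]
  deg_bot := by simp
  deg_le := by simp
  deg_top := by simp
  Φ_bot := by intro i x; ext (_ | _) <;> simp
  Φ_top := by intro i; ext (_ | _) <;> simp
  rel1 := by
    rintro (_ | _)
    · right; exact ⟨β, Or.inl rfl, Or.inl (by simp)⟩
    · left; simp
  rel2 := by
    rintro r (rfl | ⟨i, hi, _⟩)
    · exact ⟨false, Or.inl (by simp)⟩
    · simp at hi
  E1 := by
    intro q c hc h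
    refine ⟨0, Hom.zero, ?_⟩
    have h1 := congrFun h false
    simp only [LinearMap.coe_mk, AddHom.coe_mk, cond_false, Pi.zero_apply] at h1
    have h2 := H1 _ h1
    have h3 := hc false (by simp)
    rw [map_zero]
    ext (_ | _) <;> simp [h2, h3]
  E0 := by
    intro x hx
    have hx : x ∈ Submodule.span A {β} := by simpa [JJ] using hx
    obtain ⟨y, rfl⟩ := Submodule.mem_span_singleton.1 hx
    refine ⟨Pi.single true y, Hom.single (deg := fun s => cond s 1 0) true y, ?_⟩
    ext (_ | _) <;> simp
  S1 := by
    intro e he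
    simp only [LinearMap.coe_mk, AddHom.coe_mk, cond_false]
    exact Submodule.smul_mem _ (e true) (Submodule.subset_span (Or.inl rfl))

/-- the cone -/
def resoCons (i : Fin k) (L : List (Fin k))
    (H4 : ∀ y, y * (1 - α i) ∈ JJ β α L → y ∈ JJ β α L) (K : Reso β α ν L) :
    Reso β α ν (i :: L) :=
  letI := K.ft
  letI := K.de
  have hl : ∀ (q : ℕ) (c : K.Cell ⊕ K.Cell → A),
      Hom (Sum.elim K.deg (fun s => K.deg s + 1)) q c → Hom K.deg q (c ∘ Sum.inl) :=
    fun q c hc s hs => hc (Sum.inl s) hs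
  have hr : ∀ (q : ℕ) (c : K.Cell ⊕ K.Cell → A),
      Hom (Sum.elim K.deg (fun s => K.deg s + 1)) (q + 1) c → Hom K.deg q (c ∘ Sum.inr) :=
    fun q c hc s hs => hc (Sum.inr s) (by simpa using hs)
  have hr0 : ∀ (c : K.Cell ⊕ K.Cell → A),
      Hom (Sum.elim K.deg (fun s => K.deg s + 1)) 0 c → c ∘ Sum.inr = 0 :=
    fun c hc => funext fun s => hc (Sum.inr s) (by simp)
  have hmk : ∀ (q : ℕ) (x y : K.Cell → A), Hom K.deg (q + 1) x → Hom K.deg q y →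
      Hom (Sum.elim K.deg (fun s => K.deg s + 1)) (q + 1) (Sum.elim x y) := by
    rintro q x y hx hy (s | s) hs
    · exact hx s hs
    · exact hy s (by simpa using hs)
  have stl : (Pi.single (Sum.inr K.top) 1 : K.Cell ⊕ K.Cell → A) ∘ Sum.inl = 0 := by
    ext s; simp
  have str : (Pi.single (Sum.inr K.top) 1 : K.Cell ⊕ K.Cell → A) ∘ Sum.inr = Pi.single K.top 1 := by
    ext s; simp [Pi.single_apply]
  { Cell := K.Cell ⊕ K.Cell
    ft := inferInstance
    de := inferInstance
    deg := Sum.elim K.deg (fun s => K.deg s + 1)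
    d := { toFun := fun c => Sum.elim
            (K.d (c ∘ Sum.inl) + c ∘ Sum.inr - K.Φ i (c ∘ Sum.inr)) (- K.d (c ∘ Sum.inr))
           map_add' := by
            intro x y
            simp only [Pi.add_comp, map_add]
            ext (s | s) <;> simp <;> abel
           map_smul' := by
            intro r x
            have e1 : (r • x) ∘ Sum.inl = r • (x ∘ Sum.inl) := rfl
            have e2 : (r • x) ∘ Sum.inr = r • (x ∘ Sum.inr) := rfl
            simp only [e1, e2, map_smul]
            ext (s | s) <;> simp [mul_add, mul_sub] }
    Φ := fun j => { toFun := fun c => Sum.elim (K.Φ j (c ∘ Sum.inl)) (K.Φ j (c ∘ Sum.inr))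
                    map_add' := by
                      intro x y
                      simp only [Pi.add_comp, map_add]
                      ext (s | s) <;> simp
                    map_smul' := by
                      intro r x
                      have e1 : (r • x) ∘ Sum.inl = r • (x ∘ Sum.inl) := rfl
                      have e2 : (r • x) ∘ Sum.inr = r • (x ∘ Sum.inr) := rfl
                      simp only [e1, e2, map_smul]
                      ext (s | s) <;> simp }
    top := Sum.inr K.top
    bot := Sum.inl K.bot
    dd := by
      intro c
      simp only [LinearMap.coe_mk, AddHom.coe_mk, Sum.elim_comp_inl, Sum.elim_comp_inr, map_add,
        map_sub, map_neg, K.dd, K.dΦ]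
      apply sum_elim_zero
      · abel
      · simp
    dΦ := by
      intro j c
      simp only [LinearMap.coe_mk, AddHom.coe_mk, Sum.elim_comp_inl, Sum.elim_comp_inr, map_add,
        map_sub, map_neg, K.dΦ, K.ΦΦ i j]
    ΦΦ := by
      intro j j' c
      simp only [LinearMap.coe_mk, AddHom.coe_mk, Sum.elim_comp_inl, Sum.elim_comp_inr, K.ΦΦ j j']
    d_hom := by
      intro q c hc
      have h1 := hl _ _ hc
      have h2 := hr _ _ hc
      rintro (s | s) hs
      · exact (((K.d_hom _ _ h1).add h2).sub (K.Φ_hom i _ _ h2)) s hs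
      · rcases q with _ | q
        · have := K.d_zero _ h2
          simp [this]
        · exact (K.d_hom _ _ h2).neg s (by simpa using hs)
    d_zero := by
      intro c hc
      have h1 := K.d_zero _ (hl _ _ hc)
      have h2 := hr0 _ hc
      simp only [LinearMap.coe_mk, AddHom.coe_mk, h1, h2, map_zero]
      apply sum_elim_zero <;> simp
    Φ_hom := by
      intro j q c hc
      rintro (s | s) hs
      · exact K.Φ_hom j q _ (hl _ _ hc) s hs
      · rcases q with _ | q
        · simp [hr0 _ hc]
        · exact K.Φ_hom j q _ (hr _ _ hc) s (by simpa using hs)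
    deg_bot := by
      rintro (s | s)
      · simp [K.deg_bot]
      · simp
    deg_le := by
      rintro (s | s)
      · have := K.deg_le s; simp; omega
      · have := K.deg_le s; simp; omega
    deg_top := by
      rintro (s | s)
      · have := K.deg_le s; simp; omega
      · simp [K.deg_top]
    Φ_bot := by
      intro j x
      have e1 : (Pi.single (Sum.inl K.bot) x : K.Cell ⊕ K.Cell → A) ∘ Sum.inl
        = Pi.single K.bot x := by ext s; simp [Pi.single_apply]
      have e2 : (Pi.single (Sum.inl K.bot) x : K.Cell ⊕ K.Cell → A) ∘ Sum.inr = 0 := by ext s; simp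
      simp only [LinearMap.coe_mk, AddHom.coe_mk, e1, e2, K.Φ_bot, map_zero]
      ext (s | s) <;> simp [Pi.single_apply]
    Φ_top := by
      intro j
      simp only [LinearMap.coe_mk, AddHom.coe_mk, stl, str, K.Φ_top, map_zero]
      ext (s | s) <;> simp [Pi.single_apply]
    rel1 := by
      simp only [LinearMap.coe_mk, AddHom.coe_mk, stl, str, K.Φ_top, map_zero]
      rintro (s | s)
      · by_cases h : s = K.top
        · right
          subst h
          exact ⟨_, Or.inr ⟨i, by simp, rfl⟩, Or.inl (by simp)⟩
        · left; simp [h]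
      · rcases K.rel1 s with h | ⟨r, hr, h⟩
        · left; simp [h]
        · right
          refine ⟨r, ?_, ?_⟩
          · rcases hr with hr | ⟨j, hj, rfl⟩
            · exact Or.inl hr
            · exact Or.inr ⟨j, by simp [hj], rfl⟩
          · rcases h with h | h
            · right; simp [h]
            · left; simp [h]
    rel2 := by
      simp only [LinearMap.coe_mk, AddHom.coe_mk, stl, str, K.Φ_top, map_zero]
      intro r hr
      have old : ∀ r ∈ Rel β ν L, ∃ σ : K.Cell ⊕ K.Cell, Sum.elim (0 + Pi.single K.top 1 -
          Pi.single K.top (ν i)) (-K.d (Pi.single K.top 1)) σ = r ∨ Sum.elim (0 +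
          Pi.single K.top 1 - Pi.single K.top (ν i)) (-K.d (Pi.single K.top 1)) σ = -r := by
        intro r hr
        obtain ⟨s, hs⟩ := K.rel2 r hr
        refine ⟨Sum.inr s, ?_⟩
        rcases hs with h | h
        · right; simp [h]
        · left; simp [h]
      rcases hr with hr | ⟨j, hj, rfl⟩
      · exact old r (Or.inl hr)
      · rcases List.mem_cons.1 hj with rfl | hj
        · exact ⟨Sum.inl K.top, Or.inl (by simp)⟩
        · exact old _ (Or.inr ⟨j, hj, rfl⟩)
    E1 := by
      intro q c hc h
      simp only [LinearMap.coe_mk, AddHom.coe_mk] at h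
      have h1 := hl _ _ hc
      have h2 := hr _ _ hc
      have ha : K.d (c ∘ Sum.inl) + c ∘ Sum.inr - K.Φ i (c ∘ Sum.inr) = 0 := by
        ext s; exact congrFun h (Sum.inl s)
      have hb : K.d (c ∘ Sum.inr) = 0 := by
        ext s; simpa using congrFun h (Sum.inr s)
      obtain ⟨y', hy', hy⟩ : ∃ y', Hom K.deg (q + 1) y' ∧ - K.d y' = c ∘ Sum.inr := by
        rcases q with _ | q
        · have e := h2.eq_single K.deg_bot
          set u := (c ∘ Sum.inr) K.bot
          have hs := K.S1 _ h1
          have hu : u * (1 - α i) ∈ JJ β α L := by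
            have h3 := congrFun ha K.bot
            rw [e, K.Φ_bot] at h3
            simp only [Pi.sub_apply, Pi.add_apply, Pi.single_eq_same, Pi.zero_apply] at h3
            have : u * (1 - α i) = - (K.d (c ∘ Sum.inl) K.bot) := by
              rw [mul_sub, mul_one, eq_neg_iff_add_eq_zero, ← h3]; abel
            rw [this]
            exact Submodule.neg_mem _ hs
          obtain ⟨w, hw, hw'⟩ := K.E0 _ (H4 u hu)
          exact ⟨-w, hw.neg, by rw [map_neg, neg_neg, hw', ← e]⟩
        · obtain ⟨w, hw, hw'⟩ := K.E1 q _ h2 hb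
          exact ⟨-w, hw.neg, by rw [map_neg, neg_neg, hw']⟩
      have hd : K.d (c ∘ Sum.inl - y' + K.Φ i y') = 0 := by
        rw [map_add, map_sub, K.dΦ, ← ha, ← hy, map_neg]; abel
      obtain ⟨x', hx', hx⟩ := K.E1 q _ ((h1.sub hy').add (K.Φ_hom i _ _ hy')) hd
      refine ⟨Sum.elim x' y', hmk (q + 1) _ _ hx' hy', ?_⟩
      simp only [LinearMap.coe_mk, AddHom.coe_mk, Sum.elim_comp_inl, Sum.elim_comp_inr, hx, hy]
      ext (s | s)
      · simp only [Sum.elim_inl, Pi.sub_apply, Pi.add_apply, Function.comp]; abel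
      · simp
    E0 := by
      intro x hx
      have : ∃ v ∈ JJ β α L, ∃ w, x = v + w * (α i - 1) := by
        have e : ({β} ∪ {x | ∃ j ∈ i :: L, x = α j - 1} : Set A) =
          insert (α i - 1) ({β} ∪ {x | ∃ j ∈ L, x = α j - 1}) := by
          ext z
          simp only [List.mem_cons, Set.mem_union, Set.mem_insert_iff, Set.mem_singleton_iff,
            Set.mem_ofPred_eq]
          constructor
          · rintro (h | ⟨j, rfl | h, h'⟩)
            · exact Or.inr (Or.inl h)
            · exact Or.inl h'
            · exact Or.inr (Or.inr ⟨j, h, h'⟩)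
          · rintro (h | h | ⟨j, h, h'⟩)
            · exact Or.inr ⟨i, Or.inl rfl, h⟩
            · exact Or.inl h
            · exact Or.inr ⟨j, Or.inr h, h'⟩
        rw [JJ, e, Submodule.mem_span_insert] at hx
        obtain ⟨w, v, hv, rfl⟩ := hx
        exact ⟨v, hv, w, by rw [add_comm, smul_eq_mul]⟩
      obtain ⟨v, hv, w, rfl⟩ := this
      obtain ⟨x', hx', hx⟩ := K.E0 v hv
      have hd0 : K.deg K.bot = 0 := (K.deg_bot _).2 rfl
      have hs : Hom K.deg 0 (Pi.single K.bot (-w)) := by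
        have := Hom.single (deg := K.deg) K.bot (-w)
        rwa [hd0] at this
      refine ⟨Sum.elim x' (Pi.single K.bot (-w)), hmk 0 _ _ hx' hs, ?_⟩
      simp only [LinearMap.coe_mk, AddHom.coe_mk, Sum.elim_comp_inl, Sum.elim_comp_inr, hx,
        K.d_zero _ hs, K.Φ_bot]
      ext (s | s)
      · by_cases h : s = K.bot
        · subst h; simp [mul_sub]; abel
        · have : (Sum.inl s : K.Cell ⊕ K.Cell) ≠ Sum.inl K.bot := by simpa using h
          simp [h]
      · simp
    S1 := by
      intro e he
      have h1 := K.S1 _ (hl _ _ he)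
      have h2 := hr _ _ he
      have h3 := h2.eq_single K.deg_bot
      set u := (e ∘ Sum.inr) K.bot
      have hmono : JJ β α L ≤ JJ β α (i :: L) := by
        apply Submodule.span_mono
        rintro z (h | ⟨j, h, h'⟩)
        · exact Or.inl h
        · exact Or.inr ⟨j, by simp [h], h'⟩
      simp only [LinearMap.coe_mk, AddHom.coe_mk, Sum.elim_inl, h3, K.Φ_bot, Pi.sub_apply,
        Pi.add_apply, Pi.single_eq_same]
      have hz : α i - 1 ∈ JJ β α (i :: L) := Submodule.subset_span (Or.inr ⟨i, by simp, rfl⟩)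
      have := Submodule.smul_mem _ (-u) hz
      have e : K.d (e ∘ Sum.inl) K.bot + u - u * α i = K.d (e ∘ Sum.inl) K.bot + (-u) • (α i - 1) := by
        simp [mul_sub]; abel
      rw [e]
      exact Submodule.add_mem _ (hmono h1) this }

lemma reso_exists (H1 : ∀ y, y * β = 0 → y = 0) (H2 : ∀ i, β * α i = ν i * β)
    (H3 : ∀ i j, α i * α j = α j * α i)
    (H4 : ∀ L i, i ∉ L → ∀ y, y * (1 - α i) ∈ JJ β α L → y ∈ JJ β α L)
    (L : List (Fin k)) (hL : L.Nodup) : Nonempty (Reso β α ν L) := by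
  induction L with
  | nil => exact ⟨resoNil H1 H2 H3⟩
  | cons i L ih =>
    obtain ⟨K⟩ := ih (List.nodup_cons.1 hL).2
    exact ⟨resoCons i L (H4 L i (List.nodup_cons.1 hL).1) K⟩
end
end GQ

namespace GQ
open scoped Pointwise

/-! ### The resolution for the groups -/

/-- group ring -/
abbrev ZG (G : Type) := MonoidAlgebra ℤ G

/-- group elements in the group ring -/
noncomputable abbrev gg {G : Type} (g : G) : ZG G := MonoidAlgebra.single g 1

lemma gg_mul {G : Type} [Group G] (g h : G) : gg (g * h) = gg g * gg h := by
  simp [gg, MonoidAlgebra.single_mul_single]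
lemma gg_one {G : Type} [Group G] : gg (1 : G) = 1 := rfl
lemma gg_pow {G : Type} [Group G] (g : G) (j : ℕ) : gg (g ^ j) = gg g ^ j := by
  simp [gg, MonoidAlgebra.single_pow]
lemma mul_gg_coeff {G : Type} [Group G] (x : ZG G) (g h : G) :
    (x * gg g).coeff h = x.coeff (h * g⁻¹) := by
  simp [gg, MonoidAlgebra.coeff_mul_single_apply]
lemma gg_mul_coeff {G : Type} [Group G] (x : ZG G) (g h : G) :
    (gg g * x).coeff h = x.coeff (g⁻¹ * h) := by
  simp [gg, MonoidAlgebra.coeff_single_mul_apply]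

lemma zg_ext {G : Type} {x y : ZG G} (h : ∀ g, x.coeff g = y.coeff g) : x = y := by
  apply MonoidAlgebra.coeff_injective
  ext g; exact h g

/-- augmentation -/
noncomputable def aug {G : Type} [Group G] : ZG G →ₐ[ℤ] ℤ := MonoidAlgebra.lift ℤ ℤ G 1

lemma aug_gg {G : Type} [Group G] (g : G) : aug (gg g) = 1 := by simp [aug, gg]

/-- restriction of supports -/
noncomputable def prj {G : Type} (p : G → Prop) (x : ZG G) : ZG G :=
  open Classical in MonoidAlgebra.ofCoeff (Finsupp.filter p x.coeff)

lemma prj_coeff {G : Type} (p : G → Prop) [DecidablePred p] (x : ZG G) (g : G) :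
    (prj p x).coeff g = if p g then x.coeff g else 0 := by
  simp [prj, Finsupp.filter_apply]

section
variable {k : ℕ} {n : Fin k → ℕ} [Adm n]

local notation "Γ" => GammaGroup n

/-- the relator `b - 1` -/
noncomputable def gβ (n : Fin k → ℕ) : ZG (GammaGroup n) := gg (gammaB n) - 1
/-- the elements `a i` -/
noncomputable def gα (n : Fin k → ℕ) (i : Fin k) : ZG (GammaGroup n) := gg (gammaA n i)
/-- the elements `a i * N i` -/
noncomputable def gν (n : Fin k → ℕ) (i : Fin k) : ZG (GammaGroup n) :=
  gg (gammaA n i) * ∑ s ∈ Finset.range (n i), gg (gammaB n) ^ s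

lemma H1g (y : ZG Γ) (h : y * gβ n = 0) : y = 0 := by
  have h1 : y * gg (gammaB n) = y := by
    rw [gβ, mul_sub, mul_one] at h; exact sub_eq_zero.1 h
  have h2 : ∀ (j : ℕ) (g : Γ), y.coeff (g * gammaB n ^ j) = y.coeff g := by
    intro j
    induction j with
    | zero => intro g; simp
    | succ j ih =>
      intro g
      have := mul_gg_coeff y (gammaB n) (g * gammaB n ^ (j + 1))
      rw [h1] at this
      rw [this, ← ih g]
      congr 1
      rw [pow_succ]; group
  apply zg_ext
  intro g
  by_contra hg
  have hinj : Function.Injective (fun j : ℕ => g * gammaB n ^ j) := by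
    intro i j hij
    have hij : gammaB n ^ i = gammaB n ^ j := mul_left_cancel hij
    have : gammaB n ^ (i : ℤ) = gammaB n ^ (j : ℤ) := by simpa using hij
    exact_mod_cast b_zpow_inj this
  refine Set.infinite_range_of_injective hinj (y.coeff.support.finite_toSet.subset ?_)
  rintro _ ⟨j, rfl⟩
  simp only [Finset.mem_coe, Finsupp.mem_support_iff]
  rw [h2]; simpa using hg

lemma H2g (i : Fin k) : gβ n * gα n i = gν n i * gβ n := by
  rw [gβ, gα, gν, mul_assoc, geom_sum_mul, sub_mul, ← gg_mul, b_a, gg_mul, gg_pow]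
  rw [mul_sub, one_mul, mul_one]

lemma H3g (i j : Fin k) : gα n i * gα n j = gα n j * gα n i := by
  rw [gα, gα, ← gg_mul, rel2, gg_mul]

lemma prj_mul (i : Fin k) (M : ℤ) (x : ZG Γ) (g : Γ) (hg : tm g i = 0) :
    prj (fun g => tm g i < M) (x * gg g) = prj (fun g => tm g i < M) x * gg g := by
  classical
  apply zg_ext
  intro h
  rw [mul_gg_coeff, prj_coeff, prj_coeff, mul_gg_coeff, t_mul, t_inv]
  simp [hg]

lemma prj_sub (p : Γ → Prop) (x y : ZG Γ) : prj p (x - y) = prj p x - prj p y := by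
  classical
  apply zg_ext; intro h
  rw [MonoidAlgebra.coeff_sub, Finsupp.sub_apply, prj_coeff, prj_coeff, prj_coeff,
    MonoidAlgebra.coeff_sub, Finsupp.sub_apply]
  split_ifs <;> simp

lemma prj_add (p : Γ → Prop) (x y : ZG Γ) : prj p (x + y) = prj p x + prj p y := by
  classical
  apply zg_ext; intro h
  rw [MonoidAlgebra.coeff_add, Finsupp.add_apply, prj_coeff, prj_coeff, prj_coeff,
    MonoidAlgebra.coeff_add, Finsupp.add_apply]
  split_ifs <;> simp

lemma H4g (L : List (Fin k)) (i : Fin k) (hi : i ∉ L) (y : ZG Γ)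
    (h : y * (1 - gα n i) ∈ JJ (gβ n) (gα n) L) : y ∈ JJ (gβ n) (gα n) L := by
  classical
  set J := JJ (gβ n) (gα n) L with hJ
  have hJb : gβ n ∈ J := Submodule.subset_span (Or.inl rfl)
  have hJa : ∀ j ∈ L, gα n j - 1 ∈ J := fun j hj => Submodule.subset_span (Or.inr ⟨j, hj, rfl⟩)
  have hJi : ∀ x ∈ J, x * gα n i ∈ J := by
    intro x hx
    induction hx using Submodule.span_induction with
    | mem x hx =>
      rcases hx with rfl | ⟨j, hj, rfl⟩
      · rw [H2g]; exact J.smul_mem _ hJb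
      · rw [sub_mul, H3g, one_mul, ← mul_sub_one]; exact J.smul_mem _ (hJa j hj)
    | zero => simp
    | add x y _ _ hx hy => rw [add_mul]; exact J.add_mem hx hy
    | smul r x _ hx => rw [smul_eq_mul, mul_assoc]; exact J.smul_mem r hx
  have hP : ∀ M, ∀ x ∈ J, prj (fun g => tm g i < M) x ∈ J := by
    intro M x hx
    have aux : ∀ g : Γ, tm g i = 0 → gg g - 1 ∈ J →
        ∀ r : ZG Γ, prj (fun g => tm g i < M) (r * (gg g - 1)) ∈ J := by
      intro g hg hg' r
      have e : r * (gg g - 1) = r * gg g - r := by rw [mul_sub, mul_one]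
      rw [e, prj_sub, prj_mul i M r g hg, ← mul_sub_one]
      exact J.smul_mem _ hg'
    have key : ∀ r : ZG Γ, prj (fun g => tm g i < M) (r * x) ∈ J := by
      induction hx using Submodule.span_induction with
      | mem x hx =>
        rcases hx with rfl | ⟨j, hj, rfl⟩
        · exact aux _ (by rw [t_b]; rfl) hJb
        · refine aux _ ?_ (hJa j hj)
          rw [t_a]
          have : i ≠ j := by rintro rfl; exact hi hj
          simp [this]
      | zero =>
        intro r
        have : prj (fun g : Γ => tm g i < M) (r * 0) = 0 := by
          apply zg_ext; intro g; rw [prj_coeff]; simp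
        rw [this]; exact J.zero_mem
      | add x y _ _ hx hy => intro r; rw [mul_add, prj_add]; exact J.add_mem (hx r) (hy r)
      | smul s x _ hx => intro r; rw [smul_eq_mul, ← mul_assoc]; exact hx _
    simpa using key 1
  have hm : ∀ m : ℕ, y - y * gα n i ^ m ∈ J := by
    intro m
    induction m with
    | zero => simp
    | succ m ih =>
      have e : y - y * gα n i ^ (m + 1) = y * (1 - gα n i) + (y - y * gα n i ^ m) * gα n i := by
        rw [pow_succ]; noncomm_ring
      rw [e]
      exact J.add_mem h (hJi _ ih)
  obtain ⟨M, hM⟩ : ∃ M : ℤ, ∀ g ∈ y.coeff.support, |tm g i| < M := by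
    obtain ⟨M, hM⟩ := (y.coeff.support.image (fun g => |tm g i|)).bddAbove
    exact ⟨M + 1, fun g hg => Int.lt_add_one_of_le (hM (Finset.mem_image_of_mem _ hg))⟩
  have hfin : prj (fun g => tm g i < M) (y - y * gα n i ^ (2 * M).toNat) = y := by
    apply zg_ext
    intro g
    rw [prj_coeff, MonoidAlgebra.coeff_sub, Finsupp.sub_apply, gα, ← gg_pow, mul_gg_coeff]
    by_cases hg : y.coeff g = 0
    · rw [hg]
      split_ifs with h1
      · have : y.coeff (g * (gammaA n i ^ (2 * M).toNat)⁻¹) = 0 := by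
          by_contra h2
          have h3 := hM _ (Finsupp.mem_support_iff.2 h2)
          rw [t_mul, t_inv, t_pow, t_a] at h3
          simp at h3
          have := abs_lt.1 h3
          omega
        rw [this]; simp
      · rfl
    · have h1 := hM g (Finsupp.mem_support_iff.2 hg)
      have h1' := abs_lt.1 h1
      rw [if_pos h1'.2]
      have : y.coeff (g * (gammaA n i ^ (2 * M).toNat)⁻¹) = 0 := by
        by_contra h2
        have h3 := hM _ (Finsupp.mem_support_iff.2 h2)
        rw [t_mul, t_inv, t_pow, t_a] at h3
        simp at h3
        have := abs_lt.1 h3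
        omega
      rw [this]; simp
  rw [← hfin]
  exact hP M _ (hm _)

lemma mem_JJ_of_aug (x : ZG Γ) (h : aug x = 0) : x ∈ JJ (gβ n) (gα n) (List.finRange k) := by
  set J := JJ (gβ n) (gα n) (List.finRange k)
  have hJb : gg (gammaB n) - 1 ∈ J := Submodule.subset_span (Or.inl rfl)
  have hJa : ∀ j, gg (gammaA n j) - 1 ∈ J := fun j =>
    Submodule.subset_span (Or.inr ⟨j, by simp, rfl⟩)
  have hinv : ∀ g : Γ, gg g - 1 ∈ J → gg g⁻¹ - 1 ∈ J := by
    intro g hg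
    have := J.smul_mem (- gg g⁻¹) hg
    have e : (- gg g⁻¹) • (gg g - 1) = gg g⁻¹ - 1 := by
      rw [smul_eq_mul, mul_sub, neg_mul, ← gg_mul, inv_mul_cancel, gg_one]; noncomm_ring
    rwa [e] at this
  have hmul : ∀ g h : Γ, gg g - 1 ∈ J → gg h - 1 ∈ J → gg (g * h) - 1 ∈ J := by
    intro g h hg hh
    have := J.add_mem (J.smul_mem (gg g) hh) hg
    have e : gg g • (gg h - 1) + (gg g - 1) = gg (g * h) - 1 := by
      rw [smul_eq_mul, gg_mul]; noncomm_ring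
    rwa [e] at this
  have hall : ∀ g : Γ, gg g - 1 ∈ J := by
    intro g
    induction g using gind with
    | h1 => rw [gg_one, sub_self]; exact J.zero_mem
    | ha i g ih => exact hmul _ _ (hJa i) ih
    | ha' i g ih => exact hmul _ _ (hinv _ (hJa i)) ih
    | hb g ih => exact hmul _ _ hJb ih
    | hb' g ih => exact hmul _ _ (hinv _ hJb) ih
  have key : ∀ x : ZG Γ, x - algebraMap ℤ (ZG Γ) (aug x) ∈ J := by
    intro x
    induction x using MonoidAlgebra.induction_linear with
    | zero => simp
    | add x y hx hy =>
      rw [map_add, map_add, add_sub_add_comm]; exact J.add_mem hx hy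
    | single g r =>
      have := J.smul_mem (algebraMap ℤ (ZG Γ) r) (hall g)
      have e1 : MonoidAlgebra.single g r = algebraMap ℤ (ZG Γ) r * gg g := by
        rw [← Algebra.smul_def, gg, MonoidAlgebra.smul_single]; simp
      have e2 : aug (MonoidAlgebra.single g r) = r := by simp [aug]
      rw [e2, e1]
      rw [smul_eq_mul, mul_sub, mul_one] at this
      exact this
  have := key x
  rwa [h, map_zero, sub_zero] at this

lemma aug_of_mem_JJ (x : ZG Γ) (h : x ∈ JJ (gβ n) (gα n) (List.finRange k)) : aug x = 0 := by
  induction h using Submodule.span_induction with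
  | mem x hx =>
    rcases hx with rfl | ⟨j, hj, rfl⟩
    · rw [gβ, map_sub, map_one, aug_gg, sub_self]
    · rw [gα, map_sub, map_one, aug_gg, sub_self]
  | zero => simp
  | add x y _ _ hx hy => rw [map_add, hx, hy, add_zero]
  | smul r x _ hx => rw [smul_eq_mul, map_mul, hx, mul_zero]

lemma greso_exists (n : Fin k → ℕ) [Adm n] :
    Nonempty (Reso (gβ n) (gα n) (gν n) (List.finRange k)) :=
  reso_exists H1g H2g H3g H4g _ (List.nodup_finRange k)

end
end GQ

namespace GQ
open scoped Pointwise

/-! ### Controlled chain maps -/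

/-- Finite free resolutions -/
structure FR (G : Type) [Group G] where
  Cell : Type
  ft : Fintype Cell
  de : DecidableEq Cell
  deg : Cell → ℕ
  d : (Cell → ZG G) →ₗ[ZG G] (Cell → ZG G)
  top : Cell
  bot : Cell
  dim : ℕ
  dd : ∀ c, d (d c) = 0
  d_hom : ∀ q c, Hom deg (q + 1) c → Hom deg q (d c)
  d_zero : ∀ c, Hom deg 0 c → d c = 0
  deg_bot : ∀ σ, deg σ = 0 ↔ σ = bot
  deg_le : ∀ σ, deg σ ≤ dim
  deg_top : ∀ σ, deg σ = dim ↔ σ = top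
  E1 : ∀ q c, Hom deg (q + 1) c → d c = 0 → ∃ e, Hom deg (q + 2) e ∧ d e = c
  E0 : ∀ x, aug x = 0 → ∃ e, Hom deg 1 e ∧ d e = Pi.single bot x
  S1 : ∀ e, Hom deg 1 e → aug (d e bot) = 0

attribute [instance] FR.ft FR.de

/-- chains -/
abbrev FR.C {G : Type} [Group G] (X : FR G) := X.Cell → ZG G

/-- basis -/
noncomputable abbrev bas {G : Type} [Group G] {Cell : Type} [DecidableEq Cell] (σ : Cell) (x : G) :
    Cell → ZG G := Pi.single σ (gg x)

lemma bas_smul {G : Type} [Group G] {Cell : Type} [DecidableEq Cell] (σ : Cell) (g x : G) :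
    gg g • (bas σ x : Cell → ZG G) = bas σ (g * x) := by
  rw [bas, bas, gg_mul, ← Pi.single_smul, smul_eq_mul]

/-- additive induction on chains -/
lemma chain_ind {G : Type} [Group G] {Cell : Type} [Fintype Cell] [DecidableEq Cell]
    {P : (Cell → ZG G) → Prop} (h0 : P 0) (hadd : ∀ c e, P c → P e → P (c + e))
    (hneg : ∀ c, P c → P (-c)) (hb : ∀ σ x, P (bas σ x)) (c : Cell → ZG G) : P c := by
  rw [← Finset.univ_sum_single c]
  refine Finset.sum_induction _ P hadd h0 (fun σ _ => ?_)
  induction c σ using MonoidAlgebra.induction_linear with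
  | zero => simpa using h0
  | add x y hx hy => rw [Pi.single_add]; exact hadd _ _ hx hy
  | single g r =>
    have e : ∀ r : ℤ, (Pi.single σ (MonoidAlgebra.single g r) : Cell → ZG G) = r • bas σ g := by
      intro r
      ext1 τ
      by_cases h : τ = σ
      · subst h; simp [gg]
      · simp [h]
    rw [e]
    induction r using Int.induction_on with
    | zero => simpa using h0
    | succ i ih => rw [add_smul, one_smul]; exact hadd _ _ ih (hb _ _)
    | pred i ih => rw [sub_smul, one_smul, sub_eq_add_neg]; exact hadd _ _ ih (hneg _ (hb _ _))

lemma addhom_ext {G : Type} [Group G] {Cell : Type} [Fintype Cell] [DecidableEq Cell] {M : Type}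
    [AddCommGroup M] {f g : (Cell → ZG G) →+ M} (h : ∀ σ x, f (bas σ x) = g (bas σ x)) :
    f = g := by
  apply AddMonoidHom.ext
  intro c
  induction c using chain_ind with
  | h0 => simp
  | hadd c e hc he => rw [map_add, map_add, hc, he]
  | hneg c hc => rw [map_neg, map_neg, hc]
  | hb σ x => exact h σ x

lemma extend_exists {G : Type} [Group G] {Cell : Type} [Fintype Cell] [DecidableEq Cell] {M : Type}
    [AddCommGroup M] (val : Cell → G → M) :
    ∃ f : (Cell → ZG G) →+ M, ∀ σ x, f (bas σ x) = val σ x := by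
  refine ⟨∑ σ, ((Finsupp.liftAddHom (fun x : G => (zmultiplesHom M (val σ x)))).comp
    (MonoidAlgebra.coeffAddEquiv.toAddMonoidHom)).comp (Pi.evalAddMonoidHom _ σ), fun σ x => ?_⟩
  rw [AddMonoidHom.finsetSum_apply, Finset.sum_eq_single σ]
  · simp [bas, gg, MonoidAlgebra.coeffAddEquiv]
  · intro τ _ h
    simp [bas, h]
  · simp

/-- controlled maps -/
def Ctrl {G H : Type} [Group G] [Group H] (X : FR G) (Y : FR H) (F : G → H) (f : X.C →+ Y.C) :
    Prop :=
  ∀ c : X.C, ∃ S : Set Y.C, S.Finite ∧ ∀ g : G, gg (F g)⁻¹ • f (gg g • c) ∈ S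

section
variable {G H K : Type} [Group G] [Group H] [Group K] {X : FR G} {Y : FR H} {Z : FR K}

lemma ctrl_of_basis {F : G → H} (hF : Born F) {f : X.C →+ Y.C}
    (h : ∀ σ, ∃ S : Set Y.C, S.Finite ∧ ∀ g : G, gg (F g)⁻¹ • f (bas σ g) ∈ S) : Ctrl X Y F f := by
  intro c
  induction c using chain_ind with
  | h0 => exact ⟨{0}, Set.finite_singleton _, fun g => by simp⟩
  | hadd c e hc he =>
    obtain ⟨S, hS, h1⟩ := hc
    obtain ⟨T, hT, h2⟩ := he
    refine ⟨S + T, hS.add hT, fun g => ?_⟩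
    rw [smul_add, map_add, smul_add]
    exact Set.add_mem_add (h1 g) (h2 g)
  | hneg c hc =>
    obtain ⟨S, hS, h1⟩ := hc
    refine ⟨-S, hS.neg, fun g => ?_⟩
    rw [smul_neg, map_neg, smul_neg]
    exact Set.neg_mem_neg.2 (h1 g)
  | hb σ x =>
    obtain ⟨S, hS, h1⟩ := h σ
    obtain ⟨E, hE, h2⟩ := hF {x} (Set.finite_singleton x)
    refine ⟨Set.image2 (fun e s => gg e • s) E S, hE.image2 _ hS, fun g => ?_⟩
    rw [bas_smul]
    refine ⟨_, h2 g (g * x) (by simp), _, h1 (g * x), ?_⟩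
    simp only
    rw [smul_smul, ← gg_mul]
    congr 3
    group

lemma Ctrl.comp {F : G → H} {F' : H → K} {f : X.C →+ Y.C} {f' : Y.C →+ Z.C}
    (h : Ctrl X Y F f) (h' : Ctrl Y Z F' f') : Ctrl X Z (F' ∘ F) (f'.comp f) := by
  intro c
  obtain ⟨S, hS, h1⟩ := h c
  choose T hT h2 using h'
  refine ⟨⋃ u ∈ S, T u, hS.biUnion fun u _ => hT u, fun g => ?_⟩
  refine Set.mem_biUnion (h1 g) ?_
  have := h2 (gg (F g)⁻¹ • f (gg g • c)) (F g)
  rw [smul_smul, ← gg_mul, mul_inv_cancel, gg_one, one_smul] at this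
  exact this

lemma Ctrl.add {F : G → H} {f f' : X.C →+ Y.C} (h : Ctrl X Y F f) (h' : Ctrl X Y F f') :
    Ctrl X Y F (f + f') := by
  intro c
  obtain ⟨S, hS, h1⟩ := h c
  obtain ⟨T, hT, h2⟩ := h' c
  refine ⟨S + T, hS.add hT, fun g => ?_⟩
  rw [AddMonoidHom.add_apply, smul_add]
  exact Set.add_mem_add (h1 g) (h2 g)

lemma Ctrl.neg {F : G → H} {f : X.C →+ Y.C} (h : Ctrl X Y F f) : Ctrl X Y F (-f) := by
  intro c
  obtain ⟨S, hS, h1⟩ := h c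
  refine ⟨-S, hS.neg, fun g => ?_⟩
  rw [AddMonoidHom.neg_apply, smul_neg]
  exact Set.neg_mem_neg.2 (h1 g)

lemma Ctrl.sub {F : G → H} {f f' : X.C →+ Y.C} (h : Ctrl X Y F f) (h' : Ctrl X Y F f') :
    Ctrl X Y F (f - f') := by
  rw [sub_eq_add_neg]; exact h.add h'.neg

lemma Ctrl.close {F F' : G → H} (hF : Close F' F) {f : X.C →+ Y.C} (h : Ctrl X Y F f) :
    Ctrl X Y F' f := by
  intro c
  obtain ⟨S, hS, h1⟩ := h c
  obtain ⟨E, hE, h2⟩ := hF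
  refine ⟨Set.image2 (fun e s => gg e • s) E S, hE.image2 _ hS, fun g => ?_⟩
  refine ⟨_, h2 g, _, h1 g, ?_⟩
  simp only
  rw [smul_smul, ← gg_mul]
  congr 3
  group

lemma Ctrl.lin (f : X.C →ₗ[ZG G] X.C) : Ctrl X X id f.toAddMonoidHom := by
  intro c
  refine ⟨{f c}, Set.finite_singleton _, fun g => ?_⟩
  simp [smul_smul, gg, MonoidAlgebra.single_mul_single, ← MonoidAlgebra.one_def]

/-- one step of the construction -/
lemma one_step {F : G → H} (hF : Born F) {θ ω : X.C →+ Y.C} (hθ : Ctrl X Y F θ)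
    (hω : Ctrl X Y F ω) (q q' : ℕ)
    (hfill : ∀ σ x, X.deg σ = q → ∃ v, Hom Y.deg q' v ∧ Y.d v = ω (bas σ x)) :
    ∃ θ' : X.C →+ Y.C, Ctrl X Y F θ' ∧ (∀ p c, p ≠ q → Hom X.deg p c → θ' c = θ c) ∧
      ∀ c, Hom X.deg q c → Hom Y.deg q' (θ' c) ∧ Y.d (θ' c) = ω c := by
  classical
  have hch : ∀ w : Y.C, ∃ v, (∃ v, Hom Y.deg q' v ∧ Y.d v = w) → Hom Y.deg q' v ∧ Y.d v = w := by
    intro w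
    by_cases h : ∃ v, Hom Y.deg q' v ∧ Y.d v = w
    · exact ⟨h.choose, fun _ => h.choose_spec⟩
    · exact ⟨0, fun h' => absurd h' h⟩
  choose ch hch using hch
  obtain ⟨θ', hθ'⟩ := extend_exists (fun (σ : X.Cell) (x : G) => if X.deg σ = q then
    gg (F x) • ch (gg (F x)⁻¹ • ω (bas σ x)) else θ (bas σ x))
  have hval : ∀ σ x, X.deg σ = q → Hom Y.deg q' (θ' (bas σ x)) ∧ Y.d (θ' (bas σ x)) = ω (bas σ x) := by
    intro σ x hσ
    rw [hθ', if_pos hσ]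
    obtain ⟨v, hv, hv'⟩ := hfill σ x hσ
    have := hch (gg (F x)⁻¹ • ω (bas σ x)) ⟨gg (F x)⁻¹ • v, hv.smul _, by rw [map_smul, hv']⟩
    refine ⟨this.1.smul _, ?_⟩
    rw [map_smul, this.2, smul_smul, ← gg_mul, mul_inv_cancel, gg_one, one_smul]
  refine ⟨θ', ?_, ?_, ?_⟩
  · apply ctrl_of_basis hF
    intro σ
    by_cases hσ : X.deg σ = q
    · obtain ⟨S, hS, h1⟩ := hω (bas σ 1)
      refine ⟨ch '' S, hS.image _, fun g => ?_⟩
      rw [hθ', if_pos hσ, smul_smul, ← gg_mul, inv_mul_cancel, gg_one, one_smul]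
      refine ⟨_, h1 g, ?_⟩
      rw [bas_smul, mul_one]
    · obtain ⟨S, hS, h1⟩ := hθ (bas σ 1)
      refine ⟨S, hS, fun g => ?_⟩
      have := h1 g
      rw [bas_smul, mul_one] at this
      rwa [hθ', if_neg hσ]
  · intro p c hp hc
    have key : ∀ σ, θ' (Pi.single σ (c σ)) = θ (Pi.single σ (c σ)) := by
      intro σ
      by_cases hσ : X.deg σ = q
      · have : c σ = 0 := hc σ (by rw [hσ]; exact Ne.symm hp)
        rw [this]; simp
      · generalize c σ = y
        have : θ'.comp (AddMonoidHom.single _ σ) = θ.comp (AddMonoidHom.single _ σ) := by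
          apply MonoidAlgebra.addMonoidHom_ext
          intro g r
          have e : (Pi.single σ (MonoidAlgebra.single g r) : X.C) = r • bas σ g := by
            ext1 τ
            by_cases h : τ = σ
            · subst h; simp [gg]
            · simp [h]
          simp only [AddMonoidHom.comp_apply, AddMonoidHom.single_apply, e, map_zsmul]
          rw [hθ', if_neg hσ]
        exact DFunLike.congr_fun this y
    rw [← Finset.univ_sum_single c, map_sum, map_sum]
    exact Finset.sum_congr rfl fun σ _ => key σ
  · intro c hc
    have key : ∀ σ, Hom Y.deg q' (θ' (Pi.single σ (c σ))) ∧
        Y.d (θ' (Pi.single σ (c σ))) = ω (Pi.single σ (c σ)) := by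
      intro σ
      by_cases hσ : X.deg σ = q
      · induction c σ using MonoidAlgebra.induction_linear with
        | zero => simp [Hom.zero]
        | add x y hx hy =>
          rw [Pi.single_add, map_add, map_add, map_add, hx.2, hy.2]
          exact ⟨hx.1.add hy.1, rfl⟩
        | single g r =>
          have e : (Pi.single σ (MonoidAlgebra.single g r) : X.C) = r • bas σ g := by
            ext1 τ
            by_cases h : τ = σ
            · subst h; simp [gg]
            · simp [h]
          rw [e, map_zsmul, map_zsmul, map_zsmul, (hval σ g hσ).2]
          refine ⟨?_, rfl⟩
          intro τ hτ
          simp [(hval σ g hσ).1 τ hτ]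
      · have : c σ = 0 := hc σ hσ
        rw [this]; simp [Hom.zero]
    rw [← Finset.univ_sum_single c, map_sum, map_sum, map_sum]
    refine ⟨?_, Finset.sum_congr rfl fun σ _ => (key σ).2⟩
    exact Finset.sum_induction _ (Hom Y.deg q') (fun _ _ => Hom.add) Hom.zero (fun σ _ => (key σ).1)
end
end GQ

namespace GQ
open scoped Pointwise

/-! ### Chain maps and homotopies -/

section
variable {G H K : Type} [Group G] [Group H] [Group K] {X : FR G} {Y : FR H} {Z : FR K}

lemma hom_ind {P : X.C → Prop} (h0 : P 0) (hadd : ∀ c e, P c → P e → P (c + e))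
    (h : ∀ q c, Hom X.deg q c → P c) (c : X.C) : P c := by
  rw [← Finset.univ_sum_single c]
  exact Finset.sum_induction _ P hadd h0 (fun σ _ => h _ _ (Hom.single σ _))

lemma Ctrl.comp_d {F : G → H} {f : X.C →+ Y.C} (h : Ctrl X Y F f) :
    Ctrl X Y F (f.comp X.d.toAddMonoidHom) :=
  (Ctrl.lin X.d).comp h

lemma fill0 {w : Y.C} (hw : Hom Y.deg 0 w) (ha : aug (w Y.bot) = 0) :
    ∃ v, Hom Y.deg 1 v ∧ Y.d v = w := by
  obtain ⟨e, h1, h2⟩ := Y.E0 _ ha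
  refine ⟨e, h1, ?_⟩
  rw [h2]; exact (Hom.eq_single hw Y.deg_bot).symm

lemma chain_map_aux {F : G → H} (hF : Born F) (q : ℕ) : ∃ f : X.C →+ Y.C, Ctrl X Y F f ∧
    (∀ p ≤ q, ∀ c, Hom X.deg p c → Hom Y.deg p (f c) ∧ Y.d (f c) = f (X.d c)) ∧
    (∀ c, Hom X.deg 0 c → aug (f c Y.bot) = aug (c X.bot)) := by
  induction q with
  | zero =>
    obtain ⟨f, hf⟩ := extend_exists (fun (σ : X.Cell) (x : G) =>
      if σ = X.bot then (bas Y.bot (F x) : Y.C) else 0)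
    have hH : ∀ c, Hom Y.deg 0 (f c) := by
      intro c
      induction c using chain_ind with
      | h0 => rw [map_zero]; exact Hom.zero
      | hadd c e hc he => rw [map_add]; exact hc.add he
      | hneg c hc => rw [map_neg]; exact hc.neg
      | hb σ x =>
        rw [hf]
        split_ifs
        · have := Hom.single (deg := Y.deg) Y.bot (gg (F x))
          rwa [(Y.deg_bot Y.bot).2 rfl] at this
        · exact Hom.zero
    have hA : ∀ c, aug (f c Y.bot) = aug (c X.bot) := by
      intro c
      induction c using chain_ind with
      | h0 => simp
      | hadd c e hc he => rw [map_add, Pi.add_apply, Pi.add_apply, map_add, map_add, hc, he]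
      | hneg c hc => rw [map_neg, Pi.neg_apply, Pi.neg_apply, map_neg, map_neg, hc]
      | hb σ x =>
        rw [hf]
        split_ifs with h
        · subst h; simp [bas, aug_gg]
        · simp [bas, Ne.symm h]
    refine ⟨f, ?_, ?_, fun c _ => hA c⟩
    · apply ctrl_of_basis hF
      intro σ
      by_cases h : σ = X.bot
      · refine ⟨{bas Y.bot 1}, Set.finite_singleton _, fun g => ?_⟩
        rw [hf, if_pos h, bas_smul, inv_mul_cancel]; rfl
      · refine ⟨{0}, Set.finite_singleton _, fun g => ?_⟩
        rw [hf, if_neg h, smul_zero]; rfl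
    · intro p hp c hc
      obtain rfl : p = 0 := by omega
      refine ⟨hH c, ?_⟩
      rw [X.d_zero c hc, map_zero, Y.d_zero _ (hH c)]
  | succ q ih =>
    obtain ⟨f, h1, h2, h3⟩ := ih
    have hfill : ∀ σ x, X.deg σ = q + 1 → ∃ v, Hom Y.deg (q + 1) v ∧
        Y.d v = (f.comp X.d.toAddMonoidHom) (bas σ x) := by
      intro σ x hσ
      have hb : Hom X.deg (q + 1) (bas σ x : X.C) := by
        rw [← hσ]; exact Hom.single _ _
      have hd := X.d_hom _ _ hb
      obtain ⟨h4, h5⟩ := h2 q le_rfl _ hd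
      rw [X.dd, map_zero] at h5
      change ∃ v, Hom Y.deg (q + 1) v ∧ Y.d v = f (X.d (bas σ x))
      cases q with
      | zero =>
        apply fill0 h4
        rw [h3 _ hd]
        exact X.S1 _ hb
      | succ q => exact Y.E1 _ _ h4 h5
    obtain ⟨f', g1, g2, g3⟩ := one_step hF h1 h1.comp_d (q + 1) (q + 1) hfill
    refine ⟨f', g1, ?_, ?_⟩
    · intro p hp c hc
      by_cases hpq : p = q + 1
      · subst hpq
        refine ⟨(g3 c hc).1, ?_⟩
        rw [(g3 c hc).2, g2 q _ (by omega) (X.d_hom _ _ hc)]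
        rfl
      · rw [g2 p c hpq hc]
        obtain ⟨h4, h5⟩ := h2 p (by omega) c hc
        refine ⟨h4, ?_⟩
        rw [h5]
        cases p with
        | zero => rw [X.d_zero c hc]; simp
        | succ p => rw [g2 p _ (by omega) (X.d_hom _ _ hc)]
    · intro c hc
      rw [g2 0 c (by omega) hc, h3 c hc]

/-- Controlled chain maps -/
structure CMap (X : FR G) (Y : FR H) (F : G → H) (f : X.C →+ Y.C) : Prop where
  ctrl : Ctrl X Y F f
  hom : ∀ q c, Hom X.deg q c → Hom Y.deg q (f c)
  comm : ∀ c, Y.d (f c) = f (X.d c)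
  aug_eq : ∀ c, Hom X.deg 0 c → aug (f c Y.bot) = aug (c X.bot)

lemma hom_big {q : ℕ} (hq : X.dim < q) {c : X.C} (hc : Hom X.deg q c) : c = 0 := by
  ext1 σ
  exact hc σ (by have := X.deg_le σ; omega)

lemma chain_map {F : G → H} (hF : Born F) : ∃ f, CMap X Y F f := by
  obtain ⟨f, h1, h2, h3⟩ := chain_map_aux (X := X) (Y := Y) hF X.dim
  have key : ∀ q c, Hom X.deg q c → Hom Y.deg q (f c) ∧ Y.d (f c) = f (X.d c) := by
    intro q c hc
    by_cases hq : q ≤ X.dim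
    · exact h2 q hq c hc
    · rw [hom_big (by omega) hc]; simp [Hom.zero]
  refine ⟨f, h1, fun q c hc => (key q c hc).1, ?_, h3⟩
  intro c
  induction c using hom_ind with
  | h0 => simp
  | hadd c e hc he => simp only [map_add, hc, he]
  | h q c hc => exact (key q c hc).2

lemma CMap.comp {F : G → H} {F' : H → K} {f : X.C →+ Y.C} {f' : Y.C →+ Z.C}
    (h : CMap X Y F f) (h' : CMap Y Z F' f') : CMap X Z (F' ∘ F) (f'.comp f) where
  ctrl := h.ctrl.comp h'.ctrl
  hom q c hc := h'.hom q _ (h.hom q c hc)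
  comm c := by simp [h'.comm, h.comm]
  aug_eq c hc := by
    rw [AddMonoidHom.comp_apply, h'.aug_eq _ (h.hom 0 c hc), h.aug_eq c hc]

lemma born_id : Born (id : G → G) := fun E hE => ⟨E, hE, fun _ _ h => h⟩

lemma homotopy_aux {φ : X.C →+ X.C} (hφ : Ctrl X X id φ)
    (hom : ∀ q c, Hom X.deg q c → Hom X.deg q (φ c)) (comm : ∀ c, X.d (φ c) = φ (X.d c))
    (ha : ∀ c, Hom X.deg 0 c → aug (φ c X.bot) = 0) (q : ℕ) :
    ∃ h : X.C →+ X.C, Ctrl X X id h ∧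
      ∀ p < q, ∀ c, Hom X.deg p c → Hom X.deg (p + 1) (h c) ∧ X.d (h c) = φ c - h (X.d c) := by
  induction q with
  | zero =>
    refine ⟨0, fun c => ⟨{0}, Set.finite_singleton _, fun g => by simp⟩, fun p hp => by omega⟩
  | succ q ih =>
    obtain ⟨h, h1, h2⟩ := ih
    have hfill : ∀ σ x, X.deg σ = q → ∃ v, Hom X.deg (q + 1) v ∧
        X.d v = (φ - h.comp X.d.toAddMonoidHom) (bas σ x) := by
      intro σ x hσ
      have hb : Hom X.deg q (bas σ x : X.C) := by
        rw [← hσ]; exact Hom.single _ _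
      change ∃ v, Hom X.deg (q + 1) v ∧ X.d v = φ (bas σ x) - h (X.d (bas σ x))
      cases q with
      | zero =>
        rw [X.d_zero _ hb, map_zero, sub_zero]
        exact fill0 (hom 0 _ hb) (ha _ hb)
      | succ q =>
        obtain ⟨h4, h5⟩ := h2 q (by omega) _ (X.d_hom _ _ hb)
        refine X.E1 _ _ ((hom _ _ hb).sub h4) ?_
        rw [map_sub, h5, X.dd, map_zero, comm]
        simp
    obtain ⟨f', g1, g2, g3⟩ := one_step born_id h1 (hφ.sub h1.comp_d) q (q + 1) hfill
    refine ⟨f', g1, ?_⟩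
    intro p hp c hc
    have e : f' (X.d c) = h (X.d c) := by
      cases p with
      | zero => rw [X.d_zero c hc]; simp
      | succ p => rw [g2 p _ (by omega) (X.d_hom _ _ hc)]
    rw [e]
    by_cases hpq : p = q
    · subst hpq
      exact g3 c hc
    · rw [g2 p c hpq hc]
      exact h2 p (by omega) c hc

lemma homotopy {F : G → G} {f : X.C →+ X.C} (hf : CMap X X F f) (hF : Close id F) :
    ∃ h : X.C →+ X.C, Ctrl X X id h ∧ (∀ q c, Hom X.deg q c → Hom X.deg (q + 1) (h c)) ∧
      ∀ c, f c = c + X.d (h c) + h (X.d c) := by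
  have hid : Ctrl X X id (AddMonoidHom.id X.C) := Ctrl.lin LinearMap.id
  obtain ⟨h, h1, h2⟩ := homotopy_aux (φ := f - AddMonoidHom.id X.C)
    ((hf.ctrl.close hF).sub hid)
    (fun q c hc => (hf.hom q c hc).sub hc) (fun c => by simp [hf.comm])
    (fun c hc => by simp [hf.aug_eq c hc]) (X.dim + 1)
  have key : ∀ q c, Hom X.deg q c → Hom X.deg (q + 1) (h c) ∧
      f c = c + X.d (h c) + h (X.d c) := by
    intro q c hc
    by_cases hq : q ≤ X.dim
    · obtain ⟨h3, h4⟩ := h2 q (by omega) c hc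
      refine ⟨h3, ?_⟩
      rw [h4]; simp; abel
    · rw [hom_big (by omega) hc]; simp [Hom.zero]
  refine ⟨h, h1, fun q c hc => (key q c hc).1, ?_⟩
  intro c
  induction c using hom_ind with
  | h0 => simp
  | hadd c e hc he => simp only [map_add]; rw [hc, he]; abel
  | h q c hc => exact (key q c hc).2
end
end GQ

namespace GQ
open scoped Pointwise

/-! ### Locally finite chains -/

section
variable {G H K : Type} [Group G] [Group H] [Group K] {X : FR G} {Y : FR H} {Z : FR K}

/-- coefficients -/
noncomputable def cf (X : FR G) (j : X.Cell × G) : X.C →+ ℤ where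
  toFun c := (c j.1).coeff j.2
  map_zero' := by simp
  map_add' c e := by simp

lemma cf_apply (j : X.Cell × G) (c : X.C) : cf X j c = (c j.1).coeff j.2 := rfl

lemma cf_bas (i j : X.Cell × G) : cf X j (bas i.1 i.2) = open Classical in if i = j then 1 else 0 := by
  classical
  obtain ⟨σ, x⟩ := i
  obtain ⟨τ, y⟩ := j
  simp only [cf_apply, bas, Prod.mk.injEq]
  by_cases h : σ = τ
  · subst h
    simp [gg, Finsupp.single_apply]
  · simp [h, Ne.symm h]

/-- matrix -/
noncomputable def mat (f : X.C →+ Y.C) (i : X.Cell × G) (j : Y.Cell × H) : ℤ :=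
  cf Y j (f (bas i.1 i.2))

/-- column finiteness -/
def ColFin (f : X.C →+ Y.C) : Prop := ∀ j, {i | mat f i j ≠ 0}.Finite

/-- push forward -/
noncomputable def push (f : X.C →+ Y.C) (z : X.Cell × G → ℝ) (j : Y.Cell × H) : ℝ :=
  ∑ᶠ i, z i * (mat f i j : ℝ)

lemma push_eq {f : X.C →+ Y.C} (z : X.Cell × G → ℝ) (j : Y.Cell × H)
    (S : Finset (X.Cell × G)) (hS : ∀ i, mat f i j ≠ 0 → i ∈ S) :
    push f z j = ∑ i ∈ S, z i * (mat f i j : ℝ) := by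
  apply finsum_eq_sum_of_support_subset
  intro i hi
  apply hS
  intro h
  simp [h] at hi

lemma push_add {f g : X.C →+ Y.C} (hf : ColFin f) (hg : ColFin g) (z : X.Cell × G → ℝ) :
    push (f + g) z = push f z + push g z := by
  classical
  ext j
  have e : ∀ i, mat (f + g) i j = mat f i j + mat g i j := fun i => by simp [mat]
  rw [Pi.add_apply, push_eq z j ((hf j).toFinset ∪ (hg j).toFinset),
    push_eq z j ((hf j).toFinset ∪ (hg j).toFinset), push_eq z j ((hf j).toFinset ∪ (hg j).toFinset),
    ← Finset.sum_add_distrib]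
  · refine Finset.sum_congr rfl fun i _ => ?_
    rw [e]; push_cast; ring
  · intro i hi; simp [hi]
  · intro i hi; simp [hi]
  · intro i hi
    rw [e] at hi
    simp only [Finset.mem_union, Set.Finite.mem_toFinset, Set.mem_ofPred_eq]
    by_contra hc
    push Not at hc
    rw [hc.1, hc.2] at hi
    exact hi rfl

lemma push_id (z : X.Cell × G → ℝ) : push (AddMonoidHom.id X.C) z = z := by
  classical
  ext j
  have e : ∀ i, mat (AddMonoidHom.id X.C) i j = if i = j then 1 else 0 := fun i => by
    rw [mat]; simp only [AddMonoidHom.id_apply]; rw [cf_bas]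
  rw [push_eq z j {j}]
  · simp [e]
  · intro i hi
    rw [e] at hi
    by_contra hc
    simp at hc
    simp [hc] at hi

lemma mat_expand {f : X.C →+ Y.C} (j : Y.Cell × H) (J : Finset (X.Cell × G))
    (hJ : ∀ i, mat f i j ≠ 0 → i ∈ J) (c : X.C) :
    cf Y j (f c) = ∑ i ∈ J, cf X i c * mat f i j := by
  classical
  induction c using chain_ind with
  | h0 => simp
  | hadd c e hc he => simp only [map_add, hc, he, add_mul, Finset.sum_add_distrib]
  | hneg c hc => simp only [map_neg, hc, neg_mul, Finset.sum_neg_distrib]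
  | hb σ x =>
    have : ∀ i, cf X i (bas σ x) = if (σ, x) = i then 1 else 0 := fun i => by
      rw [cf_bas (σ, x) i]
    simp only [this, ite_mul, one_mul, zero_mul, Finset.sum_ite_eq]
    split_ifs with h
    · rfl
    · by_contra hc
      exact h (hJ _ hc)

lemma push_comp {f : X.C →+ Y.C} {f' : Y.C →+ Z.C} (hf : ColFin f) (hf' : ColFin f')
    (z : X.Cell × G → ℝ) : push (f'.comp f) z = push f' (push f z) := by
  classical
  ext l
  have hJ : ∀ i, mat f' i l ≠ 0 → i ∈ (hf' l).toFinset := fun i hi => by simpa using hi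
  have e : ∀ i, mat (f'.comp f) i l = ∑ j ∈ (hf' l).toFinset, mat f i j * mat f' j l := by
    intro i
    rw [mat, AddMonoidHom.comp_apply, mat_expand l _ hJ]
    rfl
  rw [push_eq (f := f') _ l _ hJ]
  rw [push_eq z l ((hf' l).toFinset.biUnion fun j => (hf j).toFinset)]
  · have : ∀ j ∈ (hf' l).toFinset, push f z j * (mat f' j l : ℝ) =
        ∑ i ∈ ((hf' l).toFinset.biUnion fun j => (hf j).toFinset),
          z i * (mat f i j : ℝ) * (mat f' j l : ℝ) := by
      intro j hj
      rw [push_eq z j ((hf' l).toFinset.biUnion fun j => (hf j).toFinset), Finset.sum_mul]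
      intro i hi
      rw [Finset.mem_biUnion]
      exact ⟨j, hj, by simpa using hi⟩
    rw [Finset.sum_congr rfl this, Finset.sum_comm]
    refine Finset.sum_congr rfl fun i _ => ?_
    rw [e]
    push_cast
    rw [Finset.mul_sum]
    exact Finset.sum_congr rfl fun j _ => by ring
  · intro i hi
    rw [e] at hi
    obtain ⟨j, hj, hij⟩ := Finset.exists_ne_zero_of_sum_ne_zero hi
    rw [Finset.mem_biUnion]
    exact ⟨j, hj, by simp only [Set.Finite.mem_toFinset, Set.mem_ofPred_eq]; exact left_ne_zero_of_mul hij⟩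

lemma push_zero_right (f : X.C →+ Y.C) : push f 0 = 0 := by
  ext j; simp [push]

lemma Ctrl.mat_bd {F : G → H} {f : X.C →+ Y.C} (h : Ctrl X Y F f) :
    ∃ D : Set H, D.Finite ∧ ∃ V : Set ℤ, V.Finite ∧ ∀ i j, mat f i j ∈ V ∧
      (mat f i j ≠ 0 → (F i.2)⁻¹ * j.2 ∈ D) := by
  classical
  choose S hS h1 using fun σ : X.Cell => h (bas σ 1)
  have key : ∀ i j, mat f i j = ((gg (F i.2)⁻¹ • f (bas i.1 i.2)) j.1).coeff ((F i.2)⁻¹ * j.2) := by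
    intro i j
    rw [Pi.smul_apply, smul_eq_mul, gg_mul_coeff]
    simp [mat, cf_apply]
  have hm : ∀ i : X.Cell × G, gg (F i.2)⁻¹ • f (bas i.1 i.2) ∈ ⋃ σ, S σ := by
    intro i
    have := h1 i.1 i.2
    rw [bas_smul, mul_one] at this
    exact Set.mem_iUnion.2 ⟨_, this⟩
  have hU : (⋃ σ, S σ).Finite := Set.finite_iUnion hS
  have hD : (⋃ c ∈ (⋃ σ, S σ), ⋃ τ : Y.Cell, (((c τ).coeff.support : Finset H) : Set H)).Finite :=
    hU.biUnion fun c _ => Set.finite_iUnion fun τ => Finset.finite_toSet _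
  refine ⟨_, hD, (⋃ c ∈ (⋃ σ, S σ), ⋃ τ : Y.Cell, (fun g => (c τ).coeff g) ''
    (((c τ).coeff.support : Finset H) : Set H)) ∪ {0}, ?_, fun i j => ⟨?_, fun hne => ?_⟩⟩
  · exact (hU.biUnion fun c _ => Set.finite_iUnion fun τ => (Finset.finite_toSet _).image _).union
      (Set.finite_singleton _)
  · by_cases h0 : mat f i j = 0
    · right; exact h0
    · left
      rw [key] at h0 ⊢
      refine Set.mem_biUnion (hm i) (Set.mem_iUnion.2 ⟨j.1, _, ?_, rfl⟩)
      simpa using h0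
  · rw [key] at hne
    refine Set.mem_biUnion (hm i) (Set.mem_iUnion.2 ⟨j.1, ?_⟩)
    simpa using hne

lemma Ctrl.colFin {F : G → H} {f : X.C →+ Y.C} (h : Ctrl X Y F f)
    (hF : ∀ y, (F ⁻¹' {y}).Finite) : ColFin f := by
  intro j
  obtain ⟨D, hD, V, -, hm⟩ := h.mat_bd
  have h1 : (F ⁻¹' ((fun e => j.2 * e⁻¹) '' D)).Finite := by
    have : F ⁻¹' ((fun e => j.2 * e⁻¹) '' D) = ⋃ y ∈ ((fun e => j.2 * e⁻¹) '' D), F ⁻¹' {y} := by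
      ext x; simp [eq_comm]
    rw [this]
    exact (hD.image _).biUnion fun y _ => hF y
  refine ((Set.finite_univ (α := X.Cell)).prod h1).subset ?_
  rintro ⟨σ, x⟩ hx
  refine ⟨trivial, _, (hm _ _).2 hx, ?_⟩
  simp

/-- chains supported on the top cells -/
noncomputable def hat (X : FR G) (z : G → ℝ) (i : X.Cell × G) : ℝ :=
  if i.1 = X.top then z i.2 else 0

/-- top dimensional cycles -/
def Cyc (X : FR G) (z : G → ℝ) : Prop := push X.d.toAddMonoidHom (hat X z) = 0

lemma finite_id (y : G) : ((id : G → G) ⁻¹' {y}).Finite := by simp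

lemma bas_top_hom (x : G) : Hom X.deg X.dim (bas X.top x : X.C) := by
  have := Hom.single (deg := X.deg) X.top (gg x)
  rwa [(X.deg_top X.top).2 rfl] at this

lemma push_hat_zero {f : X.C →+ Y.C} (hf : ∀ x, f (bas X.top x) = 0) (z : G → ℝ) :
    push f (hat X z) = 0 := by
  ext j
  rw [push, finsum_eq_zero_of_forall_eq_zero]; · rfl
  intro i
  rw [hat]
  split_ifs with h
  · rw [mat, h, hf]; simp
  · simp

lemma push_gf {F : G → H} {F' : H → G} (hF : CEd F F') {f : X.C →+ Y.C} {g : Y.C →+ X.C}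
    (hf : CMap X Y F f) (hg : CMap Y X F' g) {z : G → ℝ} (hz : Cyc X z) :
    push (g.comp f) (hat X z) = hat X z := by
  obtain ⟨h, h1, h2, h3⟩ := homotopy (hf.comp hg) hF.l
  have e : g.comp f = AddMonoidHom.id X.C + (X.d.toAddMonoidHom.comp h + h.comp X.d.toAddMonoidHom) := by
    apply AddMonoidHom.ext
    intro c
    rw [h3 c, add_assoc]; rfl
  have hd : ColFin (X := X) (Y := X) X.d.toAddMonoidHom := (Ctrl.lin X.d).colFin finite_id
  have hh : ColFin h := h1.colFin finite_id
  have c1 : ColFin (X.d.toAddMonoidHom.comp h) := (h1.comp (Ctrl.lin X.d)).colFin finite_id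
  have c2 : ColFin (h.comp X.d.toAddMonoidHom) := h1.comp_d.colFin finite_id
  have c3 : ColFin (AddMonoidHom.id X.C) :=
    Ctrl.colFin (F := id) (Ctrl.lin LinearMap.id) finite_id
  have c4 : ColFin (X.d.toAddMonoidHom.comp h + h.comp X.d.toAddMonoidHom) :=
    ((h1.comp (Ctrl.lin X.d)).add h1.comp_d).colFin finite_id
  rw [e, push_add c3 c4, push_add c1 c2, push_id, push_comp hh hd, push_comp hd hh]
  have z1 : push X.d.toAddMonoidHom (hat X z) = 0 := hz
  have z2 : push h (hat X z) = 0 := by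
    apply push_hat_zero
    intro x
    exact hom_big (by omega : X.dim < X.dim + 1) (h2 _ _ (bas_top_hom x))
  rw [z1, z2, push_zero_right, push_zero_right]
  simp

lemma CEd.fin {F : G → H} {F' : H → G} (hF : CEd F F') (y : H) : (F ⁻¹' {y}).Finite := by
  obtain ⟨E, hE, h⟩ := hF.proper {1} (Set.finite_singleton _)
  by_cases hn : (F ⁻¹' {y}).Nonempty
  · obtain ⟨x, hx⟩ := hn
    refine (hE.image (fun e => x * e)).subset ?_
    intro x' hx'
    refine ⟨x⁻¹ * x', h _ _ ?_, by simp⟩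
    simp only [Set.mem_preimage, Set.mem_singleton_iff] at hx hx'
    rw [hx, hx']; simp
  · rw [Set.not_nonempty_iff_eq_empty.1 hn]; exact Set.finite_empty

lemma dim_le {F : G → H} {F' : H → G} (hF : CEd F F') {z : G → ℝ} (hz : Cyc X z) (hz0 : z ≠ 0) :
    X.dim ≤ Y.dim := by
  by_contra hc
  apply hz0
  obtain ⟨f, hf⟩ := chain_map (X := X) (Y := Y) hF.bF
  obtain ⟨g, hg⟩ := chain_map (X := Y) (Y := X) hF.bF'
  have h1 := push_gf hF hf hg hz
  rw [push_comp (hf.ctrl.colFin hF.fin) (hg.ctrl.colFin hF.symm.fin), push_hat_zero, push_zero_right]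
    at h1
  · ext x
    have := congrFun h1 (X.top, x)
    simpa [hat] using this.symm
  · intro x
    exact hom_big (by omega : Y.dim < X.dim) (hf.hom _ _ (bas_top_hom x))

/-- the transfer operator -/
noncomputable def Tr (M : G → H → ℤ) (z : G → ℝ) (y : H) : ℝ := ∑ᶠ x, z x * (M x y : ℝ)

lemma push_hat {f : X.C →+ Y.C} (hf : ∀ q c, Hom X.deg q c → Hom Y.deg q (f c))
    (hd : X.dim = Y.dim) (z : G → ℝ) :
    push f (hat X z) = hat Y (Tr (fun x y => mat f (X.top, x) (Y.top, y)) z) := by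
  ext ⟨τ, y⟩
  rw [hat]
  split_ifs with h
  · simp only at h
    subst h
    have e := finsum_mem_range (f := fun i => hat X z i * (mat f i (Y.top, y) : ℝ))
      (g := fun x : G => (X.top, x)) (fun x x' h => by simpa using h)
    simp only [hat, if_true] at e
    rw [push, Tr, ← e, finsum_mem_def]
    apply finsum_congr
    rintro ⟨σ, x⟩
    by_cases hσ : σ = X.top
    · subst hσ
      rw [Set.indicator_of_mem (show (X.top, x) ∈ _ from Set.mem_range_self x)]
      simp [hat]
    · rw [Set.indicator_of_notMem]
      · simp [hat, hσ]
      · rintro ⟨x', hx'⟩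
        simp only [Prod.mk.injEq] at hx'
        exact hσ hx'.1.symm
  · rw [push, finsum_eq_zero_of_forall_eq_zero]
    intro i
    rw [hat]
    split_ifs with h'
    · have := hf _ _ (bas_top_hom (X := X) i.2)
      have h2 := this τ (fun hh => h ((Y.deg_top τ).1 (by rw [hh, hd])))
      rw [mat, h']
      simp [cf_apply, h2]
    · simp

lemma hat_inj {z z' : G → ℝ} (h : hat X z = hat X z') : z = z' := by
  ext x
  simpa [hat] using congrFun h (X.top, x)

lemma Cyc.tr {F : G → H} {F' : H → G} (hF : CEd F F') {f : X.C →+ Y.C} (hf : CMap X Y F f)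
    (hd : X.dim = Y.dim) {z : G → ℝ} (hz : Cyc X z) :
    Cyc Y (Tr (fun x y => mat f (X.top, x) (Y.top, y)) z) := by
  have c1 := hf.ctrl.colFin hF.fin
  rw [Cyc, ← push_hat hf.hom hd, ← push_comp c1 ((Ctrl.lin Y.d).colFin finite_id)]
  have e : Y.d.toAddMonoidHom.comp f = f.comp X.d.toAddMonoidHom := by
    apply AddMonoidHom.ext
    intro c
    exact hf.comm c
  rw [e, push_comp ((Ctrl.lin X.d).colFin finite_id) c1]
  have z1 : push X.d.toAddMonoidHom (hat X z) = 0 := hz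
  rw [z1, push_zero_right]

/-- Transfer data -/
structure Trans {G H : Type} [Group G] [Group H] (Z1 : (G → ℝ) → Prop) (Z2 : (H → ℝ) → Prop)
    (F' : H → G) (M : G → H → ℤ) : Prop where
  map : ∀ z, Z1 z → Z2 (Tr M z)
  val : ∃ V : Set ℤ, V.Finite ∧ ∀ x y, M x y ∈ V
  supp : ∃ E : Set G, E.Finite ∧ ∀ x y, M x y ≠ 0 → (F' y)⁻¹ * x ∈ E

lemma trans_of_cmap {F : G → H} {F' : H → G} (hF : CEd F F') {f : X.C →+ Y.C} (hf : CMap X Y F f)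
    (hd : X.dim = Y.dim) : Trans (Cyc X) (Cyc Y) F' (fun x y => mat f (X.top, x) (Y.top, y)) := by
  obtain ⟨D, hD, V, hV, hm⟩ := hf.ctrl.mat_bd
  refine ⟨fun z hz => hz.tr hF hf hd, ⟨V, hV, fun x y => (hm _ _).1⟩, ?_⟩
  obtain ⟨E1, hE1, h1⟩ := hF.bF' D hD
  obtain ⟨E2, hE2, h2⟩ := hF.l
  refine ⟨(E2 * E1)⁻¹, (hE2.mul hE1).inv, fun x y hxy => ?_⟩
  have h3 := h1 _ _ ((hm _ _).2 hxy)
  have h4 := Set.mul_mem_mul (h2 x) h3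
  rw [Set.mem_inv]
  simpa [mul_assoc] using h4

lemma transfer {F : G → H} {F' : H → G} (hF : CEd F F') (hd : X.dim = Y.dim) :
    ∃ (M : G → H → ℤ) (M' : H → G → ℤ), Trans (Cyc X) (Cyc Y) F' M ∧
      Trans (Cyc Y) (Cyc X) F M' ∧ (∀ z, Cyc X z → Tr M' (Tr M z) = z) ∧
      (∀ z, Cyc Y z → Tr M (Tr M' z) = z) := by
  obtain ⟨f, hf⟩ := chain_map (X := X) (Y := Y) hF.bF
  obtain ⟨g, hg⟩ := chain_map (X := Y) (Y := X) hF.bF'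
  refine ⟨_, _, trans_of_cmap hF hf hd, trans_of_cmap hF.symm hg hd.symm, ?_, ?_⟩
  · intro z hz
    have h1 := push_gf hF hf hg hz
    rw [push_comp (hf.ctrl.colFin hF.fin) (hg.ctrl.colFin hF.symm.fin), push_hat hf.hom hd,
      push_hat hg.hom hd.symm] at h1
    exact hat_inj h1
  · intro z hz
    have h1 := push_gf hF.symm hg hf hz
    rw [push_comp (hg.ctrl.colFin hF.symm.fin) (hf.ctrl.colFin hF.fin), push_hat hg.hom hd.symm,
      push_hat hf.hom hd] at h1
    exact hat_inj h1

/-- convolution -/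
noncomputable def conv (z : G → ℝ) (y : G) : ZG G →+ ℝ where
  toFun r := r.coeff.sum fun g m => (m : ℝ) * z (y * g⁻¹)
  map_zero' := by simp
  map_add' r s := by
    rw [MonoidAlgebra.coeff_add, Finsupp.sum_add_index']
    · simp
    · intros; push_cast; ring

lemma conv_gg (z : G → ℝ) (y g : G) : conv z y (gg g) = z (y * g⁻¹) := by
  change ((gg g).coeff.sum fun g m => (m : ℝ) * z (y * g⁻¹)) = _
  simp [gg]

lemma push_d_hat (z : G → ℝ) (τ : X.Cell) (y : G) :
    push X.d.toAddMonoidHom (hat X z) (τ, y) = conv z y (X.d (Pi.single X.top 1) τ) := by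
  classical
  set r := X.d (Pi.single X.top 1) τ with hr
  have hm : ∀ x, mat (X := X) (Y := X) X.d.toAddMonoidHom (X.top, x) (τ, y) = r.coeff (x⁻¹ * y) := by
    intro x
    have e : (bas X.top x : X.C) = gg x • Pi.single X.top 1 := by
      rw [← Pi.single_smul, smul_eq_mul, mul_one]
    rw [mat, cf_apply]
    change ((X.d (bas X.top x)) τ).coeff y = _
    rw [e, map_smul, Pi.smul_apply, smul_eq_mul, gg_mul_coeff]
  have hsub : Function.support (fun i => hat X z i *
      (mat (X := X) (Y := X) X.d.toAddMonoidHom i (τ, y) : ℝ)) ⊆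
      ((r.coeff.support.image fun g => (X.top, y * g⁻¹) : Finset (X.Cell × G)) : Set (X.Cell × G)) := by
    rintro ⟨σ, x⟩ hx
    rw [Function.mem_support] at hx
    have hσ : σ = X.top := by
      by_contra hc
      simp [hat, hc] at hx
    subst hσ
    rw [hm] at hx
    simp only [Finset.coe_image, Set.mem_image, Finset.mem_coe, Finsupp.mem_support_iff]
    refine ⟨x⁻¹ * y, ?_, by simp⟩
    intro h0
    simp [h0] at hx
  rw [push, finsum_eq_sum_of_support_subset _ hsub, Finset.sum_image]
  · change _ = r.coeff.sum fun g m => (m : ℝ) * z (y * g⁻¹)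
    rw [Finsupp.sum]
    refine Finset.sum_congr rfl fun g _ => ?_
    rw [hm]
    simp only [hat, if_true]
    rw [mul_comm]
    congr 3
    group
  · intro g _ g' _ h
    simpa using h
end
end GQ

namespace GQ
open scoped Pointwise

/-! ### Top cycles of the groups -/

/-- The explicit top cycles. -/
structure IsZ {k : ℕ} (n : Fin k → ℕ) (z : GammaGroup n → ℝ) : Prop where
  hb : ∀ y, z (y * gammaB n) = z y
  ha : ∀ i y, z y = ∑ s ∈ Finset.range (n i), z (y * (gammaB n ^ s)⁻¹ * (gammaA n i)⁻¹)

section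
variable {k : ℕ} {n : Fin k → ℕ} [Adm n]

/-- resolution of the group -/
noncomputable def frOf (n : Fin k → ℕ) [Adm n]
    (R : Reso (gβ n) (gα n) (gν n) (List.finRange k)) : FR (GammaGroup n) where
  Cell := R.Cell
  ft := R.ft
  de := R.de
  deg := R.deg
  d := R.d
  top := R.top
  bot := R.bot
  dim := k + 1
  dd := R.dd
  d_hom := R.d_hom
  d_zero := R.d_zero
  deg_bot := R.deg_bot
  deg_le σ := by simpa using R.deg_le σ
  deg_top σ := by simpa using R.deg_top σ
  E1 := R.E1
  E0 x hx := R.E0 x (mem_JJ_of_aug x hx)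
  S1 e he := aug_of_mem_JJ _ (R.S1 e he)

lemma fr_exists (n : Fin k → ℕ) [Adm n] : ∃ X : FR (GammaGroup n), X.dim = k + 1 ∧
    ∀ z, Cyc X z ↔ IsZ n z := by
  obtain ⟨R⟩ := greso_exists n
  refine ⟨frOf n R, rfl, ?_⟩
  have hr1 : ∀ σ : (frOf n R).Cell, (frOf n R).d (Pi.single (frOf n R).top 1) σ = 0 ∨
    ∃ r ∈ Rel (gβ n) (gν n) (List.finRange k), (frOf n R).d (Pi.single (frOf n R).top 1) σ = r ∨
    (frOf n R).d (Pi.single (frOf n R).top 1) σ = - r := R.rel1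
  have hr2 : ∀ r ∈ Rel (gβ n) (gν n) (List.finRange k), ∃ σ : (frOf n R).Cell,
    (frOf n R).d (Pi.single (frOf n R).top 1) σ = r ∨
    (frOf n R).d (Pi.single (frOf n R).top 1) σ = - r := R.rel2
  generalize frOf n R = X at hr1 hr2
  intro z
  have h1 : Cyc X z ↔ ∀ τ y, conv z y (X.d (Pi.single X.top 1) τ) = 0 := by
    constructor
    · intro h τ y
      rw [← push_d_hat, h]; rfl
    · intro h
      rw [Cyc]
      ext ⟨τ, y⟩
      rw [push_d_hat, h]; rfl
  have h2 : (∀ τ y, conv z y (X.d (Pi.single X.top 1) τ) = 0) ↔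
      ∀ r ∈ Rel (gβ n) (gν n) (List.finRange k), ∀ y, conv z y r = 0 := by
    constructor
    · intro h r hr y
      obtain ⟨σ, hσ⟩ := hr2 r hr
      have h3 := h σ y
      rcases hσ with hσ | hσ
      · rwa [hσ] at h3
      · rwa [hσ, map_neg, neg_eq_zero] at h3
    · intro h τ y
      rcases hr1 τ with h0 | ⟨r, hr, h0 | h0⟩
      · rw [h0, map_zero]
      · rw [h0, h r hr]
      · rw [h0, map_neg, h r hr, neg_zero]
  rw [h1, h2]
  have e1 : ∀ y, conv z y (gβ n) = z (y * (gammaB n)⁻¹) - z y := by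
    intro y
    rw [gβ, map_sub, conv_gg, ← gg_one, conv_gg, inv_one, mul_one]
  have e2 : ∀ i y, conv z y (1 - gν n i) =
      z y - ∑ s ∈ Finset.range (n i), z (y * (gammaB n ^ s)⁻¹ * (gammaA n i)⁻¹) := by
    intro i y
    rw [gν, map_sub, ← gg_one, conv_gg, inv_one, mul_one, Finset.mul_sum, map_sum]
    congr 1
    refine Finset.sum_congr rfl fun s _ => ?_
    rw [← gg_pow, ← gg_mul, conv_gg, mul_inv_rev, mul_assoc]
  constructor
  · intro h
    refine ⟨fun y => ?_, fun i y => ?_⟩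
    · have := h (gβ n) (Or.inl rfl) (y * gammaB n)
      rw [e1, mul_inv_cancel_right] at this
      linarith
    · have := h (1 - gν n i) (Or.inr ⟨i, List.mem_finRange i, rfl⟩) y
      rw [e2] at this
      linarith
  · rintro h r (hr | ⟨i, -, hr⟩) y
    · rw [hr, e1]
      have := h.hb (y * (gammaB n)⁻¹)
      rw [inv_mul_cancel_right] at this
      linarith
    · rw [hr, e2, ← h.ha i y, sub_self]

lemma isZ_chi : IsZ n (fun g => (chi g : ℝ)) := by
  refine ⟨fun y => ?_, fun i y => ?_⟩
  · rw [chi_mul, chi_b, mul_one]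
  · have : ∀ s ∈ Finset.range (n i), ((chi (y * (gammaB n ^ s)⁻¹ * (gammaA n i)⁻¹) : ℚ) : ℝ) =
        (chi y : ℝ) * (n i : ℝ)⁻¹ := by
      intro s _
      rw [chi_mul, chi_mul, chi_inv, chi_inv, chi_a, ← zpow_natCast, chi_b_zpow]
      push_cast
      simp
    rw [Finset.sum_congr rfl this]
    have : (n i : ℝ) ≠ 0 := by exact_mod_cast (n_pos (n := n) i).ne'
    simp
    field_simp

end

section
variable {k l : ℕ} {n : Fin k → ℕ} [Adm n] {m : Fin l → ℕ} [Adm m]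

lemma main_transfer {F : GammaGroup n → GammaGroup m} {F' : GammaGroup m → GammaGroup n}
    (h : CEd F F') : k = l ∧ ∃ (M : GammaGroup n → GammaGroup m → ℤ)
      (M' : GammaGroup m → GammaGroup n → ℤ), Trans (IsZ n) (IsZ m) F' M ∧
      Trans (IsZ m) (IsZ n) F M' ∧ (∀ z, IsZ n z → Tr M' (Tr M z) = z) ∧
      (∀ z, IsZ m z → Tr M (Tr M' z) = z) := by
  obtain ⟨X, hX, hXz⟩ := fr_exists n
  obtain ⟨Y, hY, hYz⟩ := fr_exists m
  have c1 : (fun g : GammaGroup n => (chi g : ℝ)) ≠ 0 := fun hc => by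
    have := congrFun hc 1
    simp [chi_one] at this
  have c2 : (fun g : GammaGroup m => (chi g : ℝ)) ≠ 0 := fun hc => by
    have := congrFun hc 1
    simp [chi_one] at this
  have d1 : X.dim ≤ Y.dim := dim_le h ((hXz _).2 isZ_chi) c1
  have d2 : Y.dim ≤ X.dim := dim_le h.symm ((hYz _).2 isZ_chi) c2
  obtain ⟨M, M', h1⟩ := transfer (X := X) (Y := Y) h (le_antisymm d1 d2)
  have e1 : Cyc X = IsZ n := funext fun z => propext (hXz z)
  have e2 : Cyc Y = IsZ m := funext fun z => propext (hYz z)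
  rw [e1, e2] at h1
  exact ⟨by omega, M, M', h1⟩
end
end GQ

namespace GQ
open scoped Pointwise

/-! ### Local rings -/

/-- rationals with denominator prime to `p` -/
def ZL (p : ℕ) : Subring ℚ where
  carrier := {q | q.den.Coprime p}
  one_mem' := by simp
  zero_mem' := by simp
  mul_mem' {x y} hx hy := Nat.Coprime.coprime_dvd_left (Rat.mul_den_dvd x y) (Nat.Coprime.mul_left hx hy)
  add_mem' {x y} hx hy := Nat.Coprime.coprime_dvd_left (Rat.add_den_dvd x y) (Nat.Coprime.mul_left hx hy)
  neg_mem' {x} hx := by simpa using hx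

lemma mem_ZL {p : ℕ} {q : ℚ} : q ∈ ZL p ↔ q.den.Coprime p := Iff.rfl

lemma ZL_int (p : ℕ) (z : ℤ) : (z : ℚ) ∈ ZL p := by rw [mem_ZL]; simp
lemma ZL_nat (p : ℕ) (z : ℕ) : (z : ℚ) ∈ ZL p := by rw [mem_ZL]; simp

lemma ZL_inv {p c : ℕ} (h : c.Coprime p) (hc : c ≠ 0) : (c : ℚ)⁻¹ ∈ ZL p := by
  rw [mem_ZL, Rat.inv_natCast_den]; simpa [hc] using h

lemma ZL_inv_not {p : ℕ} (hp : 2 ≤ p) : (p : ℚ)⁻¹ ∉ ZL p := by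
  rw [mem_ZL, Rat.inv_natCast_den]
  have : p ≠ 0 := by omega
  simp [this]; omega

/-- if `q * c` is an integer then the denominator divides `c` -/
lemma den_dvd_of_int {q : ℚ} {c : ℕ} {z : ℤ} (h : q * c = z) (hc : c ≠ 0) : q.den ∣ c := by
  have : q = (z : ℚ) / ((c : ℤ) : ℚ) := by
    rw [← h]; push_cast; field_simp
  have h2 := Rat.den_dvd z c
  rw [Rat.divInt_eq_div, ← this] at h2
  exact_mod_cast h2

lemma ZL_residue {p : ℕ} (hp : 2 ≤ p) {q : ℚ} (hq : q ∈ ZL p) :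
    ∃ s < p, (q - s) * (p : ℚ)⁻¹ ∈ ZL p ∧ ∀ s' < p, (q - s') * (p : ℚ)⁻¹ ∈ ZL p → s' = s := by
  have hp0 : (p : ℚ) ≠ 0 := by positivity
  have hu : ∀ s < p, ∀ s' < p, (q - s) * (p : ℚ)⁻¹ ∈ ZL p → (q - s') * (p : ℚ)⁻¹ ∈ ZL p → s' = s := by
    intro s hs s' hs' h1 h2
    have h3 := (ZL p).sub_mem h1 h2
    set r := (q - s) * (p : ℚ)⁻¹ - (q - s') * (p : ℚ)⁻¹ with hr
    have h4 : r * p = (((s' : ℤ) - (s : ℤ) : ℤ) : ℚ) := by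
      rw [hr]; push_cast; field_simp; ring
    have h5 := den_dvd_of_int h4 (by omega)
    have h6 : r.den = 1 := Nat.Coprime.eq_one_of_dvd h3 h5
    have h7 : (r.num : ℚ) = r := Rat.coe_int_num_of_den_eq_one h6
    rw [← h7] at h4
    have h8 : r.num * p = (s' : ℤ) - s := by exact_mod_cast h4
    have h9 : (p : ℤ) ∣ (s' : ℤ) - s := ⟨r.num, by rw [← h8]; ring⟩
    have h10 := Int.eq_zero_of_abs_lt_dvd h9 (by rw [abs_lt]; constructor <;> omega)
    omega
  have hcop : IsCoprime (q.den : ℤ) (p : ℤ) := Nat.isCoprime_iff_coprime.2 hq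
  obtain ⟨u, v, huv⟩ := hcop
  have hpz : (0 : ℤ) < p := by omega
  have hs0 := Int.emod_nonneg (q.num * u) hpz.ne'
  have hs1 := Int.emod_lt_of_pos (q.num * u) hpz
  obtain ⟨s, hs⟩ := Int.eq_ofNat_of_zero_le hs0
  have hsp : s < p := by omega
  have hmem : (q - s) * (p : ℚ)⁻¹ ∈ ZL p := by
    have hd := Int.emod_add_mul_ediv (q.num * u) p
    have hd0 : (q.den : ℚ) ≠ 0 := by exact_mod_cast q.den_ne_zero
    set w := q.num * u / p with hw
    have e : (q - s) * (p : ℚ)⁻¹ * q.den = ((q.num * v + w * q.den : ℤ) : ℚ) := by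
      have e1 : q * q.den = q.num := Rat.mul_den_eq_num q
      have e2 : (s : ℚ) = q.num * u - p * w := by
        have : (s : ℤ) = q.num * u - p * w := by rw [← hs]; linarith
        exact_mod_cast this
      have e3 : (u : ℚ) * q.den + v * p = 1 := by exact_mod_cast huv
      have e4 : (q - s) * (p : ℚ)⁻¹ * q.den = (q * q.den - s * q.den) * (p : ℚ)⁻¹ := by ring
      rw [e4, e1, e2]
      push_cast
      rw [← div_eq_mul_inv, div_eq_iff hp0]
      linear_combination (q.num : ℚ) * (-e3)
    have h5 := den_dvd_of_int e q.den_ne_zero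
    exact Nat.Coprime.coprime_dvd_left h5 hq
  exact ⟨s, hsp, hmem, fun s' hs' h => hu s hsp s' hs' hmem h⟩

section
variable {k : ℕ} {n : Fin k → ℕ} [Adm n]

lemma chi_ZL (i : Fin k) (g : GammaGroup n) (h : 0 ≤ tm g i) : chi g ∈ ZL (n i) := by
  rw [chi]
  refine (ZL (n i)).prod_mem fun j _ => ?_
  by_cases hj : j = i
  · subst hj
    obtain ⟨c, hc⟩ := Int.eq_ofNat_of_zero_le h
    rw [hc]
    simpa using (ZL (n j)).pow_mem (ZL_nat _ _) c
  · have h1 : ((n j : ℕ) : ℚ) ∈ ZL (n i) := ZL_nat _ _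
    have h2 : ((n j : ℕ) : ℚ)⁻¹ ∈ ZL (n i) := ZL_inv (Adm.cop j i hj) (n_pos j).ne'
    rcases Int.eq_nat_or_neg (tm g j) with ⟨c, hc | hc⟩
    · rw [hc]; simpa using (ZL (n i)).pow_mem h1 c
    · rw [hc]; simpa using (ZL (n i)).pow_mem h2 c

lemma chi_inv_ZL (i : Fin k) (g : GammaGroup n) (h : tm g i ≤ 0) : (chi g)⁻¹ ∈ ZL (n i) := by
  rw [← chi_inv]
  apply chi_ZL
  rw [t_inv, Pi.neg_apply]; omega

lemma t_a_self (i : Fin k) : tm (gammaA n i) i = 1 := by rw [t_a]; simp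
lemma t_a_ne {i j : Fin k} (h : i ≠ j) : tm (gammaA n j) i = 0 := by rw [t_a]; simp [h]

lemma pow_b_a (i : Fin k) (s d : ℕ) :
    gammaB n ^ s * gammaA n i ^ d = gammaA n i ^ d * gammaB n ^ (s * n i ^ d) := by
  induction d generalizing s with
  | zero => simp
  | succ d ih =>
    have h1 : ∀ s : ℕ, gammaB n ^ s * gammaA n i = gammaA n i * gammaB n ^ (s * n i) := by
      intro s
      induction s with
      | zero => simp
      | succ s ihs => rw [pow_succ, mul_assoc, b_a, ← mul_assoc, ihs, mul_assoc, ← pow_add]; ring_nf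
    rw [pow_succ, ← mul_assoc, ih, mul_assoc, h1, pow_succ]
    simp only [mul_assoc]

lemma IsZ.bpow {z : GammaGroup n → ℝ} (hz : IsZ n z) (y : GammaGroup n) (s : ℕ) :
    z (y * gammaB n ^ s) = z y := by
  induction s with
  | zero => simp
  | succ s ih => rw [pow_succ, ← mul_assoc, hz.hb, ih]

lemma IsZ.bzpow {z : GammaGroup n → ℝ} (hz : IsZ n z) (y : GammaGroup n) (s : ℤ) :
    z (y * gammaB n ^ s) = z y := by
  rcases Int.eq_nat_or_neg s with ⟨c, hc | hc⟩
  · rw [hc, zpow_natCast, hz.bpow]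
  · have := hz.bpow (y * gammaB n ^ s) c
    rw [← this, hc]
    congr 1
    simp

lemma IsZ.translate {z : GammaGroup n → ℝ} (hz : IsZ n z) (w : GammaGroup n) :
    IsZ n (fun g => z (w * g)) := by
  refine ⟨fun y => ?_, fun i y => ?_⟩
  · rw [← mul_assoc, hz.hb]
  · rw [hz.ha i (w * y)]
    simp only [mul_assoc]

/-- the half space -/
def HA (i : Fin k) (g : GammaGroup n) : Prop := tm g i ≤ 0 ∧ xc g ∈ ZL (n i)
/-- ancestors of a point -/
def HI (i : Fin k) (g : GammaGroup n) : Prop := chi g * (xc g + 1) ∈ ZL (n i)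

/-- the collapse -/
noncomputable def coll (i : Fin k) (z : GammaGroup n → ℝ) (g : GammaGroup n) : ℝ :=
  open Classical in
  if HA i g then (if HI i g then z (g * gammaA n i ^ (- tm g i).toNat) else 0) else z g

lemma HA_b (i : Fin k) (g : GammaGroup n) (s : ℤ) : HA i (g * gammaB n ^ s) ↔ HA i g := by
  have h1 : tm (g * gammaB n ^ s) = tm g := by rw [t_mul, t_b_zpow, add_zero]
  have h2 : xc (g * gammaB n ^ s) = xc g + (chi g)⁻¹ * s := by rw [x_mul, x_b_zpow]
  rw [HA, HA, h1, h2]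
  refine and_congr_right fun h => ?_
  exact (ZL (n i)).add_mem_cancel_right ((ZL (n i)).mul_mem (chi_inv_ZL i g h) (ZL_int _ s))

lemma HI_b (i : Fin k) (g : GammaGroup n) (s : ℤ) : HI i (g * gammaB n ^ s) ↔ HI i g := by
  have h1 : chi (g * gammaB n ^ s) = chi g := by rw [chi_mul, chi_b_zpow, mul_one]
  have h2 : xc (g * gammaB n ^ s) = xc g + (chi g)⁻¹ * s := by rw [x_mul, x_b_zpow]
  have h3 : chi g ≠ 0 := (chi_pos g).ne'
  rw [HI, HI, h1, h2, show chi g * (xc g + (chi g)⁻¹ * s + 1) = chi g * (xc g + 1) + s by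
    field_simp; ring]
  exact (ZL (n i)).add_mem_cancel_right (ZL_int _ s)

lemma HA_aj (i j : Fin k) (h : i ≠ j) (g : GammaGroup n) : HA i (g * (gammaA n j)⁻¹) ↔ HA i g := by
  have h2 : xc (g * (gammaA n j)⁻¹) = xc g := by rw [x_mul, x_inv, x_a]; simp
  rw [HA, HA, h2, t_mul, t_inv, Pi.add_apply, Pi.neg_apply, t_a_ne h, neg_zero, add_zero]

lemma HI_aj (i j : Fin k) (h : i ≠ j) (g : GammaGroup n) : HI i (g * (gammaA n j)⁻¹) ↔ HI i g := by
  have h2 : xc (g * (gammaA n j)⁻¹) = xc g := by rw [x_mul, x_inv, x_a]; simp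
  have h3 : chi (g * (gammaA n j)⁻¹) = (n j : ℚ)⁻¹ * chi g := by
    rw [chi_mul, chi_inv, chi_a, mul_comm]
  rw [HI, HI, h2, h3, mul_assoc]
  have h4 : ((n j : ℕ) : ℚ)⁻¹ ∈ ZL (n i) := ZL_inv (Adm.cop j i h.symm) (n_pos j).ne'
  constructor
  · intro h5
    have := (ZL (n i)).mul_mem (ZL_nat (n i) (n j)) h5
    rwa [mul_inv_cancel_left₀ (n_ne j)] at this
  · intro h5
    exact (ZL (n i)).mul_mem h4 h5

lemma coll_b (i : Fin k) {z : GammaGroup n → ℝ} (hz : IsZ n z) (g : GammaGroup n) (s : ℤ) :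
    coll i z (g * gammaB n ^ s) = coll i z g := by
  classical
  have h1 : tm (g * gammaB n ^ s) = tm g := by rw [t_mul, t_b_zpow, add_zero]
  rw [coll, coll, if_congr (HA_b i g s) rfl rfl, if_congr (HI_b i g s) rfl rfl, h1, hz.bzpow]
  have : z (g * gammaB n ^ s * gammaA n i ^ (-tm g i).toNat) =
      z (g * gammaA n i ^ (-tm g i).toNat) := by
    generalize (-tm g i).toNat = d
    rcases Int.eq_nat_or_neg s with ⟨c, hc | hc⟩
    · rw [hc, zpow_natCast, mul_assoc, pow_b_a, ← mul_assoc, hz.bpow]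
    · have e : g * gammaA n i ^ d =
          (g * gammaB n ^ s * gammaA n i ^ d) * gammaB n ^ (c * n i ^ d) := by
        rw [mul_assoc _ (gammaA n i ^ d), ← pow_b_a, hc]
        simp [← mul_assoc]
      rw [e, hz.bpow]
  rw [this]

lemma coll_isZ (i : Fin k) {z : GammaGroup n → ℝ} (hz : IsZ n z) : IsZ n (coll i z) := by
  classical
  refine ⟨fun y => by simpa using coll_b i hz y 1, fun j g => ?_⟩
  by_cases hij : i = j
  · subst hij
    have hp := Adm.two (n := n) i
    have hcx : ∀ s : ℕ, xc (g * (gammaB n ^ s)⁻¹ * (gammaA n i)⁻¹) = xc g - (chi g)⁻¹ * s := by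
      intro s
      rw [x_mul, x_inv, x_a, ← zpow_natCast, ← zpow_neg, x_mul, x_b_zpow]; push_cast; ring
    have hct : ∀ s : ℕ, tm (g * (gammaB n ^ s)⁻¹ * (gammaA n i)⁻¹) i = tm g i - 1 := by
      intro s
      rw [t_mul, t_mul, t_inv, t_inv, t_pow, t_b]
      simp [t_a_self, sub_eq_add_neg]
    have hcc : ∀ s : ℕ, chi (g * (gammaB n ^ s)⁻¹ * (gammaA n i)⁻¹) = chi g * (n i : ℚ)⁻¹ := by
      intro s
      rw [chi_mul, chi_mul, chi_inv, chi_inv, chi_a, ← zpow_natCast, chi_b_zpow]; ring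
    have hchi := (chi_pos g).ne'
    by_cases hA : HA i g
    · have hAc : ∀ s : ℕ, HA i (g * (gammaB n ^ s)⁻¹ * (gammaA n i)⁻¹) := by
        intro s
        refine ⟨by rw [hct]; have := hA.1; omega, ?_⟩
        rw [hcx]
        exact (ZL _).sub_mem hA.2 ((ZL _).mul_mem (chi_inv_ZL i g hA.1) (ZL_nat _ _))
      have hIc : ∀ s : ℕ, HI i (g * (gammaB n ^ s)⁻¹ * (gammaA n i)⁻¹) ↔
          (chi g * (xc g + 1) - s) * (n i : ℚ)⁻¹ ∈ ZL (n i) := by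
        intro s
        rw [HI, hcc, hcx, show chi g * (n i : ℚ)⁻¹ * (xc g - (chi g)⁻¹ * s + 1) =
          (chi g * (xc g + 1) - s) * (n i : ℚ)⁻¹ by field_simp; ring]
      by_cases hI : HI i g
      · obtain ⟨s, hs, h1, h2⟩ := ZL_residue hp hI
        rw [Finset.sum_eq_single_of_mem s (Finset.mem_range.2 hs)]
        · rw [coll, if_pos hA, if_pos hI, coll, if_pos (hAc s), if_pos ((hIc s).2 h1), hct]
          have e1 : (-(tm g i - 1)).toNat = (-tm g i).toNat + 1 := by have := hA.1; omega
          rw [e1]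
          generalize (-tm g i).toNat = d
          rw [pow_succ']
          have e2 : g * gammaA n i ^ d = (g * (gammaB n ^ s)⁻¹ * (gammaA n i)⁻¹ *
              (gammaA n i * gammaA n i ^ d)) * gammaB n ^ (s * n i ^ d) := by
            have := pow_b_a (n := n) i s d
            have e3 : g * (gammaB n ^ s)⁻¹ * (gammaA n i)⁻¹ *
              (gammaA n i * gammaA n i ^ d) * gammaB n ^ (s * n i ^ d) =
              g * (gammaB n ^ s)⁻¹ * (gammaA n i ^ d * gammaB n ^ (s * n i ^ d)) := by group
            rw [e3, ← this]; group
          rw [e2, hz.bpow]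
        · intro s' hs' hne
          rw [coll, if_pos (hAc s'), if_neg]
          intro h3
          exact hne (h2 s' (Finset.mem_range.1 hs') ((hIc s').1 h3))
      · rw [coll, if_pos hA, if_neg hI, Finset.sum_eq_zero]
        intro s _
        rw [coll, if_pos (hAc s), if_neg]
        rw [hIc]
        intro h3
        apply hI
        have h4 := (ZL (n i)).add_mem ((ZL (n i)).mul_mem h3 (ZL_nat (n i) (n i))) (ZL_nat (n i) s)
        rw [inv_mul_cancel_right₀ (n_ne i), sub_add_cancel] at h4
        exact h4
    · rw [coll, if_neg hA, hz.ha i g]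
      refine Finset.sum_congr rfl fun s _ => ?_
      rw [coll]
      split_ifs with h1 h2
      · by_cases ht : tm g i ≤ 0
        · exfalso
          apply hA
          refine ⟨ht, ?_⟩
          have h3 := h1.2
          rw [hcx] at h3
          have := (ZL (n i)).add_mem h3 ((ZL _).mul_mem (chi_inv_ZL i g ht) (ZL_nat (n i) s))
          simpa using this
        · have := h1.1
          rw [hct] at this ⊢
          have e : (-(tm g i - 1)).toNat = 0 := by omega
          rw [e]; simp
      · exfalso
        by_cases ht : tm g i ≤ 0
        · apply hA
          refine ⟨ht, ?_⟩
          have h3 := h1.2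
          rw [hcx] at h3
          have := (ZL (n i)).add_mem h3 ((ZL _).mul_mem (chi_inv_ZL i g ht) (ZL_nat (n i) s))
          simpa using this
        · apply h2
          have h3 := h1.1
          refine (ZL (n i)).mul_mem (chi_ZL i _ ?_) ((ZL _).add_mem h1.2 (ZL _).one_mem)
          rw [hct] at h3 ⊢
          omega
      · rfl
  · have e : ∀ s : ℕ, g * (gammaB n ^ s)⁻¹ = g * gammaB n ^ (-(s : ℤ)) := fun s => by simp
    have hct : ∀ s : ℕ, tm (g * (gammaB n ^ s)⁻¹ * (gammaA n j)⁻¹) i = tm g i := by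
      intro s
      rw [t_mul, t_mul, t_inv, t_inv, t_pow, t_b]
      simp [t_a_ne hij]
    have hA : ∀ s : ℕ, HA i (g * (gammaB n ^ s)⁻¹ * (gammaA n j)⁻¹) ↔ HA i g := fun s => by
      rw [HA_aj i j hij, e, HA_b]
    have hI : ∀ s : ℕ, HI i (g * (gammaB n ^ s)⁻¹ * (gammaA n j)⁻¹) ↔ HI i g := fun s => by
      rw [HI_aj i j hij, e, HI_b]
    simp only [coll, hA, hI, hct]
    split_ifs with h1 h2
    · generalize (-tm g i).toNat = d
      rw [hz.ha j]
      set f : ZMod (n j) → ℝ := fun s => z (g * gammaA n i ^ d * (gammaB n ^ s.val)⁻¹ * (gammaA n j)⁻¹) with hf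
      have hper : ∀ s : ℕ, z (g * gammaA n i ^ d * (gammaB n ^ s)⁻¹ * (gammaA n j)⁻¹) = f s := by
        intro s
        rw [hf]
        simp only [ZMod.val_natCast]
        have h3 := pow_b_a (n := n) j (s / n j) 1
        rw [pow_one, pow_one] at h3
        conv_lhs => rw [← Nat.mod_add_div s (n j)]
        have h4 : g * gammaA n i ^ d * (gammaB n ^ (s % n j))⁻¹ * (gammaA n j)⁻¹ =
          g * gammaA n i ^ d * (gammaB n ^ (s % n j + n j * (s / n j)))⁻¹ * (gammaA n j)⁻¹ *
            gammaB n ^ (s / n j) := by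
          have h5 : (gammaA n j)⁻¹ * gammaB n ^ (s / n j) =
              gammaB n ^ (n j * (s / n j)) * (gammaA n j)⁻¹ := by
            have := ainv_b (n := n) j ((s / n j : ℕ) : ℤ)
            rw [zpow_natCast] at this
            rw [this, ← zpow_natCast]
            congr 2
            push_cast; ring
          rw [mul_assoc _ (gammaA n j)⁻¹, h5, add_comm, pow_add]
          group
        rw [h4, hz.bpow]
      have : NeZero (n j) := ⟨(n_pos j).ne'⟩
      have hsum : ∀ f : ZMod (n j) → ℝ, ∑ s ∈ Finset.range (n j), f (s : ℕ) = ∑ s, f s := by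
        intro f
        refine Finset.sum_bij (fun s _ => (s : ZMod (n j))) (fun _ _ => Finset.mem_univ _) ?_ ?_
          (fun _ _ => rfl)
        · intro s hs s' hs' h
          rw [ZMod.natCast_eq_natCast_iff'] at h
          rwa [Nat.mod_eq_of_lt (Finset.mem_range.1 hs), Nat.mod_eq_of_lt (Finset.mem_range.1 hs')] at h
        · intro s _
          exact ⟨s.val, Finset.mem_range.2 (ZMod.val_lt s), by simp⟩
      have e1 : ∀ s : ℕ, z (g * (gammaB n ^ s)⁻¹ * (gammaA n j)⁻¹ * gammaA n i ^ d) =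
          f ((s : ZMod (n j)) * (n i : ZMod (n j)) ^ d) := by
        intro s
        have h3 := pow_b_a (n := n) i s d
        have h0 : Commute (gammaA n j) (gammaA n i) := rel2 (n := n) j i
        have h4 : Commute (gammaA n j)⁻¹ (gammaA n i ^ d) := h0.inv_left.pow_right d
        rw [mul_assoc _ (gammaA n j)⁻¹, h4.eq]
        have h5 : g * (gammaB n ^ s)⁻¹ * (gammaA n i ^ d * (gammaA n j)⁻¹) =
            g * gammaA n i ^ d * (gammaB n ^ (s * n i ^ d))⁻¹ * (gammaA n j)⁻¹ := by
          have : (gammaB n ^ s)⁻¹ * gammaA n i ^ d =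
              gammaA n i ^ d * (gammaB n ^ (s * n i ^ d))⁻¹ := by
            rw [inv_mul_eq_iff_eq_mul, ← mul_assoc, h3]; group
          rw [← mul_assoc, mul_assoc g, this]; group
        rw [h5, hper]
        push_cast; rfl
      simp only [e1, hper]
      rw [hsum, hsum (fun s => f (s * (n i : ZMod (n j)) ^ d))]
      have hu : IsUnit ((n i : ZMod (n j)) ^ d) :=
        ((ZMod.isUnit_iff_coprime _ _).2 (Adm.cop i j hij)).pow d
      obtain ⟨u, hu⟩ := hu
      rw [← hu]
      exact (Equiv.sum_comp (Units.mulRight u) f).symm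
    · simp
    · exact hz.ha j g

lemma coll_exists (i : Fin k) (w : GammaGroup n) {z : GammaGroup n → ℝ} (hz : IsZ n z) :
    ∃ z', IsZ n z' ∧ (∀ g, ¬ HA i (w⁻¹ * g) → z' g = z g) ∧
      (∀ g, HA i (gammaA n i * (w⁻¹ * g)) → z' g = 0) := by
  classical
  refine ⟨fun g => coll i (fun h => z (w * h)) (w⁻¹ * g), (coll_isZ i (hz.translate w)).translate w⁻¹,
    fun g hg => ?_, fun g hg => ?_⟩
  · simp [coll, hg]
  · simp only
    generalize w⁻¹ * g = h at hg
    have h1 : tm h i ≤ -1 := by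
      have := hg.1
      rw [t_mul, Pi.add_apply, t_a_self] at this; omega
    have h2 : (n i : ℚ)⁻¹ * xc h ∈ ZL (n i) := by
      have := hg.2
      rwa [x_mul, x_a, chi_a, zero_add] at this
    have h3 : HA i h := by
      refine ⟨by omega, ?_⟩
      have := (ZL (n i)).mul_mem (ZL_nat (n i) (n i)) h2
      rwa [mul_inv_cancel_left₀ (n_ne i)] at this
    rw [coll, if_pos h3, if_neg]
    intro h4
    apply ZL_inv_not (Adm.two (n := n) i)
    have h5 := chi_inv_ZL i (gammaA n i * h) (by rw [t_mul, Pi.add_apply, t_a_self]; omega)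
    have h6 := (ZL (n i)).sub_mem ((ZL (n i)).mul_mem h5 h4) h2
    rw [chi_mul, chi_a] at h6
    have e : ((n i : ℚ) * chi h)⁻¹ * (chi h * (xc h + 1)) - (n i : ℚ)⁻¹ * xc h = (n i : ℚ)⁻¹ := by
      have := (chi_pos h).ne'
      have := n_ne (n := n) i
      field_simp
      ring
    rwa [e] at h6
end
end GQ

namespace GQ
open scoped Pointwise

/-! ### The column lemma -/

section
variable {k : ℕ} {n : Fin k → ℕ} [Adm n]

lemma t_apow (i : Fin k) (r : ℕ) : tm (gammaA n i ^ r) i = r := by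
  rw [t_pow, Pi.smul_apply, t_a_self]; simp
lemma x_apow (i : Fin k) (r : ℕ) : xc (gammaA n i ^ r) = 0 := by
  rw [← zpow_natCast, x_a_zpow]
lemma chi_apow (i : Fin k) (r : ℕ) : chi (gammaA n i ^ r) = (n i : ℚ) ^ r := by
  induction r with
  | zero => simp [chi_one]
  | succ r ih => rw [pow_succ, chi_mul, ih, chi_a, pow_succ]

lemma x_ainv (i : Fin k) (r : ℕ) (g : GammaGroup n) :
    xc ((gammaA n i ^ r)⁻¹ * g) = (n i : ℚ) ^ r * xc g := by
  rw [x_inv_mul, chi_apow, x_apow, sub_zero]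

lemma x_local (g : GammaGroup n) : ∃ R : ℕ, ∀ i, ∀ r ≥ R, (n i : ℚ) ^ r * xc g ∈ ZL (n i) := by
  obtain ⟨R, z, h⟩ := x_denom g
  refine ⟨R, fun i r hr => ?_⟩
  set c := ∏ j ∈ Finset.univ.erase i, n j with hc
  have hN : NN n = n i * c := (Finset.mul_prod_erase Finset.univ n (Finset.mem_univ i)).symm
  have hcop : c.Coprime (n i) :=
    Nat.Coprime.prod_left fun j hj => Adm.cop j i (Finset.ne_of_mem_erase hj)
  have hc0 : c ≠ 0 := Finset.prod_ne_zero_iff.2 fun j _ => (n_pos j).ne'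
  obtain ⟨t, rfl⟩ := Nat.exists_eq_add_of_le hr
  have hcq : (c : ℚ) ≠ 0 := by exact_mod_cast hc0
  have e : (n i : ℚ) ^ (R + t) * xc g = (n i : ℚ) ^ t * ((z : ℚ) * ((c : ℚ)⁻¹) ^ R) := by
    rw [← h, hN]; push_cast
    rw [mul_pow, pow_add, inv_pow]
    have hcR : (c : ℚ) ^ R ≠ 0 := pow_ne_zero _ hcq
    field_simp
  rw [e]
  exact (ZL _).mul_mem ((ZL _).pow_mem (ZL_nat _ _) _)
    ((ZL _).mul_mem (ZL_int _ _) ((ZL _).pow_mem (ZL_inv hcop hc0) _))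

lemma HA_eventually {E : Set (GammaGroup n)} (hE : E.Finite) :
    ∃ R : ℕ, (∀ e ∈ E, ∀ i, |tm e i| ≤ R) ∧
      ∀ e ∈ E, ∀ i, ∀ r ≥ R, (n i : ℚ) ^ r * xc e ∈ ZL (n i) ∧ HA i ((gammaA n i ^ r)⁻¹ * e) := by
  induction E, hE using Set.Finite.induction_on with
  | empty => exact ⟨0, by simp, by simp⟩
  | @insert g E _ _ ih =>
    obtain ⟨R, h1, h2⟩ := ih
    obtain ⟨R', h3⟩ := x_local g
    set R'' := R + R' + ∑ i, (tm g i).natAbs with hR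
    have hb : ∀ i, |tm g i| ≤ R'' := by
      intro i
      have := Finset.single_le_sum (f := fun i => (tm g i).natAbs) (fun _ _ => Nat.zero_le _)
        (Finset.mem_univ i)
      rw [Int.abs_eq_natAbs]
      omega
    refine ⟨R'', ?_, ?_⟩
    · rintro e (rfl | he) i
      · exact hb i
      · have := h1 e he i
        push_cast [hR]
        have h0 : (0 : ℤ) ≤ ∑ i, |tm g i| := Finset.sum_nonneg fun _ _ => abs_nonneg _
        linarith
    · rintro e (rfl | he) i r hr
      · have h4 := h3 i r (by omega)
        refine ⟨h4, ?_, by rwa [x_ainv]⟩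
        rw [t_mul, t_inv, Pi.add_apply, Pi.neg_apply, t_apow]
        have := (abs_le.1 (hb i)).2
        omega
      · exact h2 e he i r (by omega)

lemma box_of {g : GammaGroup n} {r : ℕ} (ht : ∀ i, |tm g i| ≤ r)
    (hx : ∀ i, (n i : ℚ) ^ r * xc g ∈ ZL (n i)) :
    ∃ j : ℤ, gammaB n ^ (-j) * g ∈ {g : GammaGroup n | (∀ i, |tm g i| ≤ r) ∧ 0 ≤ xc g ∧ xc g < 1 ∧
    ∃ z : ℤ, xc g * (NN n : ℚ) ^ r = z} := by
  set q := xc g * (NN n : ℚ) ^ r with hq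
  have hden : q.den = 1 := by
    have hN0 : NN n ≠ 0 := NN_pos.ne'
    have h1 : q.den.Coprime (NN n) := by
      refine Nat.Coprime.prod_right fun i _ => ?_
      rw [← mem_ZL]
      set c := ∏ j ∈ Finset.univ.erase i, n j with hc
      have hN : NN n = n i * c := (Finset.mul_prod_erase Finset.univ n (Finset.mem_univ i)).symm
      have e : q = (n i : ℚ) ^ r * xc g * (c : ℚ) ^ r := by
        rw [hq, hN]; push_cast; ring
      rw [e]
      exact (ZL _).mul_mem (hx i) ((ZL _).pow_mem (ZL_nat _ _) _)
    obtain ⟨R, z, h⟩ := x_denom g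
    have h2 : q * ((NN n ^ R : ℕ) : ℚ) = ((z * (NN n : ℤ) ^ r : ℤ) : ℚ) := by
      rw [hq]; push_cast; rw [← h]; ring
    have h3 := den_dvd_of_int h2 (by positivity)
    exact Nat.Coprime.eq_one_of_dvd (h1.pow_right R) h3
  refine ⟨⌊xc g⌋, ?_⟩
  have hxx : xc (gammaB n ^ (-⌊xc g⌋) * g) = xc g - ⌊xc g⌋ := by
    rw [x_mul, x_b_zpow, chi_b_zpow]; push_cast; ring
  refine ⟨?_, ?_, ?_, ?_⟩
  · intro i
    rw [t_mul, t_b_zpow, zero_add]; exact ht i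
  · rw [hxx]; have := Int.floor_le (xc g); linarith
  · rw [hxx]; have := Int.lt_floor_add_one (xc g); linarith
  · refine ⟨q.num - ⌊xc g⌋ * (NN n : ℤ) ^ r, ?_⟩
    rw [hxx]; push_cast
    rw [Rat.coe_int_num_of_den_eq_one hden, hq]; ring
end

section
variable {k l : ℕ} {n : Fin k → ℕ} [Adm n] {m : Fin l → ℕ} [Adm m]

lemma Tr_congr {G H : Type} {M : G → H → ℤ} {z z' : G → ℝ} {y : H}
    (h : ∀ x, M x y ≠ 0 → z x = z' x) : Tr M z y = Tr M z' y := by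
  apply finsum_congr
  intro x
  by_cases hx : M x y = 0
  · simp [hx]
  · rw [h x hx]

/-- half of the column estimate -/
lemma column_half {F' : GammaGroup m → GammaGroup n} {M : GammaGroup n → GammaGroup m → ℤ}
    (hmap : ∀ z, IsZ n z → IsZ m (Tr M z))
    {E : Set (GammaGroup n)} (hsupp : ∀ x y, M x y ≠ 0 → (F' y)⁻¹ * x ∈ E)
    (hne : ∀ y, ∃ z, IsZ n z ∧ Tr M z y ≠ 0) {R : ℕ}
    (hR : ∀ e ∈ E, ∀ i, HA i ((gammaA n i ^ R)⁻¹ * e)) (y : GammaGroup m) (j : ℤ) (i : Fin k) :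
    ∃ e ∈ E, HA i ((gammaA n i ^ (R + 1))⁻¹ * ((F' y)⁻¹ * F' (y * gammaB m ^ j) * e)) := by
  by_contra! hc
  obtain ⟨z, hz, hz0⟩ := hne (y * gammaB m ^ j)
  apply hz0
  obtain ⟨z', h1, h2, h3⟩ := coll_exists i (F' y * gammaA n i ^ (R + 1)) hz
  have e1 : Tr M z (y * gammaB m ^ j) = Tr M z' (y * gammaB m ^ j) := by
    apply Tr_congr
    intro x hx
    symm
    apply h2
    have := hc _ (hsupp _ _ hx)
    convert this using 2
    group
  have e2 : Tr M z' y = 0 := by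
    have : Tr M z' y = Tr M (fun _ => 0) y := by
      apply Tr_congr
      intro x hx
      apply h3
      have := hR _ (hsupp _ _ hx) i
      have e : gammaA n i * ((F' y * gammaA n i ^ (R + 1))⁻¹ * x) =
          (gammaA n i ^ R)⁻¹ * ((F' y)⁻¹ * x) := by rw [pow_succ]; group
      rw [e]; exact this
    rw [this]; simp [Tr]
  rw [e1, (hmap z' h1).bzpow, e2]

lemma column {F' : GammaGroup m → GammaGroup n} {M : GammaGroup n → GammaGroup m → ℤ}
    (hM : Trans (IsZ n) (IsZ m) F' M) (hne : ∀ y, ∃ z, IsZ n z ∧ Tr M z y ≠ 0) :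
    ∃ E : Set (GammaGroup n), E.Finite ∧ ∀ (y : GammaGroup m) (j : ℤ),
      ∃ i : ℤ, ∃ e ∈ E, F' (y * gammaB m ^ j) = F' y * gammaB n ^ i * e := by
  obtain ⟨E, hE, hsupp⟩ := hM.supp
  obtain ⟨R, hR1, hR2⟩ := HA_eventually hE
  refine ⟨_, box_finite (n := n) (3 * R + 1 + (R + 1)), fun y j => ?_⟩
  set g := (F' y)⁻¹ * F' (y * gammaB m ^ j) with hg
  have hA := fun i => column_half hM.map hsupp hne (fun e he i => (hR2 e he i R le_rfl).2) y j i
  have hB := fun i => column_half hM.map hsupp hne (fun e he i => (hR2 e he i R le_rfl).2)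
    (y * gammaB m ^ j) (-j) i
  rw [← hg] at hA
  have hyy : y * gammaB m ^ j * gammaB m ^ (-j) = y := by group
  have hgi : (F' (y * gammaB m ^ j))⁻¹ * F' y = g⁻¹ := by rw [hg]; group
  rw [hyy, hgi] at hB
  have ht : ∀ i, |tm g i| ≤ ((2 * R + 1 : ℕ) : ℤ) := by
    intro i
    obtain ⟨e, he, h1, -⟩ := hA i
    obtain ⟨e', he', h2, -⟩ := hB i
    rw [t_mul, t_mul, t_inv, Pi.add_apply, Pi.add_apply, Pi.neg_apply, t_apow] at h1
    rw [t_mul, t_mul, t_inv, t_inv, Pi.add_apply, Pi.add_apply, Pi.neg_apply, Pi.neg_apply, t_apow] at h2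
    have h3 := abs_le.1 (hR1 e he i)
    have h4 := abs_le.1 (hR1 e' he' i)
    rw [abs_le]
    push_cast at *
    constructor <;> linarith [h3.1, h3.2, h4.1, h4.2]
  have hx : ∀ i, (n i : ℚ) ^ (3 * R + 1 + (R + 1)) * xc g ∈ ZL (n i) := by
    intro i
    obtain ⟨e, he, -, h1⟩ := hA i
    rw [x_ainv, x_mul] at h1
    have h2 := (hR2 e he i R le_rfl).1
    have h3 : (n i : ℚ) ^ (2 * R + 1) * (chi g)⁻¹ ∈ ZL (n i) := by
      rw [← chi_apow, ← chi_inv, ← chi_mul]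
      apply chi_ZL
      rw [t_mul, t_inv, Pi.add_apply, Pi.neg_apply, t_apow]
      have := (abs_le.1 (ht i)).2
      linarith
    have e1 : (n i : ℚ) ^ (3 * R + 1 + (R + 1)) * xc g =
        (n i : ℚ) ^ (3 * R + 1) * ((n i : ℚ) ^ (R + 1) * (xc g + (chi g)⁻¹ * xc e)) -
        (n i : ℚ) ^ (R + 1) * (((n i : ℚ) ^ (2 * R + 1) * (chi g)⁻¹) * ((n i : ℚ) ^ R * xc e)) := by
      ring
    rw [e1]
    exact (ZL _).sub_mem ((ZL _).mul_mem ((ZL _).pow_mem (ZL_nat _ _) _) h1)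
      ((ZL _).mul_mem ((ZL _).pow_mem (ZL_nat _ _) _) ((ZL _).mul_mem h3 h2))
  obtain ⟨i, hi⟩ := box_of (r := 3 * R + 1 + (R + 1)) (fun i => (ht i).trans (by push_cast; linarith)) hx
  refine ⟨i, _, hi, ?_⟩
  rw [hg]; group
end
end GQ

namespace GQ
open scoped Pointwise

/-! ### The height estimate -/

lemma fin_bdd {X : Type*} {E : Set X} (hE : E.Finite) (f : X → ℚ) :
    ∃ C : ℚ, 0 < C ∧ ∀ e ∈ E, |f e| ≤ C := by
  induction E, hE using Set.Finite.induction_on with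
  | empty => exact ⟨1, one_pos, by simp⟩
  | @insert g E _ _ ih =>
    obtain ⟨C, h0, h⟩ := ih
    refine ⟨C + |f g|, by positivity, ?_⟩
    rintro e (rfl | he)
    · linarith
    · have := h e he
      have := abs_nonneg (f g)
      linarith

lemma lip_int {f : ℤ → ℚ} {K : ℚ} (h : ∀ j, |f (j + 1) - f j| ≤ K) (j : ℤ) :
    |f j - f 0| ≤ K * |(j : ℚ)| := by
  have key : ∀ r : ℕ, |f r - f 0| ≤ K * r ∧ |f (-r) - f 0| ≤ K * r := by
    intro r
    induction r with
    | zero => simp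
    | succ r ih =>
      have h1 := h r
      have h2 := h (-(r : ℤ) - 1)
      have e : -(r : ℤ) - 1 + 1 = -r := by ring
      rw [e] at h2
      have e2 : -((r + 1 : ℕ) : ℤ) = -(r : ℤ) - 1 := by push_cast; ring
      have e3 : ((r + 1 : ℕ) : ℤ) = (r : ℤ) + 1 := by push_cast; ring
      rw [e2, e3]
      push_cast
      obtain ⟨h3, h4⟩ := ih
      rw [abs_le] at *
      obtain ⟨h5, h6⟩ := h4
      rw [abs_le] at *
      constructor <;> constructor <;> linarith [h1.1, h1.2, h2.1, h2.2, h3.1, h3.2]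
  obtain ⟨r, rfl | rfl⟩ := Int.eq_nat_or_neg j
  · have := (key r).1
    simpa using this
  · have := (key r).2
    simpa using this

def Col {k l : ℕ} {n : Fin k → ℕ} {m : Fin l → ℕ} (G : GammaGroup m → GammaGroup n) : Prop :=
  ∃ E : Set (GammaGroup n), E.Finite ∧ ∀ (y : GammaGroup m) (j : ℤ),
      ∃ i : ℤ, ∃ e ∈ E, G (y * gammaB m ^ j) = G y * gammaB n ^ i * e

section
variable {k l : ℕ} {n : Fin k → ℕ} [Adm n] {m : Fin l → ℕ} [Adm m]

lemma colA {G : GammaGroup m → GammaGroup n} (hB : Born G) (hC : Col G) :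
    ∃ K : ℚ, 0 < K ∧ ∀ y (j : ℤ), |chi (G y) * (xc (G (y * gammaB m ^ j)) - xc (G y))| ≤ K * |(j : ℚ)| := by
  obtain ⟨E, hE, hcol⟩ := hC
  obtain ⟨E', hE', hB'⟩ := hB {gammaB m} (Set.finite_singleton _)
  obtain ⟨C1, hC1, h1⟩ := fin_bdd hE (fun e => (chi e)⁻¹)
  obtain ⟨C2, hC2, h2⟩ := fin_bdd hE' (fun e => xc e)
  refine ⟨C1 * C2, by positivity, fun y j => ?_⟩
  have := lip_int (f := fun j => chi (G y) * xc (G (y * gammaB m ^ j))) (K := C1 * C2) ?_ j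
  · simpa [mul_sub] using this
  · intro j
    obtain ⟨i, e, he, h⟩ := hcol y j
    have h3 := h2 _ (hB' (y * gammaB m ^ j) (y * gammaB m ^ (j + 1)) (by
      simp only [Set.mem_singleton_iff]; group))
    have h4 := h1 e he
    rw [x_inv_mul] at h3
    have h5 : chi (G y) = (chi e)⁻¹ * chi (G (y * gammaB m ^ j)) := by
      rw [h, chi_mul, chi_mul, chi_b_zpow]
      have := (chi_pos e).ne'
      field_simp
    rw [← mul_sub, h5, mul_assoc, abs_mul]
    exact mul_le_mul h4 h3 (abs_nonneg _) hC1.le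

lemma colB {F : GammaGroup n → GammaGroup m} {G : GammaGroup m → GammaGroup n}
    (h : CEd F G) (hG : Col G) (hF : Col F) :
    ∃ K : ℚ, 0 < K ∧ ∀ j : ℤ, |(j : ℚ)| ≤ K * |xc (G (gammaB m ^ j))| + K := by
  obtain ⟨E, hE, hcol⟩ := hG
  obtain ⟨K, hK, hA⟩ := colA h.bF hF
  obtain ⟨E1, hE1, hb1⟩ := h.bF E hE
  obtain ⟨E2, hE2, hb2⟩ := h.r
  obtain ⟨C1, hC1, h1⟩ := fin_bdd hE (fun e => xc e)
  obtain ⟨C2, hC2, h2⟩ := fin_bdd (hE1.mul hE2.inv) (fun e => (chi e) * xc e)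
  set c := chi (F (G 1)) with hc
  have hc0 : 0 < c := chi_pos _
  set d := chi (G 1) with hd
  have hd0 : 0 < d := chi_pos _
  set x1 := |xc (F (G 1))| with hx1
  set x2 := |xc (G 1)| with hx2
  have hx10 : 0 ≤ x1 := abs_nonneg _
  have hx20 : 0 ≤ x2 := abs_nonneg _
  have main : ∀ j : ℤ, |(j : ℚ)| ≤ c⁻¹ * K * (d * |xc (G (gammaB m ^ j))| + (d * x2 + C1)) + x1 + C2 := by
    intro j
    obtain ⟨i, e, he, hi⟩ := hcol 1 j
    rw [one_mul] at hi
    have h3 := hA (G 1) i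
    have h4 := hb1 (G 1 * gammaB n ^ i) (G (gammaB m ^ j)) (by
      rw [hi, inv_mul_cancel_left]; exact he)
    have h5 := hb2 (gammaB m ^ j)
    simp only [id, Function.comp] at h5
    set g := F (G 1 * gammaB n ^ i) with hg
    have h6 : g⁻¹ * gammaB m ^ j ∈ E1 * E2⁻¹ := by
      refine Set.mem_mul.2 ⟨_, h4, _, Set.inv_mem_inv.2 h5, ?_⟩
      group
    have h7 := h2 _ h6
    rw [x_inv_mul, x_b_zpow, chi_mul, chi_b_zpow, chi_inv, mul_one, ← mul_assoc,
      inv_mul_cancel₀ (chi_pos g).ne', one_mul] at h7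
    have h8 : |xc g - xc (F (G 1))| ≤ c⁻¹ * K * |(i : ℚ)| := by
      rw [abs_mul, abs_of_pos hc0] at h3
      rw [mul_assoc, le_inv_mul_iff₀ hc0]; exact h3
    have h9 : |(i : ℚ)| ≤ d * |xc (G (gammaB m ^ j))| + (d * x2 + C1) := by
      have h10 : (i : ℚ) = d * xc (G (gammaB m ^ j)) - d * xc (G 1) - xc e := by
        rw [hi, x_mul, x_mul, chi_mul, chi_b_zpow, x_b_zpow, mul_one, ← hd]
        field_simp
        ring
      rw [h10]
      calc _ ≤ |d * xc (G (gammaB m ^ j)) - d * xc (G 1)| + |xc e| := abs_sub _ _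
        _ ≤ |d * xc (G (gammaB m ^ j))| + |d * xc (G 1)| + |xc e| := by gcongr; exact abs_sub _ _
        _ ≤ _ := by
          rw [abs_mul, abs_mul, abs_of_pos hd0, add_assoc]
          have := h1 e he
          gcongr
    calc |(j : ℚ)| = |(j - xc g) + (xc g - xc (F (G 1))) + xc (F (G 1))| := by ring_nf
      _ ≤ |(j - xc g)| + |(xc g - xc (F (G 1)))| + x1 := abs_add_three _ _ _
      _ ≤ C2 + c⁻¹ * K * |(i : ℚ)| + x1 := by gcongr
      _ ≤ C2 + c⁻¹ * K * (d * |xc (G (gammaB m ^ j))| + (d * x2 + C1)) + x1 := by gcongr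
      _ = _ := by ring
  refine ⟨c⁻¹ * K * d + c⁻¹ * K * (d * x2 + C1) + x1 + C2, by positivity, fun j => (main j).trans ?_⟩
  have hx := abs_nonneg (xc (G (gammaB m ^ j)))
  have : 0 ≤ (c⁻¹ * K * (d * x2 + C1) + x1 + C2) * |xc (G (gammaB m ^ j))| := by positivity
  have : 0 ≤ c⁻¹ * K * d := by positivity
  linarith

lemma lin_le {α β γ : ℚ} (h : ∀ u : ℕ, α * u ≤ β * u + γ) : α ≤ β := by
  by_contra! hc
  obtain ⟨u, hu⟩ := exists_nat_gt (γ / (α - β))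
  have := h u
  rw [div_lt_iff₀ (by linarith)] at hu
  linarith

lemma height {F : GammaGroup n → GammaGroup m} {G : GammaGroup m → GammaGroup n}
    (h : CEd F G) (hG : Col G) (hF : Col F) :
    ∃ C : ℚ, 0 < C ∧ ∀ y, chi (G y) ≤ C * chi y := by
  obtain ⟨K, hK, hA⟩ := colA h.bF' hG
  obtain ⟨L, hL, hB⟩ := colB h hG hF
  obtain ⟨E, hE, hcol⟩ := hG
  refine ⟨L * K, by positivity, fun y => ?_⟩
  obtain ⟨E1, hE1, hb1⟩ := h.bF' {y} (Set.finite_singleton _)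
  obtain ⟨C1, hC1, h1⟩ := fin_bdd hE1 (fun e => xc e)
  obtain ⟨C2, hC2, h2⟩ := fin_bdd hE (fun e => (chi (G 1))⁻¹ * (chi e)⁻¹)
  have hc0 : 0 < chi (G y) := chi_pos _
  have hy0 : 0 < chi y := chi_pos _
  set p := (chi y).num with hp
  set q := (chi y).den with hq
  have hq0 : (0 : ℚ) < q := by exact_mod_cast (chi y).den_pos
  have hpq : chi y = p / q := (Rat.num_div_den _).symm
  have hp0 : (0 : ℚ) < p := by exact_mod_cast Rat.num_pos.2 hy0
  have key : ∀ u : ℕ, (q : ℚ) * u ≤ L * K * (p / chi (G y)) * u + (L * |xc (G y)| + L * (C2 * C1) + L) := by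
    intro u
    have e : y * gammaB m ^ (p * u) = gammaB m ^ ((q : ℤ) * u) * y := by
      apply g_ext
      · rw [x_mul, x_mul, x_b_zpow, x_b_zpow, chi_b_zpow, hpq]
        push_cast
        field_simp
        ring
      · rw [t_mul, t_mul, t_b_zpow, t_b_zpow]; simp
    have h3 := hB ((q : ℤ) * u)
    have h4 := hA y (p * u)
    have h5 := hb1 (gammaB m ^ ((q : ℤ) * u)) (y * gammaB m ^ (p * u)) (by rw [e]; simp)
    have h6 := h1 _ h5
    rw [x_inv_mul] at h6
    obtain ⟨i, e', he', hi⟩ := hcol 1 ((q : ℤ) * u)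
    rw [one_mul] at hi
    have h7 := h2 _ he'
    set g := G (gammaB m ^ ((q : ℤ) * u)) with hg
    set g' := G (y * gammaB m ^ (p * u)) with hg'
    have h8 : (chi g)⁻¹ = (chi (G 1))⁻¹ * (chi e')⁻¹ := by
      rw [hi, chi_mul, chi_mul, chi_b_zpow, mul_one, mul_inv]
    have hg0 := chi_pos g
    have h9 : |xc g' - xc g| ≤ C2 * C1 := by
      have : xc g' - xc g = ((chi (G 1))⁻¹ * (chi e')⁻¹) * (chi g * (xc g' - xc g)) := by
        rw [← h8]; field_simp
      rw [this, abs_mul]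
      exact mul_le_mul h7 h6 (abs_nonneg _) hC2.le
    have h10 : |xc g' - xc (G y)| ≤ K * (p / chi (G y)) * u := by
      rw [abs_mul, abs_of_pos hc0] at h4
      have h11 : |((p * u : ℤ) : ℚ)| = p * u := by
        push_cast; rw [abs_of_nonneg (by positivity)]
      rw [h11, mul_comm, ← le_div_iff₀ hc0] at h4
      calc _ ≤ _ := h4
        _ = _ := by field_simp
    have h12 : |xc g| ≤ K * (p / chi (G y)) * u + |xc (G y)| + C2 * C1 := by
      calc |xc g| = |(xc g' - xc (G y)) + xc (G y) - (xc g' - xc g)| := by ring_nf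
        _ ≤ |(xc g' - xc (G y)) + xc (G y)| + |xc g' - xc g| := abs_sub _ _
        _ ≤ |(xc g' - xc (G y))| + |xc (G y)| + |xc g' - xc g| := by gcongr; exact abs_add_le _ _
        _ ≤ _ := by gcongr
    have h13 : |(((q : ℤ) * u : ℤ) : ℚ)| = q * u := by
      push_cast; rw [abs_of_nonneg (by positivity)]
    rw [h13] at h3
    calc _ ≤ _ := h3
      _ ≤ L * (K * (p / chi (G y)) * u + |xc (G y)| + C2 * C1) + L := by gcongr
      _ = _ := by ring
  have := lin_le key
  rw [hpq]
  have h14 : (q : ℚ) * chi (G y) ≤ L * K * p := by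
    calc _ ≤ L * K * (p / chi (G y)) * chi (G y) := by gcongr
      _ = _ := by field_simp
  rw [← mul_div_assoc, le_div_iff₀ hq0]
  linarith
end
end GQ

namespace GQ
open scoped Pointwise

/-! ### The pigeonhole argument -/

section
variable {k l : ℕ} {n : Fin k → ℕ} [Adm n] {m : Fin l → ℕ} [Adm m]

lemma IsZ.neg {z : GammaGroup m → ℝ} (h : IsZ m z) : IsZ m (fun y => - z y) where
  hb y := by rw [h.hb]
  ha i y := by rw [Finset.sum_neg_distrib, ← h.ha]

lemma child {μ : GammaGroup m → ℝ} (hμ : IsZ m μ) {s ε : ℝ} (hs : ∀ y, μ y ≤ s * (chi y : ℝ))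
    {y : GammaGroup m} (hy : (s - ε) * (chi y : ℝ) < μ y) (j : Fin l) :
    (s - m j * ε) * (chi (y * (gammaA m j)⁻¹) : ℝ) < μ (y * (gammaA m j)⁻¹) := by
  have h1 := hμ.ha j y
  have hpos : (0 : ℝ) < m j := by exact_mod_cast n_pos j
  have hch : ∀ s : ℕ, (chi (y * (gammaB m ^ s)⁻¹ * (gammaA m j)⁻¹) : ℝ) = (chi y : ℝ) / m j := by
    intro s
    rw [chi_mul, chi_mul, ← zpow_natCast, ← zpow_neg, chi_b_zpow, chi_inv, chi_a]
    push_cast; ring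
  have hch0 := hch 0
  simp only [pow_zero, inv_one, mul_one] at hch0
  obtain ⟨t, ht⟩ : ∃ t, m j = t + 1 := ⟨m j - 1, by have := n_pos (n := m) j; omega⟩
  rw [ht, Finset.sum_range_succ'] at h1
  simp only [pow_zero, inv_one, mul_one] at h1
  have h2 : ∑ s ∈ Finset.range t, μ (y * (gammaB m ^ (s + 1))⁻¹ * (gammaA m j)⁻¹) ≤
      ∑ r ∈ Finset.range t, s * ((chi y : ℝ) / m j) := by
    apply Finset.sum_le_sum
    intro r _
    exact (hs _).trans (by rw [hch])
  rw [Finset.sum_const, Finset.card_range, nsmul_eq_mul] at h2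
  rw [hch0]
  have h3 : (t : ℝ) = m j - 1 := by rw [ht]; push_cast; ring
  rw [h3] at h2
  have h4 : (s - ε) * (chi y : ℝ) - (m j - 1) * (s * ((chi y : ℝ) / m j)) =
    (s - m j * ε) * ((chi y : ℝ) / m j) := by field_simp; ring
  linarith

lemma child_pow {μ : GammaGroup m → ℝ} (hμ : IsZ m μ) {s ε : ℝ} (hs : ∀ y, μ y ≤ s * (chi y : ℝ))
    {y : GammaGroup m} (hy : (s - ε) * (chi y : ℝ) < μ y) (j : Fin l) (r : ℕ) :
    (s - (m j : ℝ) ^ r * ε) * (chi (y * (gammaA m j ^ r)⁻¹) : ℝ) < μ (y * (gammaA m j ^ r)⁻¹) := by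
  induction r with
  | zero => simpa using hy
  | succ r ih =>
    have := child hμ hs ih j
    have e : y * (gammaA m j ^ (r + 1))⁻¹ = y * (gammaA m j ^ r)⁻¹ * (gammaA m j)⁻¹ := by
      rw [pow_succ']; group
    rw [e, pow_succ', mul_assoc]; exact this

lemma gap {A : Set ℝ} (hA : A.Finite) (h1 : (1 : ℝ) ∉ A) : ∃ δ : ℝ, 0 < δ ∧ ∀ α ∈ A, δ ≤ |α - 1| := by
  induction A, hA using Set.Finite.induction_on with
  | empty => exact ⟨1, one_pos, by simp⟩
  | @insert g E _ _ ih =>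
    obtain ⟨δ, h0, h⟩ := ih fun h => h1 (Set.mem_insert_of_mem _ h)
    have hg : 0 < |g - 1| := by
      rw [abs_pos, sub_ne_zero]; rintro rfl; exact h1 (Set.mem_insert _ _)
    refine ⟨min δ |g - 1|, lt_min h0 hg, ?_⟩
    rintro e (rfl | he)
    · exact min_le_right _ _
    · exact (min_le_left _ _).trans (h e he)

lemma pigeon {G : GammaGroup m → GammaGroup n} (hG : Born G) {μ : GammaGroup m → ℝ} (hμ : IsZ m μ)
    {q : GammaGroup m → ℝ} {Q : Set ℝ} (hQ : Q.Finite) (hqQ : ∀ y, q y ∈ Q)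
    (hq : ∀ y, μ y = (chi (G y) : ℝ) * q y) {C : ℝ} (hC : ∀ y, μ y ≤ C * (chi y : ℝ))
    {y0 : GammaGroup m} (hy0 : 0 < μ y0) (j : Fin l) :
    ∃ (d : ℕ) (g : GammaGroup n), 0 < d ∧ (m j : ℚ) ^ d = chi g := by
  have hmj : (0 : ℝ) < m j := by exact_mod_cast n_pos j
  have hmj1 : (1 : ℝ) ≤ m j := by exact_mod_cast n_pos j
  have hcp : ∀ y : GammaGroup m, (0 : ℝ) < (chi y : ℝ) := fun y => by exact_mod_cast chi_pos y
  -- the supremum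
  set ρ : GammaGroup m → ℝ := fun y => μ y / (chi y : ℝ) with hρ
  have hbdd : BddAbove (Set.range ρ) := ⟨C, by
    rintro _ ⟨y, rfl⟩
    exact (div_le_iff₀ (hcp y)).2 (hC y)⟩
  set s := sSup (Set.range ρ) with hs
  have hs1 : ∀ y, ρ y ≤ s := fun y => le_csSup hbdd ⟨y, rfl⟩
  have hs0 : 0 < s := lt_of_lt_of_le (div_pos hy0 (hcp y0)) (hs1 y0)
  have hs2 : ∀ y, μ y ≤ s * (chi y : ℝ) := fun y => (div_le_iff₀ (hcp y)).1 (hs1 y)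
  -- candidate ratios
  set R := hQ.toFinset.card with hR
  obtain ⟨E, hE, hb⟩ := hG ((fun d : ℕ => (gammaA m j ^ d)⁻¹) '' (Finset.range (R + 1) : Set ℕ))
    ((Finset.finite_toSet _).image _)
  set A : Set ℝ := Set.image2 (fun (u : GammaGroup n) (d : ℕ) => (chi u : ℝ) * (m j : ℝ) ^ d) E
    (Finset.Icc 1 R : Set ℕ) with hA
  have hAf : A.Finite := hE.image2 _ (Finset.finite_toSet _)
  by_cases h1 : (1 : ℝ) ∈ A
  · obtain ⟨u, hu, d, hd, h⟩ := h1
    simp only [Finset.coe_Icc, Set.mem_Icc] at hd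
    refine ⟨d, u⁻¹, by omega, ?_⟩
    rw [chi_inv]
    beta_reduce at h
    have h' : chi u * (m j : ℚ) ^ d = 1 := by exact_mod_cast h
    exact eq_inv_of_mul_eq_one_right h'
  exfalso
  obtain ⟨δ, hδ, hgap⟩ := gap hAf h1
  set η := δ / (1 + δ) with hη
  have hη0 : 0 < η := by positivity
  set ε := s * η / (m j : ℝ) ^ R with hε
  have hε0 : 0 < ε := by positivity
  obtain ⟨_, ⟨y, rfl⟩, hy⟩ := exists_lt_of_lt_csSup (Set.range_nonempty ρ)
    (show s - ε < sSup (Set.range ρ) by rw [← hs]; linarith)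
  have hy' : (s - ε) * (chi y : ℝ) < μ y := (lt_div_iff₀ (hcp y)).1 hy
  set w : ℕ → GammaGroup m := fun r => y * (gammaA m j ^ r)⁻¹ with hw
  have hwρ : ∀ r ≤ R, s * (1 - η) < ρ (w r) := by
    intro r hr
    have h2 := child_pow hμ hs2 hy' j r
    have h3 : s - (m j : ℝ) ^ r * ε < ρ (w r) := (lt_div_iff₀ (hcp _)).2 h2
    have h4 : (m j : ℝ) ^ r * ε ≤ s * η := by
      have : (m j : ℝ) ^ r ≤ (m j : ℝ) ^ R := pow_le_pow_right₀ hmj1 hr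
      calc _ ≤ (m j : ℝ) ^ R * ε := by gcongr
        _ = s * η := by rw [hε]; field_simp
    linarith
  obtain ⟨r, hr, r', hr', hne, heq⟩ := Finset.exists_ne_map_eq_of_card_lt_of_maps_to
    (s := Finset.range (R + 1)) (t := hQ.toFinset) (by simp [hR]) (f := fun r => q (w r))
    (fun r _ => by simpa using hqQ _)
  have key : ∀ r r' : ℕ, r < r' → r' ≤ R → q (w r) = q (w r') → False := by
    intro r r' hlt hr' heq
    obtain ⟨d, rfl⟩ := Nat.exists_eq_add_of_lt hlt
    have h2 := hb (w r) (w (r + d + 1)) ⟨d + 1, by simp; omega, by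
      simp only [hw]
      rw [show r + d + 1 = (d + 1) + r by ring, pow_add]; group⟩
    set u := (G (w r))⁻¹ * G (w (r + d + 1)) with hu
    have hmem : (chi u : ℝ) * (m j : ℝ) ^ (d + 1) ∈ A :=
      ⟨u, h2, d + 1, by simp; omega, rfl⟩
    have h3 := hgap _ hmem
    have h4 : ρ (w (r + d + 1)) = (chi u : ℝ) * (m j : ℝ) ^ (d + 1) * ρ (w r) := by
      have e1 : (chi (w (r + d + 1)) : ℝ) = (chi (w r) : ℝ) / (m j : ℝ) ^ (d + 1) := by
        simp only [hw]
        rw [chi_mul, chi_mul, chi_inv, chi_inv, chi_apow, chi_apow]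
        push_cast
        rw [add_assoc, pow_add]; field_simp
      have e2 : (chi (G (w (r + d + 1))) : ℝ) = (chi (G (w r)) : ℝ) * (chi u : ℝ) := by
        rw [hu, chi_mul, chi_inv]
        push_cast
        have : (chi (G (w r)) : ℝ) ≠ 0 := by exact_mod_cast (chi_pos _).ne'
        field_simp
      have := (hcp (w r)).ne'
      simp only [hρ]
      rw [hq, hq, e1, e2, ← heq]
      field_simp
    have h5 := hwρ r (by omega)
    have h6 := hwρ _ hr'
    have h7 : |ρ (w (r + d + 1)) - ρ (w r)| < s * η := by
      rw [abs_lt]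
      constructor <;> linarith [hs1 (w r), hs1 (w (r + d + 1))]
    have h8 : ρ (w (r + d + 1)) - ρ (w r) = ((chi u : ℝ) * (m j : ℝ) ^ (d + 1) - 1) * ρ (w r) := by
      rw [h4]; ring
    have h9 : 0 < s * (1 - η) := by
      have : 1 - η = 1 / (1 + δ) := by rw [hη]; field_simp; ring
      rw [this]; positivity
    have h10 : 0 < ρ (w r) := h9.trans h5
    rw [h8, abs_mul, abs_of_pos h10] at h7
    have h11 : δ * (s * (1 - η)) < s * η := by
      calc _ < δ * ρ (w r) := by gcongr
        _ ≤ _ := by gcongr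
        _ < _ := h7
    have h12 : δ * (s * (1 - η)) = s * η := by rw [hη]; field_simp; ring
    linarith
  simp only [Finset.mem_range] at hr hr'
  rcases lt_or_gt_of_ne hne with h | h
  · exact key r r' h (by omega) heq
  · exact key r' r h (by omega) heq.symm

/-- Values of the transfer of `chi`. -/
lemma Tr_chi {G : GammaGroup m → GammaGroup n} {M : GammaGroup n → GammaGroup m → ℤ}
    (hM : Trans (IsZ n) (IsZ m) G M) : ∃ (q : GammaGroup m → ℝ) (Q : Set ℝ), Q.Finite ∧
      (∀ y, q y ∈ Q) ∧ ∀ y, Tr M (fun g => (chi g : ℝ)) y = (chi (G y) : ℝ) * q y := by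
  obtain ⟨E, hE, hs⟩ := hM.supp
  obtain ⟨V, hV, hv⟩ := hM.val
  have : Fintype E := hE.fintype
  have : Finite E := hE
  refine ⟨fun y => ∑ e : E, (chi (e : GammaGroup n) : ℝ) * (M (G y * e) y : ℝ),
    (fun f : E → ℤ => ∑ e : E, (chi (e : GammaGroup n) : ℝ) * (f e : ℝ)) '' (Set.univ.pi fun _ => V),
    (Set.Finite.pi fun _ => hV).image _, fun y => ⟨fun e => M (G y * e) y, fun e _ => hv _ _, rfl⟩,
    fun y => ?_⟩
  unfold Tr
  rw [← finsum_comp_equiv (Equiv.mulLeft (G y))]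
  rw [finsum_eq_sum_of_support_subset (s := hE.toFinset)]
  · rw [Finset.mul_sum, Finset.sum_subtype hE.toFinset (p := fun x => x ∈ E) (by simp)]
    apply Finset.sum_congr rfl
    intro e _
    simp only [Equiv.coe_mulLeft]
    rw [chi_mul]; push_cast; ring
  · intro e he
    simp only [Equiv.coe_mulLeft, Function.mem_support] at he
    have h0 : M (G y * e) y ≠ 0 := by rintro h; simp [h] at he
    have := hs _ _ h0
    simpa using this

lemma power_rel {F : GammaGroup n → GammaGroup m} {G : GammaGroup m → GammaGroup n}
    (h : CEd F G) (j : Fin l) : ∃ (d : ℕ) (g : GammaGroup n), 0 < d ∧ (m j : ℚ) ^ d = chi g := by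
  obtain ⟨-, M, M', hM, hM', h1, h2⟩ := main_transfer h
  have cG : Col G := column hM fun y => ⟨Tr M' (fun g => (chi g : ℝ)), hM'.map _ isZ_chi, by
    rw [h2 _ isZ_chi]; beta_reduce; exact_mod_cast (chi_pos y).ne'⟩
  have cF : Col F := column hM' fun y => ⟨Tr M (fun g => (chi g : ℝ)), hM.map _ isZ_chi, by
    rw [h1 _ isZ_chi]; beta_reduce; exact_mod_cast (chi_pos y).ne'⟩
  obtain ⟨C, hC, hh⟩ := height h cG cF
  obtain ⟨q, Q, hQ, hqQ, hq⟩ := Tr_chi hM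
  set ν := Tr M (fun g => (chi g : ℝ)) with hν
  have hνZ : IsZ m ν := hM.map _ isZ_chi
  obtain ⟨B, hB⟩ : ∃ B : ℝ, ∀ x ∈ Q, |x| ≤ B := by
    obtain ⟨B, hB⟩ := (hQ.image (fun x => |x|)).bddAbove
    exact ⟨B, fun x hx => hB ⟨x, hx, rfl⟩⟩
  have hbound : ∀ y, |ν y| ≤ (C * B : ℝ) * (chi y : ℝ) := by
    intro y
    have e1 : (0 : ℝ) < (chi (G y) : ℝ) := by exact_mod_cast chi_pos _
    have e2 : (chi (G y) : ℝ) ≤ C * (chi y : ℝ) := by exact_mod_cast hh y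
    have e3 := hB _ (hqQ y)
    have e4 : 0 ≤ B := (abs_nonneg _).trans e3
    rw [hq, abs_mul, abs_of_pos e1]
    calc _ ≤ (C * (chi y : ℝ)) * B := mul_le_mul e2 e3 (abs_nonneg _) (e1.le.trans e2)
      _ = _ := by ring
  obtain ⟨y0, hy0⟩ : ∃ y0, ν y0 ≠ 0 := by
    by_contra! hc
    have e0 : ν = fun _ => 0 := funext hc
    have e1 := congrFun (h1 _ isZ_chi) 1
    rw [← hν, e0] at e1
    simp [Tr, chi_one] at e1
  rcases lt_or_gt_of_ne hy0 with hlt | hgt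
  · refine pigeon h.bF' hνZ.neg (q := fun y => - q y) (Q := -Q) hQ.neg (fun y => by simpa using hqQ y)
      (fun y => by rw [hq]; ring) (C := C * B) (fun y => (neg_le_abs _).trans (hbound y)) (y0 := y0)
      (by linarith) j
  · exact pigeon h.bF' hνZ hQ hqQ hq (C := C * B) (fun y => (le_abs_self _).trans (hbound y)) hgt j
end
end GQ

namespace GQ

/-! ### The final arithmetic -/

section
variable {k : ℕ} {n : Fin k → ℕ} [Adm n]

lemma nat_form {N : ℕ} {g : GammaGroup n} (h : (N : ℚ) = chi g) :
    ∃ f : Fin k → ℕ, N = ∏ i, n i ^ f i := by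
  have key : N * ∏ i, n i ^ (-(tm g i)).toNat = ∏ i, n i ^ (tm g i).toNat := by
    have : (N : ℚ) * ∏ i, (n i : ℚ) ^ (-(tm g i)).toNat = ∏ i, (n i : ℚ) ^ (tm g i).toNat := by
      rw [h, chi, ← Finset.prod_mul_distrib]
      apply Finset.prod_congr rfl
      intro i _
      rw [← zpow_natCast, ← zpow_natCast, ← zpow_add₀ (n_ne i)]
      congr 1
      omega
    exact_mod_cast this
  have hneg : ∀ i, 0 ≤ tm g i := by
    intro i
    by_contra! hc
    have h1 : n i ∣ ∏ i, n i ^ (tm g i).toNat := by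
      rw [← key]
      refine Dvd.dvd.mul_left ?_ _
      exact (dvd_pow_self _ (by omega)).trans (Finset.dvd_prod_of_mem (fun i => n i ^ (-(tm g i)).toNat) (Finset.mem_univ i))
    have h2 : (n i).Coprime (∏ i, n i ^ (tm g i).toNat) := by
      apply Nat.Coprime.prod_right
      intro i' _
      by_cases hi : i = i'
      · subst hi
        have : (tm g i).toNat = 0 := by omega
        simp [this]
      · exact (Adm.cop i i' hi).pow_right _
    have h3 := Nat.Coprime.eq_one_of_dvd h2 h1
    have := Adm.two (n := n) i
    omega
  refine ⟨fun i => (tm g i).toNat, ?_⟩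
  rw [← key]
  have : ∀ i, (-(tm g i)).toNat = 0 := fun i => by have := hneg i; omega
  simp [this]
end

section
variable {k l : ℕ} {n : Fin k → ℕ} [Adm n] {m : Fin l → ℕ} [Adm m]

lemma match_one
    (hm : ∀ j, ∃ (d : ℕ) (f : Fin k → ℕ), 0 < d ∧ m j ^ d = ∏ i, n i ^ f i)
    (hn : ∀ i, ∃ (d : ℕ) (f : Fin l → ℕ), 0 < d ∧ n i ^ d = ∏ j, m j ^ f j) (i : Fin k) :
    ∃ j, ∃ s t : ℕ, 0 < s ∧ 0 < t ∧ n i ^ s = m j ^ t := by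
  obtain ⟨d, f, hd, h⟩ := hn i
  obtain ⟨j, hj⟩ : ∃ j, f j ≠ 0 := by
    by_contra! hc
    simp [hc] at h
    have := Adm.two (n := n) i
    omega
  refine ⟨j, ?_⟩
  obtain ⟨d', f', hd', h'⟩ := hm j
  -- `m j` divides a power of `n i`, so only `n i` occurs in `m j ^ d'`
  have hdvd : m j ∣ n i ^ d := by
    rw [h]
    exact (dvd_pow_self _ hj).trans (Finset.dvd_prod_of_mem (fun j => m j ^ f j) (Finset.mem_univ j))
  have hz : ∀ i', i' ≠ i → f' i' = 0 := by
    intro i' hi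
    by_contra hc
    have h1 : n i' ∣ m j ^ d' := by
      rw [h']
      exact (dvd_pow_self _ hc).trans (Finset.dvd_prod_of_mem (fun j => n j ^ f' j) (Finset.mem_univ i'))
    have h2 : n i' ∣ (n i ^ d) ^ d' := h1.trans (pow_dvd_pow_of_dvd hdvd _)
    have h3 := Nat.Coprime.eq_one_of_dvd (((Adm.cop i' i hi).pow_right d).pow_right d') h2
    have := Adm.two (n := n) i'
    omega
  have h4 : m j ^ d' = n i ^ f' i := by
    rw [h', Finset.prod_eq_single i]
    · intro i' _ hi; rw [hz i' hi, pow_zero]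
    · simp
  refine ⟨f' i, d', ?_, hd', h4.symm⟩
  rcases Nat.eq_zero_or_pos (f' i) with h5 | h5
  · rw [h5, pow_zero] at h4
    have h6 := Nat.one_lt_pow hd'.ne' (Adm.two (n := m) j)
    omega
  · exact h5

lemma hard (h : CE (GammaGroup n) (GammaGroup m)) :
    ∃ σ : Fin k ≃ Fin l, ∀ i, ∃ s t : ℕ, 0 < s ∧ 0 < t ∧ (n i) ^ s = (m (σ i)) ^ t := by
  obtain ⟨F, G, h⟩ := h
  obtain ⟨hkl, -⟩ := main_transfer h
  have hm : ∀ j, ∃ (d : ℕ) (f : Fin k → ℕ), 0 < d ∧ m j ^ d = ∏ i, n i ^ f i := fun j => by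
    obtain ⟨d, g, hd, e⟩ := power_rel h j
    obtain ⟨f, hf⟩ := nat_form (N := m j ^ d) (g := g) (by exact_mod_cast e)
    exact ⟨d, f, hd, hf⟩
  have hn : ∀ i, ∃ (d : ℕ) (f : Fin l → ℕ), 0 < d ∧ n i ^ d = ∏ j, m j ^ f j := fun j => by
    obtain ⟨d, g, hd, e⟩ := power_rel h.symm j
    obtain ⟨f, hf⟩ := nat_form (N := n j ^ d) (g := g) (by exact_mod_cast e)
    exact ⟨d, f, hd, hf⟩
  choose σ hσ using match_one hm hn
  have hinj : Function.Injective σ := by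
    intro i i' he
    by_contra hne
    obtain ⟨s, t, hs, ht, e1⟩ := hσ i
    obtain ⟨s', t', hs', ht', e2⟩ := hσ i'
    rw [← he] at e2
    have e3 : (n i ^ s) ^ t' = (n i' ^ s') ^ t := by
      rw [e1, e2, ← pow_mul, ← pow_mul, mul_comm]
    have hc : ((n i ^ s) ^ t').Coprime ((n i' ^ s') ^ t) :=
      (((Adm.cop i i' hne).pow_left s).pow_left t').pow_right s' |>.pow_right t
    rw [← e3, Nat.coprime_self, ← pow_mul] at hc
    have h6 := Nat.one_lt_pow (Nat.mul_pos hs ht').ne' (Adm.two (n := n) i)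
    omega
  subst hkl
  exact ⟨Equiv.ofBijective σ (Finite.injective_iff_bijective.1 hinj), fun i => by simpa using hσ i⟩
end
end GQ

/-- **Quasi-isometry classification of the groups `Γ(S)`.**  For tuples
`S₁ = (n₁,…,n_k)` and `S₂ = (m₁,…,m_l)` of pairwise coprime integers at least
2, the groups `Γ(S₁)` and `Γ(S₂)` are quasi-isometric iff `k = l` and, after
reordering, each `nᵢ` is a rational power of `mᵢ` (i.e. `nᵢ^s = mᵢ^t` for some
positive integers `s`, `t`). -/
theorem gammaGroup_quasiIsometry_classification
    {k l : ℕ} (n : Fin k → ℕ) (m : Fin l → ℕ)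
    (hn2 : ∀ i, 2 ≤ n i) (hm2 : ∀ j, 2 ≤ m j)
    (hncop : ∀ i j, i ≠ j → Nat.Coprime (n i) (n j))
    (hmcop : ∀ i j, i ≠ j → Nat.Coprime (m i) (m j)) :
    QuasiIsometricGroups (GammaGroup n) (GammaGroup m) ↔
      ∃ σ : Fin k ≃ Fin l, ∀ i, ∃ s t : ℕ, 0 < s ∧ 0 < t ∧
        (n i) ^ s = (m (σ i)) ^ t := by
  have : GQ.Adm n := ⟨hn2, hncop⟩
  have : GQ.Adm m := ⟨hm2, hmcop⟩
  constructor
  · intro h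
    exact GQ.hard (GQ.ce_of_qi h)
  · intro h
    exact GQ.easy n m h
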